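/- Let G = ⟨X; Rⁿ⟩ be a one-relator group with torsion which is either freely indecomposable or isomorphic to ℤ ∗ Cₙ, and let T be the normal closure in G of the image of R. Suppose G splits nontrivially as an amalgamated free product A ∗_C B where C is infinite cyclic. Then the image of C in G is not contained in T. -/

import Mathlib

/-- A group is *virtually-ℤ* if it has a finite-index subgroup isomorphic to `ℤ`. -/
def VirtuallyZ (G : Type*) [Group G] : Prop :=
  ∃ H : Subgroup G, H.FiniteIndex ∧ Nonempty (H ≃* Multiplicative ℤ)

/-- A subgroup `M` of `G` is *malnormal* if `g M g⁻¹ ∩ M ≠ 1` implies `g ∈ M`. -/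
def Subgroup.IsMalnormal {G : Type*} [Group G] (M : Subgroup G) : Prop :=
  ∀ g : G, (∃ x : G, x ≠ 1 ∧ x ∈ M ∧ g * x * g⁻¹ ∈ M) → g ∈ M

/-- A group is a *free product of cyclic groups* if it is isomorphic to the free product
(`Monoid.CoprodI`) of a family of cyclic groups; every cyclic group is isomorphic to
`Multiplicative (ZMod m)` for some `m : ℕ` (with `m = 0` giving the infinite cyclic group). -/
def IsFreeProductOfCyclics (G : Type*) [Group G] : Prop :=
  ∃ (ι : Type) (m : ι → ℕ),
    Nonempty (G ≃* Monoid.CoprodI fun i => Multiplicative (ZMod (m i)))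

/-- A group is *freely decomposable* if it is isomorphic to a free product of two
nontrivial groups. -/
def FreelyDecomposable (G : Type*) [Group G] : Prop :=
  ∃ (H K : Type) (gH : Group H) (gK : Group K),
    Nontrivial H ∧ Nontrivial K ∧
      Nonempty (G ≃* (letI := gH; letI := gK; Monoid.Coprod H K))

/-- A group is *freely indecomposable* if it is not isomorphic to a free product of two
nontrivial groups. -/
def FreelyIndecomposable (G : Type*) [Group G] : Prop := ¬ FreelyDecomposable G

/-!
Let `r` be the image of `R` in `G = ⟨X; Rⁿ⟩` and `T` its normal closure. By a theorem of Fischer,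
Karrass and Solitar, `T` is a free product of cyclic groups whose torsion elements are conjugate in
`G` to powers of `r`; what is needed is only that `T` embeds in a free product of torsion groups and
torsion-free groups, a property that Kurosh's subgroup theorem makes inherited by subgroups. It is
proved by induction along Magnus' hierarchy of HNN extensions: the kernel of a map of HNN extensions
that is injective on the associated subgroups is a free product of conjugates of the kernel on the
base group and a free group.

Suppose `G = A ∗_C B` with `C` infinite cyclic and contained in `T`. Up to conjugation `r` lies in
one of the factors. Neither factor lies in `T`: the one without `r` would be torsion-free, hence
free, and normally generated by the generator of `C`, so equal to `C`; the one with `r` would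
retract onto `C`, and the retraction would map `G` onto the other factor, killing `r` but not `C`.
Hence `G` maps onto the free product of the nontrivial groups `A / (A ∩ T)` and `B / (B ∩ T)` with
kernel `T`, so that `⟨X; R⟩` is freely decomposable. By Grushko's theorem the free group on `X` has
a basis adapted to this decomposition, and by the Freiheitssatz a cyclically reduced conjugate of
`R` involves basis elements of one factor only, so `⟨X; Rⁿ⟩` is freely decomposable as well. If
instead `G` is `ℤ ∗ Cₙ`, then `r` normally generates the factor `Cₙ`, and the abelian group `ℤ`
would map onto a nontrivial free product.
-/

namespace OneRelator

open Monoid Function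

universe u v

/-- A group without nontrivial elements of finite order. Mathlib's `IsMulTorsionFree` is stronger
for noncommutative groups: it asks for uniqueness of roots. -/
def TorsionFree (G : Type*) [Group G] : Prop := ∀ g : G, IsOfFinOrder g → g = 1

theorem isConj_mul_comm {G : Type*} [Group G] (a b : G) : IsConj (a * b) (b * a) :=
  isConj_iff.2 ⟨a⁻¹, by group⟩

/-! ### Torsion in amalgamated products -/

section Amalgam

variable {ι H : Type*} {G : ι → Type*} [∀ i, Group (G i)] [Group H] {φ : ∀ i, H →* G i}

variable (φ) in
/-- The element of an amalgamated product spelled by a list of syllables. -/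
def syllableProd (L : List (Σ i, G i)) : PushoutI φ :=
  (L.map fun p => PushoutI.of p.1 p.2).prod

@[simp]
theorem syllableProd_nil : syllableProd φ [] = 1 := rfl

@[simp]
theorem syllableProd_cons (p : Σ i, G i) (L : List (Σ i, G i)) :
    syllableProd φ (p :: L) = PushoutI.of p.1 p.2 * syllableProd φ L :=
  List.prod_cons

@[simp]
theorem syllableProd_append (L M : List (Σ i, G i)) :
    syllableProd φ (L ++ M) = syllableProd φ L * syllableProd φ M := by
  simp [syllableProd]

variable (φ) in
/-- A list of syllables is reduced if no syllable lies in the amalgamated subgroup and consecutive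
syllables lie in different factors. -/
def IsReduced (L : List (Σ i, G i)) : Prop :=
  (∀ p ∈ L, p.2 ∉ (φ p.1).range) ∧ L.IsChain fun p q => p.1 ≠ q.1

namespace IsReduced

variable {L M : List (Σ i, G i)}

theorem cons_iff {p : Σ i, G i} :
    IsReduced φ (p :: L) ↔
      p.2 ∉ (φ p.1).range ∧ (∀ q ∈ L.head?, p.1 ≠ q.1) ∧ IsReduced φ L := by
  simp only [IsReduced, List.forall_mem_cons, List.isChain_cons]
  tauto

theorem append_iff :
    IsReduced φ (L ++ M) ↔
      IsReduced φ L ∧ IsReduced φ M ∧ ∀ p ∈ L.getLast?, ∀ q ∈ M.head?, p.1 ≠ q.1 := by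
  simp only [IsReduced, List.mem_append, or_imp, forall_and, List.isChain_append]
  tauto

theorem replace_head {i : ι} {x x' : G i} (hL : IsReduced φ (⟨i, x⟩ :: L))
    (hx' : x' ∉ (φ i).range) : IsReduced φ (⟨i, x'⟩ :: L) :=
  cons_iff.2 ⟨hx', (cons_iff.1 hL).2⟩

theorem base_mul_head {i : ι} {x : G i} (hL : IsReduced φ (⟨i, x⟩ :: L)) (h : H) :
    IsReduced φ (⟨i, φ i h * x⟩ :: L) :=
  hL.replace_head fun hm =>
    (cons_iff.1 hL).1 ((Subgroup.mul_mem_cancel_left _ (MonoidHom.mem_range.2 ⟨h, rfl⟩)).1 hm)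

theorem exists_inv (hL : IsReduced φ L) :
    ∃ M, IsReduced φ M ∧ syllableProd φ M = (syllableProd φ L)⁻¹ ∧
      ∀ q ∈ M.head?, ∃ p ∈ L.getLast?, q.1 = p.1 := by
  refine ⟨(L.map fun p => ⟨p.1, p.2⁻¹⟩).reverse, ⟨?_, ?_⟩, ?_, ?_⟩
  · simp only [List.mem_reverse, List.mem_map, forall_exists_index, and_imp,
      forall_apply_eq_imp_iff₂, inv_mem_iff]
    exact hL.1
  · simpa [List.isChain_reverse, List.isChain_map, ne_comm] using hL.2
  · simp [syllableProd, List.prod_inv_reverse, comp_def]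
  · simp only [List.head?_reverse, List.getLast?_map, Option.mem_map, forall_exists_index, and_imp]
    rintro q p hp rfl
    exact ⟨p, hp, rfl⟩

theorem syllableProd_notMem_range_base (hφ : ∀ i, Injective (φ i)) (hL : IsReduced φ L)
    (hne : L ≠ []) : syllableProd φ L ∉ (PushoutI.base φ).range := by
  intro hmem
  let w : CoprodI.Word G := ⟨L, fun p hp h1 => hL.1 p hp (h1 ▸ one_mem _), hL.2⟩
  have hw : PushoutI.Reduced φ w := hL.1
  have hprod : PushoutI.ofCoprodI (φ := φ) w.prod = syllableProd φ L := by
    simp [w, CoprodI.Word.prod, syllableProd, map_list_prod, comp_def]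
  exact hne (congrArg CoprodI.Word.toList (hw.eq_empty_of_mem_range hφ (hprod ▸ hmem)))

theorem syllableProd_notMem_range_of_head_ne (hφ : ∀ i, Injective (φ i)) (hL : IsReduced φ L)
    (hne : L ≠ []) {i : ι} (hi : ∀ q ∈ L.head?, i ≠ q.1) :
    syllableProd φ L ∉ (PushoutI.of (φ := φ) i).range := by
  rintro ⟨g, hg⟩
  by_cases hr : g ∈ (φ i).range
  · obtain ⟨c, rfl⟩ := hr
    exact hL.syllableProd_notMem_range_base hφ hne ⟨c, by rw [← hg, PushoutI.of_apply_eq_base]⟩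
  · have hcons : IsReduced φ (⟨i, g⁻¹⟩ :: L) := cons_iff.2 ⟨by simpa using hr, hi, hL⟩
    exact hcons.syllableProd_notMem_range_base hφ (by simp) ⟨1, by simp [← hg]⟩

theorem syllableProd_notMem_range_of_two_le (hφ : ∀ i, Injective (φ i)) (hL : IsReduced φ L)
    (hlen : 2 ≤ L.length) (i : ι) : syllableProd φ L ∉ (PushoutI.of (φ := φ) i).range := by
  intro hmem
  obtain ⟨p, q, L, rfl⟩ : ∃ p q M, L = p :: q :: M := by
    match L, hlen with
    | p :: q :: M, _ => exact ⟨p, q, M, rfl⟩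
  by_cases hp : i = p.1
  · obtain ⟨-, hpq, hL'⟩ := cons_iff.1 hL
    subst hp
    refine hL'.syllableProd_notMem_range_of_head_ne hφ (by simp) hpq ?_
    exact (Subgroup.mul_mem_cancel_left _ (MonoidHom.mem_range.2 ⟨p.2, rfl⟩)).1 hmem
  · exact hL.syllableProd_notMem_range_of_head_ne hφ (by simp) (by simpa using hp) hmem

theorem exists_pow (hL : IsReduced φ L) (hends : ∀ p ∈ L.getLast?, ∀ q ∈ L.head?, p.1 ≠ q.1)
    (k : ℕ) :
    ∃ M, IsReduced φ (L ++ M) ∧ syllableProd φ (L ++ M) = syllableProd φ L ^ (k + 1) := by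
  induction k with
  | zero => exact ⟨[], by simpa using hL, by simp⟩
  | succ k ih =>
    obtain ⟨M, hM, hprod⟩ := ih
    refine ⟨L ++ M, append_iff.2 ⟨hL, hM, ?_⟩, by rw [syllableProd_append, hprod, ← pow_succ']⟩
    cases L with
    | nil => simp
    | cons => simpa using hends

theorem not_isOfFinOrder (hφ : ∀ i, Injective (φ i)) (hL : IsReduced φ L) (hne : L ≠ [])
    (hends : ∀ p ∈ L.getLast?, ∀ q ∈ L.head?, p.1 ≠ q.1) : ¬ IsOfFinOrder (syllableProd φ L) := by
  intro hfin
  obtain ⟨k, hk, hpow⟩ := isOfFinOrder_iff_pow_eq_one.1 hfin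
  obtain ⟨M, hM, hprod⟩ := hL.exists_pow hends (k - 1)
  refine hM.syllableProd_notMem_range_base hφ (by simp [hne]) ⟨1, ?_⟩
  rw [hprod, Nat.sub_add_cancel hk, hpow, map_one]

end IsReduced

theorem exists_isReduced (hφ : ∀ i, Injective (φ i)) (g : PushoutI φ) :
    ∃ h L, IsReduced φ L ∧ PushoutI.base φ h * syllableProd φ L = g := by
  obtain ⟨d⟩ := PushoutI.NormalWord.transversal_nonempty φ hφ
  classical
  let w := PushoutI.NormalWord.equiv (d := d) g
  refine ⟨w.head, w.toList, ⟨fun p hp hmem => w.ne_one p hp ?_, w.chain_ne⟩, ?_⟩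
  · have huniq := (d.compl p.1).1 (a₁ := (⟨p.2, hmem⟩, ⟨1, d.one_mem p.1⟩))
      (a₂ := (1, ⟨p.2, w.normalized p.1 p.2 hp⟩)) (by simp)
    exact congrArg (fun a => (a.1 : G p.1)) huniq
  · calc PushoutI.base φ w.head * syllableProd φ w.toList = w.prod := by
          simp [PushoutI.NormalWord.prod, CoprodI.Word.prod, syllableProd, map_list_prod, comp_def]
      _ = g := PushoutI.NormalWord.equiv.symm_apply_apply g

theorem exists_isConj_of_base_mul [Nonempty ι] (hφ : ∀ i, Injective (φ i)) (h : H)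
    {L : List (Σ i, G i)} (hL : IsReduced φ L)
    (hfin : IsOfFinOrder (PushoutI.base φ h * syllableProd φ L)) :
    ∃ (i : ι) (x : G i), IsConj (PushoutI.of i x) (PushoutI.base φ h * syllableProd φ L) := by
  induction hN : L.length using Nat.strong_induction_on generalizing L h with
  | _ N ih =>
  obtain _ | ⟨⟨i, x⟩, L⟩ := L
  · refine ⟨Classical.arbitrary ι, φ _ h, ?_⟩
    simp [-isConj_iff, PushoutI.of_apply_eq_base, IsConj.refl]
  have hhead : PushoutI.base φ h * syllableProd φ (⟨i, x⟩ :: L) =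
      syllableProd φ (⟨i, φ i h * x⟩ :: L) := by
    simp [PushoutI.of_apply_eq_base, mul_assoc]
  replace hL := hL.base_mul_head h
  rw [hhead] at hfin ⊢
  generalize φ i h * x = x at hL hfin
  obtain rfl | ⟨M, ⟨j, y⟩, rfl⟩ := L.eq_nil_or_concat'
  · exact ⟨i, x, by simp [-isConj_iff, IsConj.refl]⟩
  obtain rfl | hij := eq_or_ne j i
  · have hconj : IsConj (PushoutI.of j (y * x) * syllableProd φ M)
        (syllableProd φ (⟨j, x⟩ :: (M ++ [⟨j, y⟩]))) := by
      have := isConj_mul_comm (PushoutI.of j y) (syllableProd φ (⟨j, x⟩ :: M))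
      simp only [syllableProd_cons, syllableProd_append, syllableProd_nil, map_mul, mul_one,
        mul_assoc] at this ⊢
      exact this
    replace hfin := hconj.symm.isOfFinOrder hfin
    have hxM : IsReduced φ (⟨j, x⟩ :: M) := (IsReduced.append_iff (L := ⟨j, x⟩ :: M)).1 hL |>.1
    suffices ∃ (i : ι) (z : G i), IsConj (PushoutI.of i z)
        (PushoutI.of j (y * x) * syllableProd φ M) from
      this.imp fun _ => Exists.imp fun _ hz => hz.trans hconj
    by_cases hyx : y * x ∈ (φ j).range
    · obtain ⟨c, hc⟩ := hyx
      rw [← hc, PushoutI.of_apply_eq_base] at hfin ⊢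
      exact ih M.length (by simp [← hN]) c (IsReduced.cons_iff.1 hxM).2.2 hfin rfl
    · have := ih _ (by simp [← hN]) 1 (hxM.replace_head hyx) (by simpa using hfin) rfl
      simpa using this
  · refine absurd hfin (hL.not_isOfFinOrder hφ (by simp) ?_)
    simpa [List.getLast?_cons, List.getLast?_append] using hij

theorem exists_isConj_of [Nonempty ι] (hφ : ∀ i, Injective (φ i)) {g : PushoutI φ}
    (hg : IsOfFinOrder g) : ∃ (i : ι) (x : G i), IsConj (PushoutI.of i x) g := by
  obtain ⟨h, L, hL, rfl⟩ := exists_isReduced hφ g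
  exact exists_isConj_of_base_mul hφ h hL hg

theorem syllableProd_conj_eq_of (hφ : ∀ i, Injective (φ i)) {L : List (Σ i, G i)}
    (hL : IsReduced φ L) {i j : ι} {x : G i} {y : G j} (hx : ∀ z, z * x * z⁻¹ ∉ (φ i).range)
    (h : syllableProd φ L * PushoutI.of i x * (syllableProd φ L)⁻¹ = PushoutI.of j y) :
    i = j ∧ syllableProd φ L ∈ (PushoutI.of (φ := φ) i).range := by
  have hx1 : x ∉ (φ i).range := by simpa using hx 1
  induction L using List.reverseRecOn generalizing x with
  | nil =>
    refine ⟨by_contra fun hij => ?_, by simp⟩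
    have hmem : PushoutI.of (φ := φ) i x ∈ (PushoutI.base φ).range := by
      rw [← PushoutI.inf_of_range_eq_base_range hφ hij]
      exact ⟨⟨x, rfl⟩, y, by simpa using h.symm⟩
    obtain ⟨c, hc⟩ := hmem
    rw [← PushoutI.of_apply_eq_base φ i c] at hc
    exact hx1 ⟨c, PushoutI.of_injective hφ i hc⟩
  | append_singleton L q ih =>
    obtain ⟨k, z⟩ := q
    obtain rfl | hk := eq_or_ne k i
    · have hz := ih (IsReduced.append_iff.1 hL).1 (x := z * x * z⁻¹)
        (fun w => by simpa [mul_assoc] using hx (w * z)) (by rw [← h]; simp [mul_assoc]) (hx z)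
      exact ⟨hz.1, by simpa using mul_mem hz.2 ⟨z, rfl⟩⟩
    · obtain ⟨M, hM, hprod, hhead⟩ := hL.exists_inv
      have hxM : IsReduced φ (⟨i, x⟩ :: M) := by
        refine IsReduced.cons_iff.2 ⟨hx1, fun q hq => ?_, hM⟩
        obtain ⟨p, hp, hqp⟩ := hhead q hq
        obtain rfl : (⟨k, z⟩ : Σ i, G i) = p := by simpa using hp
        exact hqp ▸ hk.symm
      have hLxM : IsReduced φ ((L ++ [⟨k, z⟩]) ++ (⟨i, x⟩ :: M)) :=
        IsReduced.append_iff.2 ⟨hL, hxM, by simpa using hk⟩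
      refine absurd ⟨y, ?_⟩ (hLxM.syllableProd_notMem_range_of_two_le hφ (by simp; omega) j)
      rw [syllableProd_append, syllableProd_cons, hprod, ← h, mul_assoc]

theorem conj_of_eq_of (hφ : ∀ i, Injective (φ i)) {i j : ι} {x : G i} {y : G j}
    (hx : ∀ z, z * x * z⁻¹ ∉ (φ i).range) {g : PushoutI φ}
    (h : g * PushoutI.of i x * g⁻¹ = PushoutI.of j y) :
    i = j ∧ g ∈ (PushoutI.of (φ := φ) i).range := by
  obtain ⟨c, L, hL, rfl⟩ := exists_isReduced hφ g
  obtain ⟨hij, hmem⟩ := syllableProd_conj_eq_of hφ hL hx (y := (φ j c)⁻¹ * y * φ j c) (by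
    simp only [map_mul, map_inv, ← h, PushoutI.of_apply_eq_base]
    group)
  exact ⟨hij, mul_mem ⟨φ i c, PushoutI.of_apply_eq_base φ i c⟩ hmem⟩

theorem conj_of_eq_of_isOfFinOrder (hφ : ∀ i, Injective (φ i)) (htf : TorsionFree H) {i j : ι}
    {x : G i} {y : G j} (hx : IsOfFinOrder x) (hx1 : x ≠ 1) {g : PushoutI φ}
    (h : g * PushoutI.of i x * g⁻¹ = PushoutI.of j y) :
    i = j ∧ g ∈ (PushoutI.of (φ := φ) i).range := by
  refine conj_of_eq_of hφ (fun z hz => hx1 ?_) h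
  obtain ⟨c, hc⟩ := hz
  have hconj : IsConj x (φ i c) := isConj_iff.2 ⟨z, hc.symm⟩
  have hc1 : c = 1 := htf c
    ((hφ i).isOfFinOrder_iff.1 (hconj.isOfFinOrder hx))
  rwa [hc1, map_one, isConj_one_left] at hconj

end Amalgam

section FreeProduct

variable {ι : Type*} {G : ι → Type*} [∀ i, Group (G i)]

/-- A free product is an amalgamated product over the trivial group. -/
noncomputable def coprodIEquivPushoutI :
    CoprodI G ≃* PushoutI fun i => (1 : PUnit.{1} →* G i) :=
  MonoidHom.toMulEquiv PushoutI.ofCoprodI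
    (PushoutI.lift (fun _ => CoprodI.of) 1 fun _ => by ext; simp)
    (by ext; simp)
    (PushoutI.hom_ext (fun _ => by ext; simp) (Subsingleton.elim _ _))

@[simp]
theorem coprodIEquivPushoutI_of {i : ι} (x : G i) :
    coprodIEquivPushoutI (CoprodI.of x) = PushoutI.of i x := by
  simp [coprodIEquivPushoutI]

theorem coprodI_exists_isConj_of [Nonempty ι] {g : CoprodI G} (hg : IsOfFinOrder g) :
    ∃ (i : ι) (x : G i), IsConj (CoprodI.of x) g := by
  obtain ⟨i, x, hx⟩ := exists_isConj_of (fun _ _ _ _ => rfl)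
    (coprodIEquivPushoutI.toMonoidHom.isOfFinOrder hg)
  refine ⟨i, x, ?_⟩
  simpa [-isConj_iff, ← coprodIEquivPushoutI_of] using
    coprodIEquivPushoutI.symm.toMonoidHom.map_isConj hx

theorem coprodI_conj_of_eq_of {i j : ι} {x : G i} {y : G j} (hx : x ≠ 1) {g : CoprodI G}
    (h : g * CoprodI.of x * g⁻¹ = CoprodI.of y) : i = j ∧ g ∈ (CoprodI.of (i := i)).range := by
  have hconj := conj_of_eq_of (φ := fun i => (1 : PUnit.{1} →* G i)) (fun _ _ _ _ => rfl)
    (x := x) (y := y) (g := coprodIEquivPushoutI g)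
    (by simpa using hx) (by simpa using congrArg coprodIEquivPushoutI h)
  refine ⟨hconj.1, ?_⟩
  obtain ⟨z, hz⟩ := hconj.2
  exact ⟨z, coprodIEquivPushoutI.injective (by rw [← hz, coprodIEquivPushoutI_of])⟩

end FreeProduct

/-! ### Kurosh's subgroup theorem -/

section Cocycle

/-- The wreath product of `S` with a group `W` acting on `Ω`. A homomorphism `W →* Wreath W Ω S`
with right component the identity is a cocycle `W × Ω → S`. -/
abbrev Wreath (W Ω S : Type*) [Group W] [MulAction W Ω] [Group S] :=
  (Ω → S) ⋊[mulAutArrow (G := W) (A := Ω) (M := S)] W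

variable {W Ω S : Type*} [Group W] [MulAction W Ω] [Group S]

theorem wreath_mul_left (a b : Wreath W Ω S) (ω : Ω) :
    (a * b).left ω = a.left ω * b.left (a.right⁻¹ • ω) := rfl

variable {H : Type*} [Group H] (Θ : H →* Wreath W Ω S)

theorem cocycle_mul (a b : H) (ω : Ω) :
    (Θ (a * b)).left ω = (Θ a).left ω * (Θ b).left ((Θ a).right⁻¹ • ω) := by
  rw [map_mul, wreath_mul_left]

theorem cocycle_inv (a : H) (ω : Ω) :
    (Θ a⁻¹).left ω = ((Θ a).left ((Θ a).right • ω))⁻¹ := by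
  have h := cocycle_mul Θ a a⁻¹ ((Θ a).right • ω)
  rw [mul_inv_cancel, map_one, inv_smul_smul] at h
  exact (inv_eq_of_mul_eq_one_right h.symm).symm

/-- The restriction of a cocycle to a subgroup `A` fixing the point `ω`. -/
def cocycleHom {A : Subgroup H} {ω : Ω} (hA : ∀ a ∈ A, (Θ a).right • ω = ω) : A →* S where
  toFun a := (Θ a).left ω
  map_one' := by simp
  map_mul' a b := by
    rw [Subgroup.coe_mul, cocycle_mul, inv_smul_eq_iff.2 (hA a a.2).symm]

end Cocycle

section Kurosh

/-- The homomorphism to `H` from the free product of subgroups `P j` and a free group. -/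
noncomputable def freeProductHom {H J Z : Type*} [Group H] (P : J → Subgroup H) (ζ : Z → H) :
    Coprod (CoprodI fun j => P j) (FreeGroup Z) →* H :=
  Coprod.lift (CoprodI.lift fun j => (P j).subtype) (FreeGroup.lift ζ)

namespace Kurosh

variable {U : Type*} {C : U → Type*} [∀ u, Group (C u)]
  (A : Subgroup (CoprodI C))

/-- The least number of syllables of an element of the coset `ω`. -/
noncomputable def length (ω : CoprodI C ⧸ A) : ℕ :=
  sInf {n | ∃ L : List (Σ u, C u), L.length = n ∧ ↑(L.map fun p => CoprodI.of p.2).prod = ω}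

theorem exists_length_smul_lt {ω : CoprodI C ⧸ A} (hω : ω ≠ QuotientGroup.mk 1) :
    ∃ (u : U) (x : C u), length A (CoprodI.of x • ω) < length A ω := by
  classical
  obtain ⟨L, hL, hLω⟩ : length A ω ∈ {n | ∃ L : List (Σ u, C u),
      L.length = n ∧ ↑(L.map fun p => CoprodI.of p.2).prod = ω} := Nat.sInf_mem (by
    obtain ⟨w, rfl⟩ := QuotientGroup.mk_surjective ω
    refine ⟨_, (CoprodI.Word.equiv w).toList, rfl, congrArg _ ?_⟩
    exact CoprodI.Word.equiv.symm_apply_apply w)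
  obtain _ | ⟨⟨u, x⟩, L⟩ := L
  · exact absurd hLω.symm hω
  · refine ⟨u, x⁻¹, ?_⟩
    calc length A (CoprodI.of x⁻¹ • ω) ≤ L.length :=
          Nat.sInf_le ⟨L, rfl, by simp [← hLω]⟩
      _ < length A ω := hL ▸ Nat.lt_succ_self _

/-- A point of minimal length in the orbit of `ω` under the factor `C u`. -/
noncomputable def basepoint (u : U) (ω : CoprodI C ⧸ A) : CoprodI C ⧸ A :=
  argminOn (length A) (MulAction.orbit (CoprodI.of : C u →* CoprodI C).range ω)
    (MulAction.nonempty_orbit ω)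

theorem exists_of_smul_basepoint (u : U) (ω : CoprodI C ⧸ A) :
    ∃ x : C u, CoprodI.of x • basepoint A u ω = ω := by
  obtain ⟨⟨_, x, rfl⟩, hx⟩ := argminOn_mem (length A)
    (MulAction.orbit (CoprodI.of : C u →* CoprodI C).range ω) (MulAction.nonempty_orbit ω)
  exact ⟨x⁻¹, by rw [map_inv, inv_smul_eq_iff]; exact hx.symm⟩

theorem basepoint_of_smul {u : U} (x : C u) (ω : CoprodI C ⧸ A) :
    basepoint A u (CoprodI.of x • ω) = basepoint A u ω := by
  have : MulAction.orbit (CoprodI.of : C u →* CoprodI C).range (CoprodI.of x • ω) =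
      MulAction.orbit (CoprodI.of : C u →* CoprodI C).range ω :=
    MulAction.orbit_eq_iff.2 ⟨⟨_, x, rfl⟩, rfl⟩
  simp only [basepoint, this]

theorem basepoint_basepoint (u : U) (ω : CoprodI C ⧸ A) :
    basepoint A u (basepoint A u ω) = basepoint A u ω := by
  obtain ⟨x, hx⟩ := exists_of_smul_basepoint A u ω
  conv_rhs => rw [← hx, basepoint_of_smul]

theorem length_basepoint_le {u : U} (x : C u) (ω : CoprodI C ⧸ A) :
    length A (basepoint A u ω) ≤ length A (CoprodI.of x • ω) :=
  argminOn_le (length A) _ (MulAction.mem_orbit ω (⟨_, x, rfl⟩ : (CoprodI.of : C u →* _).range))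

open Classical in
/-- An element of the factor `C u` taking the basepoint of the orbit of `ω` to `ω`. -/
noncomputable def transporter (u : U) (ω : CoprodI C ⧸ A) : C u :=
  if basepoint A u ω = ω then 1 else (exists_of_smul_basepoint A u ω).choose

theorem of_transporter_smul (u : U) (ω : CoprodI C ⧸ A) :
    CoprodI.of (transporter A u ω) • basepoint A u ω = ω := by
  unfold transporter
  split_ifs with h
  · simpa using h
  · exact (exists_of_smul_basepoint A u ω).choose_spec

theorem transporter_of_basepoint_eq {u : U} {ω : CoprodI C ⧸ A} (h : basepoint A u ω = ω) :
    transporter A u ω = 1 := if_pos h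

theorem exists_length_basepoint_lt {ω : CoprodI C ⧸ A} (hω : ω ≠ QuotientGroup.mk 1) :
    ∃ u : U, length A (basepoint A u ω) < length A ω := by
  obtain ⟨u, x, hx⟩ := exists_length_smul_lt A hω
  exact ⟨u, (length_basepoint_le A x ω).trans_lt hx⟩

/-- The factor along which `ω` is joined to a shorter point. -/
noncomputable def parent {ω : CoprodI C ⧸ A} (hω : ω ≠ QuotientGroup.mk 1) : U :=
  (exists_length_basepoint_lt A hω).choose

open Classical in
/-- Coset representatives, chosen along the spanning tree given by `parent`. -/
noncomputable def rep (ω : CoprodI C ⧸ A) : CoprodI C :=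
  if hω : ω = QuotientGroup.mk 1 then 1 else
    CoprodI.of (transporter A (parent A hω) ω) *
      rep (basepoint A (parent A hω) ω)
termination_by length A ω
decreasing_by exact (exists_length_basepoint_lt A hω).choose_spec

theorem rep_self : rep A (QuotientGroup.mk 1) = 1 := by
  rw [rep, dif_pos rfl]

theorem rep_of_ne {ω : CoprodI C ⧸ A} (hω : ω ≠ QuotientGroup.mk 1) :
    rep A ω = CoprodI.of (transporter A (parent A hω) ω) *
      rep A (basepoint A (parent A hω) ω) := by
  rw [rep, dif_neg hω]

theorem rep_induction {p : CoprodI C ⧸ A → Prop} (one : p (QuotientGroup.mk 1))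
    (step : ∀ ω (hω : ω ≠ QuotientGroup.mk 1), p (basepoint A (parent A hω) ω) → p ω)
    (ω : CoprodI C ⧸ A) : p ω := by
  induction h : length A ω using Nat.strong_induction_on generalizing ω with
  | _ n ih =>
    obtain rfl | hω := eq_or_ne ω (QuotientGroup.mk 1)
    · exact one
    · exact step ω hω (ih _ (h ▸ (exists_length_basepoint_lt A hω).choose_spec) _ rfl)

theorem mk_rep (ω : CoprodI C ⧸ A) : (rep A ω : CoprodI C ⧸ A) = ω := by
  induction ω using rep_induction A with
  | one => rw [rep_self]
  | step ω hω ih =>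
    rw [rep_of_ne A hω, ← smul_eq_mul, ← MulAction.Quotient.smul_mk, ih, of_transporter_smul]

/-- The Schreier cocycle `W × W ⧸ A → A` of the system of representatives. -/
noncomputable def schreier (w : CoprodI C) (ω : CoprodI C ⧸ A) : A :=
  ⟨(rep A ω)⁻¹ * w * rep A (w⁻¹ • ω), by
    rw [mul_assoc, ← QuotientGroup.eq, mk_rep, ← smul_eq_mul w, ← MulAction.Quotient.smul_mk,
      mk_rep, smul_inv_smul]⟩

theorem schreier_mul (w w' : CoprodI C) (ω : CoprodI C ⧸ A) :
    schreier A (w * w') ω = schreier A w ω * schreier A w' (w⁻¹ • ω) := by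
  ext
  simp [schreier, mul_smul, mul_assoc]

theorem schreier_one (ω : CoprodI C ⧸ A) : schreier A 1 ω = 1 := by
  ext
  simp [schreier]

theorem schreier_coe (a : A) : schreier A (a : CoprodI C) (QuotientGroup.mk 1) = a := by
  have ha : (a : CoprodI C)⁻¹ • (QuotientGroup.mk 1 : CoprodI C ⧸ A) = QuotientGroup.mk 1 := by
    simp [MulAction.Quotient.smul_mk, QuotientGroup.eq]
  ext
  simp [schreier, ha, rep_self]

/-- The element of `A` given by the edge joining `ω` to the basepoint of its `C u`-orbit. -/
noncomputable def edge (u : U) (ω : CoprodI C ⧸ A) : A :=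
  schreier A (CoprodI.of (transporter A u ω)) ω

theorem coe_edge (u : U) (ω : CoprodI C ⧸ A) : (edge A u ω : CoprodI C) =
    (rep A ω)⁻¹ * CoprodI.of (transporter A u ω) * rep A (basepoint A u ω) := by
  simp only [edge, schreier, inv_smul_eq_iff.2 (of_transporter_smul A u ω).symm]

/-- The edges contributing nothing to `A`: the loops at basepoints and those of the tree. -/
def IsTreeEdge (u : U) (ω : CoprodI C ⧸ A) : Prop :=
  basepoint A u ω = ω ∨ ∃ hω : ω ≠ QuotientGroup.mk 1, parent A hω = u

theorem edge_of_basepoint_eq {u : U} {ω : CoprodI C ⧸ A} (h : basepoint A u ω = ω) :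
    edge A u ω = 1 := by
  rw [edge, transporter_of_basepoint_eq A h, map_one, schreier_one]

theorem edge_of_isTreeEdge {u : U} {ω : CoprodI C ⧸ A} (h : IsTreeEdge A u ω) :
    edge A u ω = 1 := by
  obtain h | ⟨hω, rfl⟩ := h
  · exact edge_of_basepoint_eq A h
  · ext
    rw [coe_edge, rep_of_ne A hω]
    simp [mul_assoc]

/-- The element of `A` obtained from `C u` acting at `ω`, transported to the basepoint. -/
noncomputable def loop {u : U} (x : C u) (ω : CoprodI C ⧸ A) : A :=
  (edge A u ω)⁻¹ * schreier A (CoprodI.of x) ω * edge A u ((CoprodI.of x)⁻¹ • ω)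

theorem basepoint_inv_smul {u : U} (x : C u) (ω : CoprodI C ⧸ A) :
    basepoint A u ((CoprodI.of x)⁻¹ • ω) = basepoint A u ω := by
  rw [← map_inv, basepoint_of_smul]

theorem coe_loop {u : U} (x : C u) (ω : CoprodI C ⧸ A) : (loop A x ω : CoprodI C) =
    (rep A (basepoint A u ω))⁻¹ * CoprodI.of ((transporter A u ω)⁻¹ * x *
      transporter A u ((CoprodI.of x)⁻¹ • ω)) * rep A (basepoint A u ω) := by
  simp only [loop, schreier, Subgroup.coe_mul, Subgroup.coe_inv, coe_edge, basepoint_inv_smul,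
    map_mul, map_inv]
  group

theorem loop_mul {u : U} (x y : C u) (ω : CoprodI C ⧸ A) :
    loop A (x * y) ω = loop A x ω * loop A y ((CoprodI.of x)⁻¹ • ω) := by
  simp only [loop, map_mul, schreier_mul, mul_inv_rev, mul_smul]
  group

theorem loop_one {u : U} (ω : CoprodI C ⧸ A) : loop A (1 : C u) ω = 1 := by
  simp [loop, schreier_one]

theorem loop_transporter (u : U) (ω : CoprodI C ⧸ A) : loop A (transporter A u ω) ω = 1 := by
  rw [loop, inv_smul_eq_iff.2 (of_transporter_smul A u ω).symm,
    edge_of_basepoint_eq A (basepoint_basepoint A u ω), ← edge, inv_mul_cancel, one_mul]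

/-- The orbits of the factors on `W ⧸ A`, given by their basepoints. -/
abbrev Orbit : Type _ := {v : U × CoprodI C ⧸ A // basepoint A v.1 v.2 = v.2}

/-- The orbit of `ω` under `C u`. -/
noncomputable def orbit (u : U) (ω : CoprodI C ⧸ A) : Orbit A :=
  ⟨(u, basepoint A u ω), basepoint_basepoint A u ω⟩

/-- The intersection of `A` with the conjugate of a factor attached to an orbit. -/
noncomputable def vertexGroup (v : Orbit A) : Subgroup A :=
  ((CoprodI.of (i := v.1.1)).range.comap (MulAut.conj (rep A v.1.2)).toMonoidHom).subgroupOf A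

theorem loop_mem {u : U} (x : C u) (ω : CoprodI C ⧸ A) :
    loop A x ω ∈ vertexGroup A (orbit A u ω) := by
  refine ⟨(transporter A u ω)⁻¹ * x * transporter A u ((CoprodI.of x)⁻¹ • ω), ?_⟩
  simp only [orbit, MulEquiv.toMonoidHom_eq_coe, Subgroup.subtype_apply, coe_loop,
    MonoidHom.coe_coe, MulAut.conj_apply, mul_assoc, mul_inv_cancel_left, mul_inv_cancel, mul_one]
  rfl

/-- The edges contributing a free generator to `A`. -/
abbrev FreeEdge : Type _ := {p : U × CoprodI C ⧸ A // ¬ IsTreeEdge A p.1 p.2}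

/-- The free product which will turn out to be isomorphic to `A`. -/
abbrev Model : Type _ := Coprod (CoprodI fun v => vertexGroup A v) (FreeGroup (FreeEdge A))

/-- The homomorphism from the model onto `A`. -/
noncomputable def ofModel : Model A →* A :=
  freeProductHom (vertexGroup A) fun p => edge A p.1.1 p.1.2

open Classical in
/-- The element of the model corresponding to `edge A u ω`. -/
noncomputable def edgeWord (u : U) (ω : CoprodI C ⧸ A) : Model A :=
  if h : IsTreeEdge A u ω then 1 else Coprod.inr (FreeGroup.of ⟨(u, ω), h⟩)

open Classical in
/-- The inclusion of a vertex group in the model, extended by `1` to all of `A`. -/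
noncomputable def vertexIncl (v : Orbit A) (a : A) : Model A :=
  if h : a ∈ vertexGroup A v then Coprod.inl (CoprodI.of (⟨a, h⟩ : vertexGroup A v)) else 1

theorem ofModel_edgeWord (u : U) (ω : CoprodI C ⧸ A) :
    ofModel A (edgeWord A u ω) = edge A u ω := by
  unfold edgeWord
  split_ifs with h
  · rw [map_one, edge_of_isTreeEdge A h]
  · simp [ofModel, freeProductHom]

theorem ofModel_vertexIncl {v : Orbit A} {a : A} (h : a ∈ vertexGroup A v) :
    ofModel A (vertexIncl A v a) = a := by
  simp [ofModel, freeProductHom, vertexIncl, h]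

theorem vertexIncl_mul {v : Orbit A} {a b : A} (ha : a ∈ vertexGroup A v)
    (hb : b ∈ vertexGroup A v) :
    vertexIncl A v (a * b) = vertexIncl A v a * vertexIncl A v b := by
  rw [vertexIncl, vertexIncl, vertexIncl, dif_pos ha, dif_pos hb, dif_pos (mul_mem ha hb),
    ← map_mul, ← map_mul]
  rfl

theorem vertexIncl_one (v : Orbit A) : vertexIncl A v 1 = 1 := by
  have h := vertexIncl_mul A (one_mem (vertexGroup A v)) (one_mem (vertexGroup A v))
  rwa [one_mul, left_eq_mul] at h

theorem orbit_inv_smul {u : U} (x : C u) (ω : CoprodI C ⧸ A) :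
    orbit A u ((CoprodI.of x)⁻¹ • ω) = orbit A u ω := by
  simp only [orbit, basepoint_inv_smul]

/-- The model's version of the Schreier cocycle, on one factor. -/
noncomputable def factorCocycle (u : U) :
    C u →* Wreath (CoprodI C) (CoprodI C ⧸ A) (Model A) where
  toFun x := ⟨fun ω => edgeWord A u ω * vertexIncl A (orbit A u ω) (loop A x ω) *
    (edgeWord A u ((CoprodI.of x)⁻¹ • ω))⁻¹, CoprodI.of x⟩
  map_one' := by
    ext ω <;> simp [loop_one, vertexIncl_one]
  map_mul' x y := by
    have hy (ω) : loop A y ((CoprodI.of x)⁻¹ • ω) ∈ vertexGroup A (orbit A u ω) := by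
      rw [← orbit_inv_smul A x]
      exact loop_mem A y _
    refine SemidirectProduct.ext (funext fun ω => ?_) (map_mul _ x y)
    simp only [wreath_mul_left, loop_mul, vertexIncl_mul A (loop_mem A x ω) (hy ω),
      orbit_inv_smul, map_mul, mul_inv_rev, mul_smul]
    group

/-- The model's version of the Schreier cocycle. -/
noncomputable def cocycle : CoprodI C →* Wreath (CoprodI C) (CoprodI C ⧸ A) (Model A) :=
  CoprodI.lift (factorCocycle A)

theorem cocycle_right (w : CoprodI C) : (cocycle A w).right = w :=
  DFunLike.congr_fun (CoprodI.ext_hom (SemidirectProduct.rightHom.comp (cocycle A))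
    (MonoidHom.id _) fun u => by ext x; simp [cocycle, factorCocycle]) w

theorem cocycle_of_left {u : U} (x : C u) (ω : CoprodI C ⧸ A) :
    (cocycle A (CoprodI.of x)).left ω = edgeWord A u ω *
      vertexIncl A (orbit A u ω) (loop A x ω) * (edgeWord A u ((CoprodI.of x)⁻¹ • ω))⁻¹ := by
  simp [cocycle, factorCocycle]

theorem ofModel_cocycle_left (w : CoprodI C) (ω : CoprodI C ⧸ A) :
    ofModel A ((cocycle A w).left ω) = schreier A w ω := by
  induction w using CoprodI.induction_on generalizing ω with
  | one => simp [schreier_one]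
  | of u x =>
    rw [cocycle_of_left, map_mul, map_mul, map_inv, ofModel_edgeWord, ofModel_edgeWord,
      ofModel_vertexIncl A (loop_mem A x ω), loop]
    group
  | mul a b iha ihb =>
    rw [cocycle_mul, cocycle_right, map_mul, iha, ihb, schreier_mul]

theorem edgeWord_of_isTreeEdge {u : U} {ω : CoprodI C ⧸ A} (h : IsTreeEdge A u ω) :
    edgeWord A u ω = 1 := dif_pos h

theorem cocycle_of_transporter (u : U) (ω : CoprodI C ⧸ A) :
    (cocycle A (CoprodI.of (transporter A u ω))).left ω = edgeWord A u ω := by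
  rw [cocycle_of_left, loop_transporter, vertexIncl_one, mul_one,
    inv_smul_eq_iff.2 (of_transporter_smul A u ω).symm,
    edgeWord_of_isTreeEdge A (.inl (basepoint_basepoint A u ω)), inv_one, mul_one]

theorem cocycle_rep (ω : CoprodI C ⧸ A) : (cocycle A (rep A ω)).left ω = 1 := by
  induction ω using rep_induction A with
  | one => simp [rep_self]
  | step ω hω ih =>
    rw [rep_of_ne A hω, cocycle_mul, cocycle_right, cocycle_of_transporter,
      edgeWord_of_isTreeEdge A (.inr ⟨hω, rfl⟩), one_mul,
      inv_smul_eq_iff.2 (of_transporter_smul A _ ω).symm, ih]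

/-- The homomorphism from `A` to the model. -/
noncomputable def toModel : A →* Model A :=
  cocycleHom (cocycle A) (ω := ((1 : CoprodI C) : CoprodI C ⧸ A)) fun a ha => by
    rw [cocycle_right, MulAction.Quotient.smul_mk, smul_eq_mul, mul_one]
    exact QuotientGroup.eq.2 (by simpa using ha)

theorem toModel_apply (a : A) : toModel A a = (cocycle A a).left (1 : CoprodI C) := rfl

theorem toModel_schreier (w : CoprodI C) (ω : CoprodI C ⧸ A) :
    toModel A (schreier A w ω) = (cocycle A w).left ω := by
  have hrep (ω : CoprodI C ⧸ A) : rep A ω • ((1 : CoprodI C) : CoprodI C ⧸ A) = ω := by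
    rw [MulAction.Quotient.smul_mk, smul_eq_mul, mul_one, mk_rep]
  rw [toModel_apply, schreier, cocycle_mul, cocycle_right,
    cocycle_mul, cocycle_right, cocycle_inv, cocycle_right, inv_inv, mul_inv_rev, inv_inv,
    mul_smul, hrep, cocycle_rep, cocycle_rep, inv_one, one_mul, mul_one]

theorem ofModel_toModel (a : A) : ofModel A (toModel A a) = a := by
  rw [toModel_apply, ofModel_cocycle_left, schreier_coe]

theorem toModel_of_mem {v : Orbit A} {a : A} (ha : a ∈ vertexGroup A v) :
    toModel A a = vertexIncl A v a := by
  obtain ⟨⟨u, β⟩, hβ⟩ := v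
  obtain ⟨y, hy : CoprodI.of y = rep A β * a * (rep A β)⁻¹⟩ := ha
  have hfix : (CoprodI.of y)⁻¹ • β = β := by
    rw [inv_smul_eq_iff]
    calc β = (rep A β * a : CoprodI C) := by rw [QuotientGroup.mk_mul_of_mem _ a.2, mk_rep]
      _ = CoprodI.of y • (rep A β : CoprodI C ⧸ A) := by
        rw [hy, MulAction.Quotient.smul_mk, smul_eq_mul, inv_mul_cancel_right]
      _ = CoprodI.of y • β := by rw [mk_rep]
  have ha : schreier A (CoprodI.of y) β = a := by
    ext
    simp only [schreier, hfix]
    rw [hy]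
    group
  have hloop : loop A y β = a := by
    rw [loop, hfix, edge_of_basepoint_eq A hβ, inv_one, one_mul, mul_one, ha]
  have horb : orbit A u β = ⟨(u, β), hβ⟩ := Subtype.ext (Prod.ext rfl hβ)
  rw [← ha, toModel_schreier, cocycle_of_left, hfix, hloop, ha,
    edgeWord_of_isTreeEdge A (.inl hβ), inv_one, one_mul, mul_one, horb]

theorem toModel_ofModel (m : Model A) : toModel A (ofModel A m) = m := by
  refine DFunLike.congr_fun (f := (toModel A).comp (ofModel A)) (g := MonoidHom.id _)
    (Coprod.hom_ext (CoprodI.ext_hom _ _ fun v => ?_) (FreeGroup.ext_hom _ _ fun p => ?_)) m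
  · ext ⟨a, ha⟩
    simpa [ofModel, freeProductHom, vertexIncl, ha] using toModel_of_mem A ha
  · have h := toModel_schreier A (CoprodI.of (transporter A p.1.1 p.1.2)) p.1.2
    rw [← edge, cocycle_of_transporter, edgeWord, dif_neg p.2] at h
    simpa [ofModel, freeProductHom] using h

end Kurosh

theorem kurosh {U : Type u} {C : U → Type v} [∀ u, Group (C u)] (A : Subgroup (CoprodI C)) :
    ∃ (J Z : Type (max u v)) (P : J → Subgroup A) (ζ : Z → A), Bijective (freeProductHom P ζ) ∧
      ∀ j, ∃ (u : U) (w : CoprodI C), ∀ a ∈ P j,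
        w * a * w⁻¹ ∈ (CoprodI.of : C u →* CoprodI C).range :=
  ⟨Kurosh.Orbit A, Kurosh.FreeEdge A, Kurosh.vertexGroup A, fun p => Kurosh.edge A p.1.1 p.1.2,
    bijective_iff_has_inverse.2 ⟨Kurosh.toModel A, Kurosh.toModel_ofModel A,
      Kurosh.ofModel_toModel A⟩,
    fun v => ⟨v.1.1, Kurosh.rep A v.1.2, fun _ h => h⟩⟩

end Kurosh

/-! ### Free products of torsion and torsion-free groups -/

section Unmixed

variable {G H : Type*} [Group G] [Group H]

theorem torsionFree_freeGroup (Z : Type*) : TorsionFree (FreeGroup Z) := fun _ hx => by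
  by_contra hne
  exact not_isOfFinOrder_of_isMulTorsionFree hne hx

theorem TorsionFree.of_injective (hH : TorsionFree H) {f : G →* H} (hf : Injective f) :
    TorsionFree G := fun _ hx =>
  (map_eq_one_iff f hf).1 (hH _ (f.isOfFinOrder hx))

theorem isMulTorsion_of_injective (hH : IsMulTorsion H) {f : G →* H} (hf : Injective f) :
    IsMulTorsion G := fun x => hf.isOfFinOrder_iff.1 (hH (f x))

variable {T : Type u} [Group T]

theorem exists_kurosh_of_injective {U : Type u} {C : U → Type u} [∀ u, Group (C u)]
    {f : T →* CoprodI C} (hf : Injective f) :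
    ∃ (J Z : Type u) (K : J → Type u) (_ : ∀ j, Group (K j)),
      Nonempty (T ≃* Coprod (CoprodI K) (FreeGroup Z)) ∧
        ∀ j, ∃ (u : U) (g : K j →* C u), Injective g := by
  obtain ⟨J, Z, P, ζ, hb, hP⟩ := kurosh f.range
  refine ⟨J, Z, fun j => P j, inferInstance,
    ⟨(MonoidHom.ofInjective hf).trans (MulEquiv.ofBijective _ hb).symm⟩, fun j => ?_⟩
  obtain ⟨u, w, hw⟩ := hP j
  let conj : P j →* (CoprodI.of : C u →* CoprodI C).range :=
    (((MulAut.conj w).toMonoidHom.comp f.range.subtype).comp (P j).subtype).codRestrict _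
      fun a => hw a a.2
  have hconj : Injective conj := fun a b hab => by
    simpa [conj] using congrArg Subtype.val hab
  exact ⟨u, (MonoidHom.ofInjective (CoprodI.of_injective u)).symm.toMonoidHom.comp conj,
    (MulEquiv.injective _).comp hconj⟩

/-- The homomorphism of free products induced by homomorphisms of the factors. -/
def coprodIMap {ι : Type*} {A B : ι → Type*} [∀ i, Group (A i)] [∀ i, Group (B i)]
    (f : ∀ i, A i →* B i) : CoprodI A →* CoprodI B :=
  CoprodI.lift fun i => CoprodI.of.comp (f i)

@[simp]
theorem coprodIMap_of {ι : Type*} {A B : ι → Type*} [∀ i, Group (A i)] [∀ i, Group (B i)]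
    (f : ∀ i, A i →* B i) {i : ι} (a : A i) :
    coprodIMap f (CoprodI.of a) = CoprodI.of (f i a) :=
  CoprodI.lift_of ..

theorem coprodIMap_injective {ι : Type*} {A B : ι → Type*} [∀ i, Group (A i)] [∀ i, Group (B i)]
    {f : ∀ i, A i →* B i} (hf : ∀ i, Injective (f i)) : Injective (coprodIMap f) := by
  classical
  refine (injective_iff_map_eq_one _).2 fun a ha => ?_
  let w := CoprodI.Word.equiv a
  have hw : w.prod = a := CoprodI.Word.equiv.symm_apply_apply a
  let w' : CoprodI.Word B :=
    ⟨w.toList.map fun p => ⟨p.1, f p.1 p.2⟩,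
      List.forall_mem_map.2 fun p hp => (map_ne_one_iff _ (hf p.1)).2 (w.ne_one p hp),
      by simpa [List.isChain_map] using w.chain_ne⟩
  have hw' : w'.prod = (CoprodI.Word.empty : CoprodI.Word B).prod := by
    rw [CoprodI.Word.prod_empty, ← ha, ← hw]
    simp [CoprodI.Word.prod, w', map_list_prod, comp_def]
  have hnil : w.toList = [] := by
    simpa [w', CoprodI.Word.empty] using
      congrArg CoprodI.Word.toList (CoprodI.Word.equiv.symm.injective
        (show CoprodI.Word.equiv.symm w' = CoprodI.Word.equiv.symm CoprodI.Word.empty from hw'))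
  rw [← hw, CoprodI.Word.prod, hnil, List.map_nil, List.prod_nil]

/-- Two groups as a family indexed by a two-element type. -/
def pair (A B : Type u) (b : ULift.{u} Bool) : Type u := cond b.down A B

instance (A B : Type u) [Group A] [Group B] : ∀ b, Group (pair A B b)
  | ⟨true⟩ => inferInstanceAs (Group A)
  | ⟨false⟩ => inferInstanceAs (Group B)

/-- The binary free product as a free product of a family. -/
noncomputable def coprodEquivCoprodI (A B : Type u) [Group A] [Group B] :
    Coprod A B ≃* CoprodI (pair A B) :=
  MonoidHom.toMulEquiv
    (Coprod.lift (CoprodI.of (M := pair A B) (i := ⟨true⟩))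
      (CoprodI.of (M := pair A B) (i := ⟨false⟩)))
    (CoprodI.lift fun
      | ⟨true⟩ => Coprod.inl
      | ⟨false⟩ => Coprod.inr)
    (Coprod.hom_ext (by ext; simp; rfl) (by ext; simp; rfl))
    (CoprodI.ext_hom _ _ fun
      | ⟨true⟩ => by ext x; simp; rfl
      | ⟨false⟩ => by ext x; simp; rfl)

theorem coprod_exists_isConj {A B : Type u} [Group A] [Group B] {g : Coprod A B}
    (hg : IsOfFinOrder g) : (∃ a, IsConj (Coprod.inl a) g) ∨ ∃ b, IsConj (Coprod.inr b) g := by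
  obtain ⟨⟨b⟩, x, hx⟩ := coprodI_exists_isConj_of
    ((coprodEquivCoprodI A B).toMonoidHom.isOfFinOrder hg)
  have h : IsConj ((coprodEquivCoprodI A B).symm (CoprodI.of x)) g := by
    simpa [-isConj_iff] using (coprodEquivCoprodI A B).symm.toMonoidHom.map_isConj hx
  cases b
  · exact .inr ⟨x, h⟩
  · exact .inl ⟨x, h⟩

variable (T) in
/-- `T` embeds in a free product of unmixed groups, that is of groups each of which is torsion or
torsion-free. -/
def EmbedsInUnmixed : Prop :=
  ∃ (U : Type u) (C : U → Type u) (_ : ∀ u, Group (C u)),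
    (∀ u, IsMulTorsion (C u) ∨ TorsionFree (C u)) ∧ ∃ f : T →* CoprodI C, Injective f

namespace EmbedsInUnmixed

theorem of_injective {T' : Type u} [Group T'] (h : EmbedsInUnmixed T') {f : T →* T'}
    (hf : Injective f) : EmbedsInUnmixed T := by
  obtain ⟨U, C, gC, hC, j, hj⟩ := h
  exact ⟨U, C, gC, hC, j.comp f, hj.comp hf⟩

theorem of_unmixed (h : IsMulTorsion T ∨ TorsionFree T) : EmbedsInUnmixed T :=
  ⟨PUnit, fun _ => T, inferInstance, fun _ => h, CoprodI.of (M := fun _ => T),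
    CoprodI.of_injective PUnit.unit⟩

theorem coprodI {ι : Type u} {D : ι → Type u} [∀ i, Group (D i)]
    (h : ∀ i, EmbedsInUnmixed (D i)) : EmbedsInUnmixed (CoprodI D) := by
  choose U C gC hC f hf using h
  let E : (Σ i, U i) → Type u := fun p => C p.1 p.2
  let _ (p : Σ i, U i) : Group (E p) := gC p.1 p.2
  let flatten : CoprodI (fun i => CoprodI (C i)) →* CoprodI E :=
    CoprodI.lift fun i => CoprodI.lift fun u => CoprodI.of (M := E) (i := ⟨i, u⟩)
  let group : CoprodI E →* CoprodI (fun i => CoprodI (C i)) :=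
    CoprodI.lift fun p => (CoprodI.of (i := p.1)).comp (CoprodI.of (i := p.2))
  have hleft : group.comp flatten = MonoidHom.id _ :=
    CoprodI.ext_hom _ _ fun i => CoprodI.ext_hom _ _ fun u => by ext; simp [group, flatten]
  refine ⟨Σ i, U i, E, inferInstance, fun p => hC p.1 p.2, flatten.comp (coprodIMap f),
    (LeftInverse.injective (g := group) (f := flatten) (DFunLike.congr_fun hleft)).comp
      (coprodIMap_injective hf)⟩

theorem coprod {A B : Type u} [Group A] [Group B] (hA : EmbedsInUnmixed A)
    (hB : EmbedsInUnmixed B) : EmbedsInUnmixed (Coprod A B) :=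
  (coprodI fun
    | ⟨true⟩ => hA
    | ⟨false⟩ => hB : EmbedsInUnmixed (CoprodI (pair A B))).of_injective
      (f := (coprodEquivCoprodI A B).toMonoidHom) (coprodEquivCoprodI A B).injective

end EmbedsInUnmixed

theorem TorsionFree.hom_eq_one_of_closure (hH : TorsionFree H)
    (hG : Subgroup.closure {x : G | IsOfFinOrder x} = ⊤) (f : G →* H) : f = 1 :=
  MonoidHom.eq_of_eqOn_dense hG fun _ hx => hH _ (f.isOfFinOrder hx)

/-- The projection of a free product with a free group onto one of its factors. -/
noncomputable def factorProj {J : Type*} [DecidableEq J] (Z : Type*) (K : J → Type*)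
    [∀ j, Group (K j)] (j : J) : Coprod (CoprodI K) (FreeGroup Z) →* K j :=
  Coprod.lift (CoprodI.lift (Pi.mulSingle j (MonoidHom.id (K j)))) 1

@[simp]
theorem factorProj_inl_of {J Z : Type*} [DecidableEq J] {K : J → Type*} [∀ j, Group (K j)] {j : J}
    (x : K j) : factorProj Z K j (Coprod.inl (CoprodI.of x)) = x := by
  simp [factorProj]

theorem EmbedsInUnmixed.exists_torsion_of_closure (hT : EmbedsInUnmixed T)
    (hgen : Subgroup.closure {x : T | IsOfFinOrder x} = ⊤) :
    ∃ (J : Type u) (K : J → Type u) (_ : ∀ j, Group (K j)),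
      (∀ j, IsMulTorsion (K j)) ∧ ∃ f : T →* CoprodI K, Injective f := by
  classical
  obtain ⟨U, C, gC, hC, f, hf⟩ := hT
  obtain ⟨J, Z, K, gK, ⟨e⟩, hK⟩ := exists_kurosh_of_injective hf
  have trivial_of_torsionFree {H : Type u} [Group H] (hH : TorsionFree H)
      (p : Coprod (CoprodI K) (FreeGroup Z) →* H) (x) : p x = 1 := by
    simpa using DFunLike.congr_fun (hH.hom_eq_one_of_closure hgen (p.comp e.toMonoidHom)) (e.symm x)
  have hZ : IsEmpty Z := ⟨fun z => FreeGroup.of_ne_one z <| by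
    simpa using trivial_of_torsionFree (torsionFree_freeGroup Z) Coprod.snd
      (Coprod.inr (FreeGroup.of z))⟩
  have hfst : (Coprod.inl.comp Coprod.fst : _ →* Coprod (CoprodI K) (FreeGroup Z)) =
      MonoidHom.id _ :=
    Coprod.hom_ext (by ext; simp) (FreeGroup.ext_hom _ _ isEmptyElim)
  refine ⟨J, K, gK, fun j => ?_, Coprod.fst.comp e.toMonoidHom,
    (LeftInverse.injective (g := Coprod.inl) (f := Coprod.fst) (DFunLike.congr_fun hfst)).comp
      e.injective⟩
  obtain ⟨u, g, hg⟩ := hK j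
  obtain h | h := hC u
  · exact isMulTorsion_of_injective h hg
  · intro x
    rw [← factorProj_inl_of (Z := Z) x, trivial_of_torsionFree (h.of_injective hg)]
    exact IsOfFinOrder.one

theorem EmbedsInUnmixed.exists_equiv_coprod_of_injective (hT : EmbedsInUnmixed T)
    (hgen : Subgroup.closure {x : T | IsOfFinOrder x} = ⊤) {D : Type u} [Group D] {i : D →* T}
    (hi : Injective i) :
    ∃ (J Z : Type u) (K : J → Type u) (_ : ∀ j, Group (K j)),
      (∀ j, IsMulTorsion (K j)) ∧ Nonempty (D ≃* Coprod (CoprodI K) (FreeGroup Z)) := by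
  obtain ⟨U, C, gC, hC, f, hf⟩ := hT.exists_torsion_of_closure hgen
  obtain ⟨J, Z, K, gK, he, hK⟩ :=
    exists_kurosh_of_injective (f := f.comp i) (hf.comp hi)
  refine ⟨J, Z, K, gK, fun j => ?_, he⟩
  obtain ⟨u, g, hg⟩ := hK j
  exact isMulTorsion_of_injective (hC u) hg

end Unmixed

section NormalClosure

variable {G H : Type*} [Group G] [Group H]

theorem self_mem_normalClosure (g : G) : g ∈ Subgroup.normalClosure {g} :=
  Subgroup.subset_normalClosure rfl

theorem normalClosure_singleton_le {g : G} {N : Subgroup G} [N.Normal] :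
    Subgroup.normalClosure {g} ≤ N ↔ g ∈ N := by
  rw [← Subgroup.normalClosure_subset_iff, Set.singleton_subset_iff, SetLike.mem_coe]

theorem normalClosure_singleton_eq_of_isConj {g g' : G} (h : IsConj g g') :
    Subgroup.normalClosure {g} = Subgroup.normalClosure {g'} := by
  have key {g g' : G} (h : IsConj g g') :
      Subgroup.normalClosure {g} ≤ Subgroup.normalClosure {g'} := by
    obtain ⟨c, rfl⟩ := isConj_iff.1 h.symm
    exact normalClosure_singleton_le.2 <|
      Subgroup.normalClosure_normal.conj_mem _ (self_mem_normalClosure g') c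
  exact le_antisymm (key h) (key h.symm)

theorem map_mem_normalClosure (f : G →* H) {g g' : G} (h : g' ∈ Subgroup.normalClosure {g}) :
    f g' ∈ Subgroup.normalClosure {f g} := by
  simpa using Subgroup.map_normalClosure_le {g} f (Subgroup.mem_map_of_mem f h)

theorem map_eq_one_of_mem_normalClosure (f : G →* H) {g g' : G} (hg : f g = 1)
    (h : g' ∈ Subgroup.normalClosure {g}) : f g' = 1 :=
  normalClosure_singleton_le.2 (show g ∈ f.ker from hg) h

theorem normalClosure_pow_le (g : G) (n : ℕ) :
    Subgroup.normalClosure {g ^ n} ≤ Subgroup.normalClosure {g} :=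
  normalClosure_singleton_le.2 (pow_mem (self_mem_normalClosure g) n)

theorem ker_comp_mulEquiv {G' : Type*} [Group G'] (e : G ≃* G') {g : G}
    {f : G' →* H} (hf : f.ker = Subgroup.normalClosure {e g}) :
    (f.comp e.toMonoidHom).ker = Subgroup.normalClosure {g} := by
  ext x
  rw [← MonoidHom.comap_ker, hf, Subgroup.mem_comap]
  exact ⟨fun h => by simpa using map_mem_normalClosure e.symm.toMonoidHom h,
    map_mem_normalClosure e.toMonoidHom⟩

end NormalClosure

section OneRelatorLift

variable {X G : Type*} [Group G] {r : FreeGroup X}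

/-- The homomorphism out of `⟨X; r⟩` induced by a homomorphism out of the free group that
kills `r`. -/
def oneRelatorLift (f : FreeGroup X →* G) (h : f r = 1) : PresentedGroup {r} →* G :=
  QuotientGroup.lift _ f fun _ => map_eq_one_of_mem_normalClosure f h

@[simp]
theorem oneRelatorLift_mk (f : FreeGroup X →* G) (h : f r = 1) (w : FreeGroup X) :
    oneRelatorLift f h (PresentedGroup.mk {r} w) = f w := rfl

theorem mk_relator : PresentedGroup.mk {r} r = 1 := PresentedGroup.one_of_mem rfl

end OneRelatorLift

/-! ### Essential letters and cyclically reduced words -/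

section Letters

variable {X : Type*}

/-- The subgroup of a free group generated by a set of basis letters. -/
def letterSubgroup (S : Set X) : Subgroup (FreeGroup X) := Subgroup.closure (FreeGroup.of '' S)

theorem of_mem_letterSubgroup {S : Set X} {x : X} (h : x ∈ S) :
    FreeGroup.of x ∈ letterSubgroup S :=
  Subgroup.subset_closure ⟨x, h, rfl⟩

theorem letterSubgroup_le {S : Set X} {K : Subgroup (FreeGroup X)} :
    letterSubgroup S ≤ K ↔ ∀ x ∈ S, FreeGroup.of x ∈ K := by
  rw [letterSubgroup, Subgroup.closure_le, Set.image_subset_iff]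
  rfl

theorem letterSubgroup_mono {S S' : Set X} (h : S ⊆ S') : letterSubgroup S ≤ letterSubgroup S' :=
  Subgroup.closure_mono (Set.image_mono h)

theorem map_mem_letterSubgroup {Y : Type*} {S : Set X} {S' : Set Y}
    (f : FreeGroup X →* FreeGroup Y) (h : ∀ x ∈ S, f (FreeGroup.of x) ∈ letterSubgroup S')
    {w : FreeGroup X} (hw : w ∈ letterSubgroup S) : f w ∈ letterSubgroup S' :=
  (letterSubgroup_le (K := (letterSubgroup S').comap f)).2 h hw

theorem eqOn_letterSubgroup {G : Type*} [Group G] {S : Set X} {f g : FreeGroup X →* G}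
    (h : ∀ x ∈ S, f (FreeGroup.of x) = g (FreeGroup.of x)) {w : FreeGroup X}
    (hw : w ∈ letterSubgroup S) : f w = g w :=
  (letterSubgroup_le (K := f.eqLocus g)).2 h hw

theorem exists_mk_eq (w : FreeGroup X) : ∃ L, FreeGroup.mk L = w := Quot.exists_rep w

theorem mk_cons (x : X) (c : Bool) (L : List (X × Bool)) : FreeGroup.mk ((x, c) :: L) =
    cond c (FreeGroup.of x) (FreeGroup.of x)⁻¹ * FreeGroup.mk L := by
  rw [← List.singleton_append, ← FreeGroup.mul_mk]
  cases c <;> rfl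

theorem mk_mem_letterSubgroup {S : Set X} {L : List (X × Bool)} (h : ∀ p ∈ L, p.1 ∈ S) :
    FreeGroup.mk L ∈ letterSubgroup S := by
  induction L with
  | nil => exact one_mem _
  | cons p L ih =>
    obtain ⟨hp, hL⟩ := List.forall_mem_cons.1 h
    rw [mk_cons]
    refine mul_mem ?_ (ih hL)
    cases p.2
    exacts [inv_mem (of_mem_letterSubgroup hp), of_mem_letterSubgroup hp]

open Classical in
/-- The retraction of a free group onto a letter subgroup that kills the other letters. -/
noncomputable def letterRetract (S : Set X) : FreeGroup X →* FreeGroup X :=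
  FreeGroup.lift fun x => if x ∈ S then FreeGroup.of x else 1

theorem letterRetract_of_mem {S : Set X} {w : FreeGroup X} (h : w ∈ letterSubgroup S) :
    letterRetract S w = w :=
  eqOn_letterSubgroup (g := MonoidHom.id _) (fun x hx => by simp [letterRetract, hx]) h

open Classical in
theorem letterRetract_mk (S : Set X) (L : List (X × Bool)) :
    letterRetract S (FreeGroup.mk L) = FreeGroup.mk (L.filter fun p => p.1 ∈ S) := by
  induction L with
  | nil => exact map_one _
  | cons p L ih =>
    obtain ⟨x, c⟩ := p
    rw [mk_cons, map_mul, ih]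
    by_cases hx : x ∈ S <;> cases c <;> simp [letterRetract, hx, mk_cons]

theorem exists_mk_eq_of_mem {S : Set X} {w : FreeGroup X} (h : w ∈ letterSubgroup S) :
    ∃ L, FreeGroup.mk L = w ∧ ∀ p ∈ L, p.1 ∈ S := by
  classical
  obtain ⟨L, rfl⟩ := exists_mk_eq w
  refine ⟨_, (letterRetract_mk S L).symm.trans (letterRetract_of_mem h), fun p hp => ?_⟩
  simpa using (List.mem_filter.1 hp).2

/-- A letter is *essential* for `R` if it occurs in every conjugate of `R`, equivalently in a
cyclically reduced one. -/
def IsEssential (R : FreeGroup X) (x : X) : Prop :=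
  ∀ g : FreeGroup X, g * R * g⁻¹ ∉ letterSubgroup ({x}ᶜ : Set X)

namespace IsEssential

variable {R : FreeGroup X} {x : X}

theorem of_isConj {R' : FreeGroup X} (h : IsEssential R x) (hc : IsConj R R') :
    IsEssential R' x := by
  obtain ⟨c, rfl⟩ := isConj_iff.1 hc
  intro g hg
  refine h (g * c) ?_
  simpa only [mul_inv_rev, mul_assoc] using hg

theorem ne_one (h : IsEssential R x) : R ≠ 1 := by
  rintro rfl
  exact h 1 (by simp)

theorem exists_mem {L : List (X × Bool)} (h : IsEssential (FreeGroup.mk L) x) :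
    ∃ p ∈ L, p.1 = x := by
  by_contra! hn
  exact h 1 (by simpa using mk_mem_letterSubgroup hn)

end IsEssential

/-- The length of a shortest word representing a conjugate of `R`. -/
noncomputable def cyclicLength (R : FreeGroup X) : ℕ :=
  sInf {k | ∃ L, L.length = k ∧ IsConj (FreeGroup.mk L) R}

theorem cyclicLength_le {R : FreeGroup X} {L : List (X × Bool)} (h : IsConj (FreeGroup.mk L) R) :
    cyclicLength R ≤ L.length :=
  Nat.sInf_le ⟨L, rfl, h⟩

theorem exists_length_eq_cyclicLength (R : FreeGroup X) :
    ∃ L, IsConj (FreeGroup.mk L) R ∧ L.length = cyclicLength R ∧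
      ∀ p ∈ L, IsEssential (FreeGroup.mk L) p.1 := by
  classical
  obtain ⟨L, hlen, hconj⟩ :
      cyclicLength R ∈ {k | ∃ L, L.length = k ∧ IsConj (FreeGroup.mk L) R} := by
    obtain ⟨L, rfl⟩ := exists_mk_eq R
    exact Nat.sInf_mem ⟨_, L, rfl, IsConj.refl _⟩
  refine ⟨L, hconj, hlen, fun p hp g hg => ?_⟩
  have hret := (letterRetract ({p.1}ᶜ : Set X)).map_isConj (isConj_iff.2 ⟨g, rfl⟩ :
    IsConj (FreeGroup.mk L) (g * FreeGroup.mk L * g⁻¹))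
  rw [letterRetract_of_mem hg, letterRetract_mk] at hret
  refine (cyclicLength_le (hret.trans ((isConj_iff.2 ⟨g, rfl⟩).symm.trans hconj))).not_gt ?_
  rw [← hlen, List.length_filter_lt_length_iff_exists]
  exact ⟨p, hp, by simp⟩

open Classical in
/-- The exponent sum of the letter `x`. -/
noncomputable def exponentSum (x : X) : FreeGroup X →* Multiplicative ℤ :=
  FreeGroup.lift (Pi.mulSingle x (.ofAdd 1))

@[simp]
theorem exponentSum_of_self (x : X) : exponentSum x (FreeGroup.of x) = .ofAdd 1 := by
  simp [exponentSum]

@[simp]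
theorem exponentSum_of_ne {x y : X} (h : y ≠ x) : exponentSum x (FreeGroup.of y) = 1 := by
  simp [exponentSum, h]

theorem exponentSum_eq_of_isConj (x : X) {R R' : FreeGroup X} (h : IsConj R R') :
    exponentSum x R = exponentSum x R' :=
  isConj_iff_eq.1 ((exponentSum x).map_isConj h)

theorem isEssential_of_exponentSum_ne_one {R : FreeGroup X} {x : X} (h : exponentSum x R ≠ 1) :
    IsEssential R x := by
  intro g hg
  refine h ?_
  rw [exponentSum_eq_of_isConj x (isConj_iff.2 ⟨g, rfl⟩ : IsConj R (g * R * g⁻¹))]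
  exact eqOn_letterSubgroup (g := 1) (fun y hy => exponentSum_of_ne hy) hg

end Letters

section Rewriting

variable {X : Type*}

open Classical in
/-- Magnus' rewriting homomorphism for the stable letter `s`: the generator `(x, i)` stands for
the conjugate `sⁱ x s⁻ⁱ`. The superfluous generators `(s, i)` are sent to `1`. -/
noncomputable def unrewrite (s : X) : FreeGroup (X × ℤ) →* FreeGroup X :=
  FreeGroup.lift fun p => if p.1 = s then 1 else
    FreeGroup.of s ^ p.2 * FreeGroup.of p.1 * (FreeGroup.of s ^ p.2)⁻¹

theorem unrewrite_of {s x : X} (h : x ≠ s) (i : ℤ) : unrewrite s (FreeGroup.of (x, i)) =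
    FreeGroup.of s ^ i * FreeGroup.of x * (FreeGroup.of s ^ i)⁻¹ := by
  simp [unrewrite, h]

theorem exponentSum_unrewrite (s : X) (w : FreeGroup (X × ℤ)) :
    exponentSum s (unrewrite s w) = 1 := by
  have : (exponentSum s).comp (unrewrite s) = 1 := by
    ext ⟨x, i⟩
    by_cases hx : x = s <;> simp [unrewrite, hx]
  exact DFunLike.congr_fun this w

open Classical in
/-- The substitution `s ↦ sᵃ`, `x ↦ x s^{m x}`. -/
noncomputable def substHom (s : X) (a : ℤ) (m : X → ℤ) : FreeGroup X →* FreeGroup X :=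
  FreeGroup.lift fun x =>
    if x = s then FreeGroup.of s ^ a else FreeGroup.of x * FreeGroup.of s ^ m x

theorem substHom_of_self (s : X) (a : ℤ) (m : X → ℤ) :
    substHom s a m (FreeGroup.of s) = FreeGroup.of s ^ a := by
  simp [substHom]

theorem substHom_of_ne {s x : X} (h : x ≠ s) (a : ℤ) (m : X → ℤ) :
    substHom s a m (FreeGroup.of x) = FreeGroup.of x * FreeGroup.of s ^ m x := by
  simp [substHom, h]

theorem substHom_one_zero (s : X) : substHom s 1 (fun _ => 0) = MonoidHom.id _ := by
  ext x
  by_cases hx : x = s <;> simp [substHom, hx]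

theorem exists_rewrite [DecidableEq X] (s : X) (a : ℤ) (m : X → ℤ) (L : List (X × Bool)) (i : ℤ) :
    ∃ (M : List ((X × ℤ) × Bool)) (e : ℤ),
      FreeGroup.of s ^ i * substHom s a m (FreeGroup.mk L) =
        unrewrite s (FreeGroup.mk M) * FreeGroup.of s ^ e ∧
      M.map (fun p => p.1.1) = (L.map Prod.fst).filter (· ≠ s) := by
  induction L generalizing i with
  | nil => exact ⟨[], i, by simp [← FreeGroup.one_eq_mk], rfl⟩
  | cons p L ih =>
    obtain ⟨x, c⟩ := p
    by_cases hx : x = s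
    · subst hx
      obtain ⟨M, e, hM, hletters⟩ := ih (i + cond c a (-a))
      refine ⟨M, e, ?_, by simpa using hletters⟩
      rw [← hM, mk_cons, map_mul, ← mul_assoc, zpow_add]
      cases c <;> simp [substHom_of_self]
    · obtain ⟨M, e, hM, hletters⟩ := ih (i + cond c (m x) (-m x))
      refine ⟨((x, cond c i (i - m x)), c) :: M, e, ?_, by simpa [hx] using hletters⟩
      rw [mk_cons, mk_cons, map_mul, map_mul, mul_assoc (unrewrite s _), ← hM]
      cases c <;> simp [substHom_of_ne hx, unrewrite_of hx, zpow_add, zpow_sub, mul_assoc]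

theorem exists_rewrite_of_exponentSum [DecidableEq X] {s : X} {a : ℤ} {m : X → ℤ}
    {L : List (X × Bool)} (h : exponentSum s (substHom s a m (FreeGroup.mk L)) = 1) :
    ∃ M : List ((X × ℤ) × Bool),
      substHom s a m (FreeGroup.mk L) = unrewrite s (FreeGroup.mk M) ∧
      M.map (fun p => p.1.1) = (L.map Prod.fst).filter (· ≠ s) := by
  obtain ⟨M, e, hM, hletters⟩ := exists_rewrite s a m L 0
  rw [zpow_zero, one_mul] at hM
  rw [hM, map_mul, exponentSum_unrewrite, one_mul, map_zpow, exponentSum_of_self,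
    ← ofAdd_zsmul, ofAdd_eq_one, smul_eq_mul, mul_one] at h
  exact ⟨M, by rw [hM, h, zpow_zero, mul_one], hletters⟩

theorem exists_shorter_rewrite {L : List (X × Bool)}
    (hL : L.length = cyclicLength (FreeGroup.mk L)) {s : X} (hs : ∃ p ∈ L, p.1 = s) {a : ℤ}
    {m : X → ℤ} (h : exponentSum s (substHom s a m (FreeGroup.mk L)) = 1) :
    ∃ M : List ((X × ℤ) × Bool),
      IsConj (unrewrite s (FreeGroup.mk M)) (substHom s a m (FreeGroup.mk L)) ∧
      cyclicLength (FreeGroup.mk M) < cyclicLength (FreeGroup.mk L) ∧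
      ∀ p ∈ M, p.1.1 ≠ s ∧ IsEssential (FreeGroup.mk M) p.1 := by
  classical
  obtain ⟨M, hM, hletters⟩ := exists_rewrite_of_exponentSum h
  have hMs (p) (hp : p ∈ M) : p.1.1 ≠ s := by
    have := hletters ▸ List.mem_map_of_mem hp
    simpa using (List.mem_filter.1 this).2
  have hlt : M.length < L.length := by
    have := congrArg List.length hletters
    rw [List.length_map] at this
    rw [this, ← List.length_map (as := L) Prod.fst, List.length_filter_lt_length_iff_exists]
    obtain ⟨p, hp, hps⟩ := hs
    exact ⟨p.1, List.mem_map_of_mem hp, by simpa using hps⟩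
  obtain ⟨M', hconj, hlen, hess⟩ := exists_length_eq_cyclicLength (FreeGroup.mk M)
  refine ⟨M', hM ▸ (unrewrite s).map_isConj hconj, ?_, fun p hp => ⟨?_, hess p hp⟩⟩
  · calc cyclicLength (FreeGroup.mk M') ≤ M'.length := cyclicLength_le (IsConj.refl _)
      _ ≤ M.length := hlen ▸ cyclicLength_le (IsConj.refl _)
      _ < cyclicLength (FreeGroup.mk L) := hL ▸ hlt
  · obtain ⟨q, hq, hqp⟩ := ((hess p hp).of_isConj hconj).exists_mem
    exact hqp ▸ hMs q hq

end Rewriting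

/-! ### Magnus' HNN extensions -/

section HNN

variable {E G K : Type*} [Group E] [Group G] [Group K] {i₁ i₂ : E →* G}
  (h₁ : Injective i₁) (h₂ : Injective i₂)

/-- The HNN extension of `G` whose stable letter `t` satisfies `t * i₁ e * t⁻¹ = i₂ e`. -/
abbrev HNN : Type _ := HNNExtension G i₁.range i₂.range
  ((MonoidHom.ofInjective h₁).symm.trans (MonoidHom.ofInjective h₂))

namespace HNN

theorem ofInjective_symm_trans_apply (e : E) (h : i₁ e ∈ i₁.range) :
    ((MonoidHom.ofInjective h₁).symm.trans (MonoidHom.ofInjective h₂) ⟨i₁ e, h⟩ : G) = i₂ e := by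
  rw [MulEquiv.trans_apply, show (⟨i₁ e, h⟩ : i₁.range) = MonoidHom.ofInjective h₁ e from rfl,
    MulEquiv.symm_apply_apply, MonoidHom.ofInjective_apply]

theorem t_mul_of (e : E) : (HNNExtension.t : HNN h₁ h₂) * HNNExtension.of (i₁ e) =
    HNNExtension.of (i₂ e) * HNNExtension.t := by
  rw [← ofInjective_symm_trans_apply h₁ h₂ e ⟨e, rfl⟩]
  exact HNNExtension.t_mul_of (⟨i₁ e, e, rfl⟩ : i₁.range)

/-- The universal property of `HNN`. -/
noncomputable def lift (f : G →* K) (x : K) (h : ∀ e, x * f (i₁ e) = f (i₂ e) * x) :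
    HNN h₁ h₂ →* K :=
  HNNExtension.lift f x (by
    rintro ⟨_, e, rfl⟩
    rw [ofInjective_symm_trans_apply h₁ h₂ e ⟨e, rfl⟩]
    exact h e)

variable (f : G →* K) (x : K) (h : ∀ e, x * f (i₁ e) = f (i₂ e) * x)

@[simp]
theorem lift_of (g : G) : lift h₁ h₂ f x h (HNNExtension.of g) = f g :=
  HNNExtension.lift_of _ _ _ _

@[simp]
theorem lift_t : lift h₁ h₂ f x h HNNExtension.t = x := HNNExtension.lift_t _ _ _

end HNN

end HNN

/-- The letters other than `x` freely generate a subgroup of `⟨X; r⟩`. -/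
def IsFreeOmitting {X : Type*} (r : FreeGroup X) (x : X) : Prop :=
  ∀ w ∈ letterSubgroup ({x}ᶜ : Set X), w ∈ Subgroup.normalClosure {r} → w = 1

theorem IsFreeOmitting.pow {X : Type*} {r : FreeGroup X} {x : X} (h : IsFreeOmitting r x) (n : ℕ) :
    IsFreeOmitting (r ^ n) x :=
  fun w hw hwr => h w hw (normalClosure_pow_le r n hwr)

section Magnus

variable {X : Type*} {s z : X} {a b : ℤ} {r : FreeGroup (X × ℤ)}

/-- The letters `(x, i)` generating the associated subgroup of the Magnus HNN extension: `i` is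
restricted to `[a, b)` when `x = z`. -/
def edgeLetters (z : X) (a b : ℤ) : Set (X × ℤ) := {p | p.1 = z → a ≤ p.2 ∧ p.2 < b}

/-- The letters `(x, i)` with `x ≠ s` of the base of the Magnus HNN extension: `i` is restricted to
`[a, b]` when `x = z`. -/
def windowLetters (s z : X) (a b : ℤ) : Set (X × ℤ) :=
  {p | p.1 ≠ s ∧ (p.1 = z → a ≤ p.2 ∧ p.2 ≤ b)}

/-- The shift `(x, i) ↦ (x, i + 1)` of letters. -/
def shift : FreeGroup (X × ℤ) →* FreeGroup (X × ℤ) := FreeGroup.map fun p => (p.1, p.2 + 1)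

theorem shift_injective : Injective (shift (X := X)) :=
  FreeGroup.map_injective <| injective_id.prodMap (add_left_injective 1)

@[simp]
theorem shift_of (p : X × ℤ) : shift (FreeGroup.of p) = FreeGroup.of (p.1, p.2 + 1) :=
  FreeGroup.map.of

theorem unrewrite_shift (s : X) (w : FreeGroup (X × ℤ)) :
    unrewrite s (shift w) = FreeGroup.of s * unrewrite s w * (FreeGroup.of s)⁻¹ := by
  have : (unrewrite s).comp shift =
      (MulAut.conj (FreeGroup.of s)).toMonoidHom.comp (unrewrite s) := by
    ext ⟨x, i⟩
    by_cases hx : x = s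
    · simp [unrewrite, hx]
    · simp [unrewrite_of hx, add_comm i, zpow_one_add, mul_assoc]
  exact DFunLike.congr_fun this w

variable (z a b r)

/-- The inclusion of the associated subgroup into the base `⟨X × ℤ; r⟩`. -/
def edgeIncl : letterSubgroup (edgeLetters z a b) →* PresentedGroup {r} :=
  (PresentedGroup.mk {r}).comp (letterSubgroup (edgeLetters z a b)).subtype

/-- The shifted inclusion of the associated subgroup into the base `⟨X × ℤ; r⟩`. -/
def edgeShift : letterSubgroup (edgeLetters z a b) →* PresentedGroup {r} :=
  (PresentedGroup.mk {r}).comp (shift.comp (letterSubgroup (edgeLetters z a b)).subtype)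

variable {z a b r}

theorem edgeIncl_injective (h : IsFreeOmitting r (z, b)) : Injective (edgeIncl z a b r) := by
  rw [injective_iff_map_eq_one]
  rintro ⟨w, hw⟩ hw1
  refine Subtype.ext (h w (letterSubgroup_mono ?_ hw) (PresentedGroup.mk_eq_one_iff.1 hw1))
  rintro p hp rfl
  exact (hp rfl).2.ne rfl

theorem edgeShift_injective (h : IsFreeOmitting r (z, a)) : Injective (edgeShift z a b r) := by
  rw [injective_iff_map_eq_one]
  rintro ⟨w, hw⟩ hw1
  refine Subtype.ext (shift_injective ((h _ ?_ (PresentedGroup.mk_eq_one_iff.1 hw1)).trans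
    (map_one shift).symm))
  refine map_mem_letterSubgroup shift (fun p hp => ?_) hw
  rw [shift_of]
  refine of_mem_letterSubgroup fun heq => ?_
  obtain ⟨hz, ha⟩ := Prod.ext_iff.1 (show (p.1, p.2 + 1) = (z, a) from heq)
  exact ((hp hz).1.trans_lt (lt_add_one p.2)).ne' ha

variable (h₁ : Injective (edgeIncl z a b r)) (h₂ : Injective (edgeShift z a b r))

/-- The base generator `(x, i)` inside the Magnus HNN extension. -/
noncomputable def baseGen (p : X × ℤ) : HNN h₁ h₂ :=
  HNNExtension.of (PresentedGroup.mk _ (FreeGroup.of p))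

theorem t_conj_baseGen {p : X × ℤ} (hp : p ∈ edgeLetters z a b) :
    HNNExtension.t * baseGen h₁ h₂ p * HNNExtension.t⁻¹ = baseGen h₁ h₂ (p.1, p.2 + 1) := by
  have hshift : edgeShift z a b r ⟨FreeGroup.of p, of_mem_letterSubgroup hp⟩ =
      PresentedGroup.mk _ (FreeGroup.of (p.1, p.2 + 1)) := congrArg _ (shift_of p)
  rw [mul_inv_eq_iff_eq_mul, baseGen, baseGen, ← hshift]
  exact HNN.t_mul_of h₁ h₂ ⟨FreeGroup.of p, of_mem_letterSubgroup hp⟩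

theorem t_pow_conj_baseGen {x : X} {i : ℤ} (k : ℕ) (h : x = z → a ≤ i ∧ i + k ≤ b) :
    HNNExtension.t ^ k * baseGen h₁ h₂ (x, i) * (HNNExtension.t ^ k)⁻¹ =
      baseGen h₁ h₂ (x, i + k) := by
  induction k with
  | zero => simp
  | succ k ih =>
    push_cast at h
    rw [pow_succ', mul_inv_rev, mul_assoc, mul_assoc, ← mul_assoc (_ ^ k), ← mul_assoc,
      ← mul_assoc, mul_assoc HNNExtension.t, ih fun hx => by have := h hx; omega,
      t_conj_baseGen h₁ h₂ fun hx => by have := h hx; simp only; omega]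
    simp [add_assoc]

theorem t_zpow_conj_baseGen {x : X} {i : ℤ} (h : x = z → a ≤ i ∧ i ≤ b) :
    HNNExtension.t ^ (i - a) * baseGen h₁ h₂ (x, a) * (HNNExtension.t ^ (i - a))⁻¹ =
      baseGen h₁ h₂ (x, i) := by
  rcases le_or_gt a i with hi | hi
  · obtain ⟨k, rfl⟩ := Int.le.dest hi
    simpa using t_pow_conj_baseGen h₁ h₂ k fun hx => ⟨le_rfl, (h hx).2⟩
  · obtain ⟨k, rfl⟩ := Int.le.dest hi.le
    rw [← t_pow_conj_baseGen h₁ h₂ k fun hx => absurd (h hx).1 hi.not_ge]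
    simp [mul_assoc]

open Classical in
/-- The map to the Magnus HNN extension sending `s` to the stable letter and every other `x` to a
conjugate of the base generator `(x, a)`. -/
noncomputable def freeToMagnus (s : X) : FreeGroup X →* HNN h₁ h₂ :=
  FreeGroup.lift fun x => if x = s then HNNExtension.t else
    (HNNExtension.t ^ a)⁻¹ * baseGen h₁ h₂ (x, a) * HNNExtension.t ^ a

theorem freeToMagnus_unrewrite {w : FreeGroup (X × ℤ)}
    (hw : w ∈ letterSubgroup (windowLetters s z a b)) :
    freeToMagnus h₁ h₂ s (unrewrite s w) = HNNExtension.of (PresentedGroup.mk _ w) := by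
  refine eqOn_letterSubgroup (f := (freeToMagnus h₁ h₂ s).comp (unrewrite s))
    (g := HNNExtension.of.comp (PresentedGroup.mk _)) ?_ hw
  rintro ⟨x, i⟩ ⟨hx, hi⟩
  refine .trans ?_ (t_zpow_conj_baseGen h₁ h₂ hi)
  rw [MonoidHom.comp_apply, unrewrite_of hx]
  simp [freeToMagnus, hx, zpow_sub, mul_assoc]

/-- Magnus' embedding of `⟨X; unrewrite s r⟩` into an HNN extension of `⟨X × ℤ; r⟩`. -/
noncomputable def toMagnus (hr : r ∈ letterSubgroup (windowLetters s z a b)) :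
    PresentedGroup {unrewrite s r} →* HNN h₁ h₂ :=
  oneRelatorLift (freeToMagnus h₁ h₂ s) <| by
    rw [freeToMagnus_unrewrite h₁ h₂ hr, mk_relator, map_one]

@[simp]
theorem toMagnus_mk (hr : r ∈ letterSubgroup (windowLetters s z a b)) (w : FreeGroup X) :
    toMagnus h₁ h₂ hr (PresentedGroup.mk _ w) = freeToMagnus h₁ h₂ s w := rfl

/-- The left inverse of `toMagnus`, sending the stable letter to `s`. -/
noncomputable def ofMagnus (s : X) : HNN h₁ h₂ →* PresentedGroup {unrewrite s r} :=
  HNN.lift h₁ h₂ (oneRelatorLift ((PresentedGroup.mk _).comp (unrewrite s)) mk_relator)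
    (PresentedGroup.mk _ (FreeGroup.of s)) (by
      rintro ⟨w, hw⟩
      simp [edgeIncl, edgeShift, unrewrite_shift])

@[simp]
theorem ofMagnus_of_mk (w : FreeGroup (X × ℤ)) :
    ofMagnus h₁ h₂ s (HNNExtension.of (PresentedGroup.mk _ w)) =
      PresentedGroup.mk _ (unrewrite s w) :=
  HNN.lift_of _ _ _ _ _ _

theorem ofMagnus_toMagnus (hr : r ∈ letterSubgroup (windowLetters s z a b))
    (g : PresentedGroup {unrewrite s r}) : ofMagnus h₁ h₂ s (toMagnus h₁ h₂ hr g) = g := by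
  obtain ⟨w, rfl⟩ := PresentedGroup.mk_surjective _ g
  have : (ofMagnus h₁ h₂ s).comp (freeToMagnus h₁ h₂ s) = PresentedGroup.mk _ := by
    ext x
    by_cases hx : x = s
    · simp [ofMagnus, freeToMagnus, hx]
    · simp [ofMagnus, freeToMagnus, baseGen, hx, unrewrite_of hx, mul_assoc]
  exact DFunLike.congr_fun this w

theorem toMagnus_injective (hr : r ∈ letterSubgroup (windowLetters s z a b)) :
    Injective (toMagnus h₁ h₂ hr) :=
  LeftInverse.injective (ofMagnus_toMagnus h₁ h₂ hr)

end Magnus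

section RootAdjunction

theorem not_isOfFinOrder_of_zpow {Z : Type*} (z : Z) {k : ℤ} (hk : k ≠ 0) :
    ¬IsOfFinOrder (FreeGroup.of z ^ k) := fun h =>
  FreeGroup.of_ne_one z <|
    (IsMulTorsionFree.zpow_eq_one_iff_left hk).1 (torsionFree_freeGroup Z _ h)

variable {G : Type u} [Group G] (g : G) (a : ℤ)

/-- The elements `g` of `G` and `tᵃ` of `⟨t⟩` that are identified in `RootExt g a`. -/
def rootGlue : ∀ b, pair G (FreeGroup PUnit.{u + 1}) b
  | ⟨true⟩ => g
  | ⟨false⟩ => (FreeGroup.of PUnit.unit ^ a : FreeGroup PUnit.{u + 1})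

/-- The group obtained from `G` by adjoining an `a`-th root `t` of `g`, as the amalgamated product
of `G` and `⟨t⟩` along `g = tᵃ`. -/
abbrev RootExt : Type u := PushoutI fun b => zpowersHom _ (rootGlue g a b)

namespace RootExt

/-- The inclusion of `G`. -/
def of : G →* RootExt g a :=
  PushoutI.of (φ := fun b => zpowersHom _ (rootGlue g a b)) ⟨true⟩

/-- The inclusion of `⟨t⟩`. -/
def ofRoot : FreeGroup PUnit.{u + 1} →* RootExt g a :=
  PushoutI.of (φ := fun b => zpowersHom _ (rootGlue g a b)) ⟨false⟩

/-- The adjoined root. -/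
def root : RootExt g a := ofRoot g a (FreeGroup.of PUnit.unit)

theorem root_zpow : root g a ^ a = of g a g := by
  have h (b) : PushoutI.of (φ := fun b => zpowersHom _ (rootGlue g a b)) b (rootGlue g a b) =
      PushoutI.base _ (.ofAdd 1) := by
    rw [← PushoutI.of_apply_eq_base _ b, zpowersHom_apply, toAdd_ofAdd, zpow_one]
  exact (map_zpow (ofRoot g a) _ a).symm.trans ((h ⟨false⟩).trans (h ⟨true⟩).symm)

variable {g a}

theorem zpowersHom_rootGlue_injective (hg : ¬IsOfFinOrder g) (ha : a ≠ 0) (b) :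
    Injective (zpowersHom _ (rootGlue g a b)) := by
  have hb : ∀ b, ¬IsOfFinOrder (rootGlue g a b)
    | ⟨true⟩ => hg
    | ⟨false⟩ => not_isOfFinOrder_of_zpow _ ha
  exact fun k l h => Multiplicative.toAdd.injective (injective_zpow_iff_not_isOfFinOrder.2 (hb b) h)

theorem of_injective (hg : ¬IsOfFinOrder g) (ha : a ≠ 0) : Injective (of g a) :=
  PushoutI.of_injective (zpowersHom_rootGlue_injective hg ha) ⟨true⟩

theorem mem_range_of_conj (hg : ¬IsOfFinOrder g) (ha : a ≠ 0) {x x' : G} {p : RootExt g a}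
    (hx : IsOfFinOrder x) (hx1 : x ≠ 1) (h : p * of g a x * p⁻¹ = of g a x') :
    p ∈ (of g a).range :=
  (conj_of_eq_of_isOfFinOrder (zpowersHom_rootGlue_injective hg ha)
    (fun _ => (isOfFinOrder_iff_eq_one _).1) (i := ⟨true⟩) (j := ⟨true⟩) hx hx1 h).2

open Classical in
/-- Over `RootExt`, a homomorphism `π` out of a free group extends along `substHom`. -/
noncomputable def extendSubst {X : Type*} (π : FreeGroup X →* G) (y : X) (a : ℤ) (m : X → ℤ) :
    FreeGroup X →* RootExt (π (FreeGroup.of y)) a :=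
  FreeGroup.lift fun x =>
    if x = y then root _ a else of _ a (π (FreeGroup.of x)) * root _ a ^ (-m x)

theorem extendSubst_substHom {X : Type*} (π : FreeGroup X →* G) (y : X) (a : ℤ) (m : X → ℤ)
    (w : FreeGroup X) : extendSubst π y a m (substHom y a m w) = of _ a (π w) := by
  have : (extendSubst π y a m).comp (substHom y a m) = (of _ a).comp π := by
    ext x
    by_cases hx : x = y
    · simp [extendSubst, hx, substHom_of_self, root_zpow]
    · simp [extendSubst, hx, substHom_of_ne]
  exact DFunLike.congr_fun this w

end RootExt

theorem substHom_injective {X : Type u} (y : X) {a : ℤ} (ha : a ≠ 0) (m : X → ℤ) :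
    Injective (substHom y a m) := by
  have hy : ¬IsOfFinOrder (MonoidHom.id _ (FreeGroup.of y)) := by
    simpa using not_isOfFinOrder_of_zpow y one_ne_zero
  intro v w h
  refine RootExt.of_injective hy ha ?_
  rw [← MonoidHom.id_apply _ v, ← MonoidHom.id_apply _ w, ← RootExt.extendSubst_substHom _ y a m,
    h, RootExt.extendSubst_substHom]

end RootAdjunction

/-! ### The Freiheitssatz -/

section MagnusInduction

variable {X : Type*}

/-- The substitution `y ↦ yᵃ`, `x ↦ x y⁻ᵇ`, where `a` and `b` are the exponent sums of `x` and `y`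
in `R`; it makes the exponent sum of `y` in `R` vanish. -/
noncomputable def balanceHom (x y : X) (R : FreeGroup X) : FreeGroup X →* FreeGroup X :=
  substHom y (exponentSum x R).toAdd fun z => open Classical in
    if z = x then -(exponentSum y R).toAdd else 0

variable {x y : X}

theorem balanceHom_injective {X : Type u} {x y : X} {R : FreeGroup X}
    (hR : exponentSum x R ≠ 1) : Injective (balanceHom x y R) :=
  substHom_injective y (toAdd_eq_zero.not.2 hR) _

theorem exponentSum_balanceHom_left (hxy : x ≠ y) (R w : FreeGroup X) :
    exponentSum x (balanceHom x y R w) = exponentSum x w := by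
  have : (exponentSum x).comp (balanceHom x y R) = exponentSum x := by
    ext z
    by_cases hz : z = y
    · subst hz
      simp [balanceHom, substHom_of_self, exponentSum_of_ne hxy.symm]
    · rcases eq_or_ne z x with rfl | hzx
      · simp [balanceHom, substHom_of_ne hz, exponentSum_of_ne hxy.symm]
      · simp [balanceHom, substHom_of_ne hz, hzx]
  exact DFunLike.congr_fun this w

theorem exponentSum_balanceHom_right (hxy : x ≠ y) (R : FreeGroup X) :
    exponentSum y (balanceHom x y R R) = 1 := by
  have : (exponentSum y).comp (balanceHom x y R) =
      (zpowGroupHom (exponentSum x R).toAdd).comp (exponentSum y) *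
        (zpowGroupHom (-(exponentSum y R).toAdd)).comp (exponentSum x) := by
    ext z
    by_cases hz : z = y
    · subst hz
      simp [balanceHom, substHom_of_self, exponentSum_of_ne hxy.symm]
    · by_cases hzx : z = x
      · subst hzx
        simp [balanceHom, substHom_of_ne hz, exponentSum_of_ne hz]
      · simp [balanceHom, substHom_of_ne hz, hzx, exponentSum_of_ne hz, exponentSum_of_ne hzx]
  refine (DFunLike.congr_fun this R).trans (Multiplicative.toAdd.injective ?_)
  simp [mul_comm]

theorem cyclicLength_eq_of_isConj {R R' : FreeGroup X} (h : IsConj R R') :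
    cyclicLength R = cyclicLength R' := by
  have (L : List (X × Bool)) : IsConj (FreeGroup.mk L) R ↔ IsConj (FreeGroup.mk L) R' :=
    ⟨fun hL => hL.trans h, fun hL => hL.trans h.symm⟩
  simp only [cyclicLength, this]

theorem exists_isEssential {R : FreeGroup X} (hR : R ≠ 1) : ∃ x, IsEssential R x := by
  obtain ⟨L, hconj, -, hess⟩ := exists_length_eq_cyclicLength R
  obtain _ | ⟨p, L⟩ := L
  · exact absurd (isConj_one_right.1 hconj) hR
  · exact ⟨p.1, (hess p (List.mem_cons_self ..)).of_isConj hconj⟩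

theorem exists_zpow_eq_mk {L : List (X × Bool)} (h : ∀ p ∈ L, p.1 = x) :
    ∃ k : ℤ, FreeGroup.of x ^ k = FreeGroup.mk L :=
  (letterSubgroup_le (S := {x}) (K := Subgroup.zpowers _)).2
    (fun _ hz => hz ▸ Subgroup.mem_zpowers _) (mk_mem_letterSubgroup h)

/-- By induction on the cyclic length of `R`: if `x` has exponent sum zero in `R`, then rewriting
with stable letter `x` shortens `R`; otherwise either `R` is conjugate to a power of `x` or another
letter can be made to have exponent sum zero. -/
theorem magnus_induction {P : ∀ {X : Type u}, FreeGroup X → X → Prop}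
    (conj : ∀ {X : Type u} {R R' : FreeGroup X} {x : X}, IsConj R R' → P R x → P R' x)
    (zpow : ∀ {X : Type u} (x : X) {k : ℤ}, k ≠ 0 → P (FreeGroup.of x ^ k) x)
    (unrewrite : ∀ {X : Type u} {s : X} {L : List ((X × ℤ) × Bool)},
      (∀ p ∈ L, p.1.1 ≠ s ∧ IsEssential (FreeGroup.mk L) p.1) →
      (∀ p, IsEssential (FreeGroup.mk L) p → P (FreeGroup.mk L) p) →
      ∀ {x}, IsEssential (unrewrite s (FreeGroup.mk L)) x → P (unrewrite s (FreeGroup.mk L)) x)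
    (balance : ∀ {X : Type u} {R : FreeGroup X} {x y : X}, x ≠ y → exponentSum x R ≠ 1 →
      P (balanceHom x y R R) x → P R x)
    {X : Type u} {R : FreeGroup X} {x : X} (hx : IsEssential R x) : P R x := by
  induction hN : cyclicLength R using Nat.strong_induction_on generalizing X R x with
  | _ N ih =>
  obtain ⟨L, hconj, hlen, -⟩ := exists_length_eq_cyclicLength R
  rw [← cyclicLength_eq_of_isConj hconj] at hlen hN
  replace hx := hx.of_isConj hconj.symm
  refine conj hconj ?_
  have rewriteStep {s : X} (hs : ∃ p ∈ L, p.1 = s) {a : ℤ} {m : X → ℤ}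
      (h : exponentSum s (substHom s a m (FreeGroup.mk L)) = 1)
      (hx' : IsEssential (substHom s a m (FreeGroup.mk L)) x) :
      P (substHom s a m (FreeGroup.mk L)) x := by
    obtain ⟨M, hM, hlt, hess⟩ := exists_shorter_rewrite hlen hs h
    exact conj hM (unrewrite hess (fun p hp => ih _ (hN ▸ hlt) hp rfl) (hx'.of_isConj hM.symm))
  by_cases hsum : exponentSum x (FreeGroup.mk L) = 1
  · simpa [substHom_one_zero] using rewriteStep hx.exists_mem (a := 1) (m := fun _ => 0)
      (by simpa [substHom_one_zero] using hsum) (by simpa [substHom_one_zero] using hx)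
  · by_cases hy : ∃ p ∈ L, p.1 ≠ x
    · obtain ⟨⟨y, c⟩, hp, hyx⟩ := hy
      refine balance (Ne.symm hyx) hsum (rewriteStep ⟨_, hp, rfl⟩ ?_ ?_)
      · exact exponentSum_balanceHom_right (Ne.symm hyx) _
      · refine isEssential_of_exponentSum_ne_one ?_
        rwa [← balanceHom, exponentSum_balanceHom_left (Ne.symm hyx)]
    · push Not at hy
      obtain ⟨k, hk⟩ := exists_zpow_eq_mk hy
      rw [← hk] at hx ⊢
      refine zpow x ?_
      rintro rfl
      exact hx.ne_one (zpow_zero _)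

end MagnusInduction

section Freiheitssatz

variable {X : Type*} {s x y z : X} {a b : ℤ} {r : FreeGroup (X × ℤ)}
  {L : List ((X × ℤ) × Bool)}

theorem exists_mem_letterSubgroup_windowLetters (hs : ∀ p ∈ L, p.1.1 ≠ s)
    (hz : ∃ p ∈ L, p.1.1 = z) :
    ∃ a b, a ≤ b ∧ (∃ p ∈ L, p.1 = (z, a)) ∧ (∃ p ∈ L, p.1 = (z, b)) ∧
      FreeGroup.mk L ∈ letterSubgroup (windowLetters s z a b) := by
  let I : Set ℤ := {i | ∃ p ∈ L, p.1 = (z, i)}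
  have hI : I.Finite := (L.finite_toSet.image fun p => p.1.2).subset
    fun i ⟨p, hp, hpi⟩ => ⟨p, hp, congrArg Prod.snd hpi⟩
  have hne : I.Nonempty := by
    obtain ⟨p, hp, hpz⟩ := hz
    exact ⟨p.1.2, p, hp, Prod.ext hpz rfl⟩
  obtain ⟨a, ha, hmin⟩ := Set.exists_min_image I id hI hne
  obtain ⟨b, hb, hmax⟩ := Set.exists_max_image I id hI hne
  refine ⟨a, b, hmin b hb, ha, hb, mk_mem_letterSubgroup fun p hp => ⟨hs p hp, fun hpz => ?_⟩⟩
  have : p.1.2 ∈ I := ⟨p, hp, Prod.ext hpz rfl⟩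
  exact ⟨hmin _ this, hmax _ this⟩

theorem mem_normalClosure_of_unrewrite_mem (ha : IsFreeOmitting r (z, a))
    (hb : IsFreeOmitting r (z, b)) (hr : r ∈ letterSubgroup (windowLetters s z a b))
    {w : FreeGroup (X × ℤ)} (hw : w ∈ letterSubgroup (windowLetters s z a b))
    (h : unrewrite s w ∈ Subgroup.normalClosure {unrewrite s r}) :
    w ∈ Subgroup.normalClosure {r} := by
  have h₁ := edgeIncl_injective (a := a) hb
  have h₂ := edgeShift_injective (b := b) ha
  refine PresentedGroup.mk_eq_one_iff.1 (HNNExtension.of_injective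
    ((MonoidHom.ofInjective h₁).symm.trans (MonoidHom.ofInjective h₂)) ?_)
  rw [← freeToMagnus_unrewrite h₁ h₂ hw, ← toMagnus_mk h₁ h₂ hr,
    PresentedGroup.mk_eq_one_iff.2 h, map_one, map_one]

theorem exists_mem_of_isEssential_unrewrite (hxs : x ≠ s) (hs : ∀ p ∈ L, p.1.1 ≠ s)
    (hx : IsEssential (unrewrite s (FreeGroup.mk L)) x) : ∃ p ∈ L, p.1.1 = x := by
  by_contra! hn
  refine hx 1 ?_
  rw [one_mul, inv_one, mul_one]
  refine map_mem_letterSubgroup (unrewrite s) (S := {p | p.1 ≠ x ∧ p.1 ≠ s}) ?_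
    (mk_mem_letterSubgroup fun p hp => ⟨hn p hp, hs p hp⟩)
  rintro ⟨z, i⟩ ⟨hzx, hzs⟩
  have hs : FreeGroup.of s ^ i ∈ letterSubgroup ({x}ᶜ : Set X) :=
    zpow_mem (of_mem_letterSubgroup hxs.symm) i
  rw [unrewrite_of hzs]
  exact mul_mem (mul_mem hs (of_mem_letterSubgroup hzx)) (inv_mem hs)

theorem isFreeOmitting_zpow (x : X) (k : ℤ) : IsFreeOmitting (FreeGroup.of x ^ k) x := by
  intro w hw hwr
  rw [← letterRetract_of_mem hw]
  exact map_eq_one_of_mem_normalClosure _ (by simp [letterRetract]) hwr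

theorem IsFreeOmitting.of_isConj {r r' : FreeGroup X} (h : IsFreeOmitting r x)
    (hr : IsConj r r') : IsFreeOmitting r' x := by
  rwa [IsFreeOmitting, ← normalClosure_singleton_eq_of_isConj hr]

theorem isFreeOmitting_of_balanceHom {X : Type u} {x y : X} {r : FreeGroup X} (hxy : x ≠ y)
    (hr : exponentSum x r ≠ 1) (h : IsFreeOmitting (balanceHom x y r r) x) :
    IsFreeOmitting r x := by
  intro w hw hwr
  refine balanceHom_injective (y := y) hr ((h _ ?_ ?_).trans (map_one _).symm)
  · refine map_mem_letterSubgroup _ (fun z hz => ?_) hw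
    have hy := zpow_mem (of_mem_letterSubgroup (S := {x}ᶜ) hxy.symm)
    by_cases hzy : z = y
    · rw [hzy, balanceHom, substHom_of_self]
      exact hy _
    · rw [balanceHom, substHom_of_ne hzy]
      exact mul_mem (of_mem_letterSubgroup hz) (hy _)
  · exact map_mem_normalClosure (balanceHom x y r) hwr

theorem isFreeOmitting_unrewrite_of_ne (hxs : x ≠ s)
    (hL : ∀ p ∈ L, p.1.1 ≠ s ∧ IsFreeOmitting (FreeGroup.mk L) p.1)
    (hx : IsEssential (unrewrite s (FreeGroup.mk L)) x) :
    IsFreeOmitting (unrewrite s (FreeGroup.mk L)) x := by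
  classical
  intro w hw hwr
  obtain ⟨a, b, -, ⟨p, hp, hpa⟩, ⟨q, hq, hqb⟩, hwin⟩ := exists_mem_letterSubgroup_windowLetters
    (fun p hp => (hL p hp).1)
    (exists_mem_of_isEssential_unrewrite hxs (fun p hp => (hL p hp).1) hx)
  have ha := hpa ▸ (hL p hp).2
  have hb := hqb ▸ (hL q hq).2
  obtain ⟨Lw, rfl, hLw⟩ := exists_mk_eq_of_mem hw
  have hsum : exponentSum s (FreeGroup.mk Lw) = 1 :=
    map_eq_one_of_mem_normalClosure _ (exponentSum_unrewrite s _) hwr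
  obtain ⟨M, hM, hletters⟩ := exists_rewrite_of_exponentSum (s := s) (a := 1) (m := fun _ => 0)
    (L := Lw) (by rwa [substHom_one_zero])
  rw [substHom_one_zero, MonoidHom.id_apply] at hM
  have hMletters (q) (hq : q ∈ M) : q.1.1 ≠ x ∧ q.1.1 ≠ s := by
    have hmem := List.mem_filter.1 (hletters ▸ List.mem_map_of_mem hq)
    obtain ⟨p, hp, hpq⟩ := List.mem_map.1 hmem.1
    exact ⟨hpq ▸ hLw p hp, by simpa using hmem.2⟩
  rw [hM] at hwr ⊢
  rw [ha (FreeGroup.mk M) ?_ (mem_normalClosure_of_unrewrite_mem ha hb hwin ?_ hwr), map_one]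
  · exact mk_mem_letterSubgroup fun q hq h => (hMletters q hq).1 (congrArg Prod.fst h)
  · exact mk_mem_letterSubgroup fun q hq =>
      ⟨(hMletters q hq).2, fun h => absurd h (hMletters q hq).1⟩

theorem unrewrite_map_mk (a : ℤ) {w : FreeGroup X} (hw : w ∈ letterSubgroup ({s}ᶜ : Set X)) :
    unrewrite s (FreeGroup.map (fun z => (z, a)) w) =
      FreeGroup.of s ^ a * w * (FreeGroup.of s ^ a)⁻¹ :=
  eqOn_letterSubgroup (f := (unrewrite s).comp (FreeGroup.map fun z => (z, a)))
    (g := (MulAut.conj (FreeGroup.of s ^ a)).toMonoidHom)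
    (fun _ hz => (congrArg _ FreeGroup.map.of).trans (unrewrite_of hz a)) hw

theorem exists_index_ne_of_isEssential_unrewrite (hs : ∀ p ∈ L, p.1.1 ≠ s)
    (hx : IsEssential (unrewrite s (FreeGroup.mk L)) s) (a : ℤ) : ∃ p ∈ L, p.1.2 ≠ a := by
  by_contra! hn
  refine hx (FreeGroup.of s ^ a)⁻¹ ?_
  refine (letterSubgroup_le (S := {p | p.1 ≠ s ∧ p.2 = a}) (K := (letterSubgroup {s}ᶜ).comap
    ((MulAut.conj (FreeGroup.of s ^ a)⁻¹).toMonoidHom.comp (unrewrite s)))).2 ?_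
    (mk_mem_letterSubgroup fun p hp => ⟨hs p hp, hn p hp⟩)
  rintro ⟨z, _⟩ ⟨hz, rfl⟩
  rw [Subgroup.mem_comap, MonoidHom.comp_apply, unrewrite_of hz]
  change (FreeGroup.of s ^ _)⁻¹ * _ * (FreeGroup.of s ^ _)⁻¹⁻¹ ∈ _
  simpa [mul_assoc] using of_mem_letterSubgroup (S := {s}ᶜ) hz

theorem isFreeOmitting_unrewrite_self
    (hL : ∀ p ∈ L, p.1.1 ≠ s ∧ IsFreeOmitting (FreeGroup.mk L) p.1)
    (hx : IsEssential (unrewrite s (FreeGroup.mk L)) s) :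
    IsFreeOmitting (unrewrite s (FreeGroup.mk L)) s := by
  intro w hw hwr
  have hs (p) (hp : p ∈ L) := (hL p hp).1
  obtain ⟨p₀, hp₀, -⟩ := exists_index_ne_of_isEssential_unrewrite hs hx 0
  obtain ⟨a, b, hab, ⟨p, hp, hpa⟩, ⟨q, hq, hqb⟩, hwin⟩ :=
    exists_mem_letterSubgroup_windowLetters hs ⟨p₀, hp₀, rfl⟩
  obtain ⟨p₁, hp₁, hp₁a⟩ := exists_index_ne_of_isEssential_unrewrite hs hx a
  have hinj : Injective fun z : X => (z, a) := fun z z' h => congrArg Prod.fst h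
  refine FreeGroup.map_injective hinj (((hL p₁ hp₁).2 _ ?_
    (mem_normalClosure_of_unrewrite_mem (hpa ▸ (hL p hp).2) (hqb ▸ (hL q hq).2) hwin ?_ ?_)).trans
    (map_one _).symm)
  · refine map_mem_letterSubgroup _ (fun z _ => ?_) hw
    rw [FreeGroup.map.of]
    exact of_mem_letterSubgroup fun h => hp₁a (congrArg Prod.snd h).symm
  · refine map_mem_letterSubgroup _ (fun z hz => ?_) hw
    rw [FreeGroup.map.of]
    exact of_mem_letterSubgroup ⟨hz, fun _ => ⟨le_rfl, hab⟩⟩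
  · rw [unrewrite_map_mk a hw]
    exact Subgroup.normalClosure_normal.conj_mem _ hwr _

theorem freiheitssatz {X : Type u} {r : FreeGroup X} {x : X} (hx : IsEssential r x) :
    IsFreeOmitting r x := by
  refine magnus_induction (P := IsFreeOmitting) (fun hr h => h.of_isConj hr)
    (fun x k _ => isFreeOmitting_zpow x k) (fun {X s L} hL ih x hx => ?_)
    isFreeOmitting_of_balanceHom hx
  have hL' (p) (hp : p ∈ L) : p.1.1 ≠ s ∧ IsFreeOmitting (FreeGroup.mk L) p.1 :=
    ⟨(hL p hp).1, ih _ (hL p hp).2⟩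
  rcases eq_or_ne x s with rfl | hxs
  · exact isFreeOmitting_unrewrite_self hL' hx
  · exact isFreeOmitting_unrewrite_of_ne hxs hL' hx

end Freiheitssatz

/-! ### Kernels of maps of HNN extensions -/

section Transversal

variable {K H : Type*} [Group K] [Group H] {f : K →* H} (hf : Injective f)

variable (f) in
/-- The chosen representative of the right coset of the range of `f` containing `q`. -/
noncomputable def cosetRep (q : H) : H :=
  ((f.range.exists_isComplement_right 1).choose_spec.1.equiv q).2

/-- The element of `K` carrying the representative of the coset of `q` to `q`. -/
noncomputable def cosetHead (q : H) : K :=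
  (MonoidHom.ofInjective hf).symm
    ((f.range.exists_isComplement_right 1).choose_spec.1.equiv q).1

theorem map_cosetHead_mul_cosetRep (q : H) : f (cosetHead hf q) * cosetRep f q = q := by
  rw [cosetHead, MonoidHom.apply_ofInjective_symm]
  exact Subgroup.IsComplement.equiv_fst_mul_equiv_snd _ q

theorem cosetRep_map_mul (k : K) (q : H) : cosetRep f (f k * q) = cosetRep f q := by
  rw [cosetRep, Subgroup.IsComplement.equiv_mul_left_of_mem _ (MonoidHom.mem_range.2 ⟨k, rfl⟩),
    cosetRep]

theorem cosetHead_map_mul (k : K) (q : H) : cosetHead hf (f k * q) = k * cosetHead hf q := by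
  rw [cosetHead, Subgroup.IsComplement.equiv_mul_left_of_mem _ (MonoidHom.mem_range.2 ⟨k, rfl⟩),
    map_mul, cosetHead]
  exact congrArg (· * _) ((MonoidHom.ofInjective hf).symm_apply_apply k)

end Transversal

section HNNMap

variable {E : Type*} {G Q : Type u} [Group E] [Group G] [Group Q] {i₁ i₂ : E →* G}
  (h₁ : Injective i₁) (h₂ : Injective i₂) {p : G →* Q}
  (k₁ : Injective (p.comp i₁)) (k₂ : Injective (p.comp i₂))

/-- The homomorphism of HNN extensions induced by a homomorphism of the base groups which is
injective on the associated subgroups. -/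
noncomputable def HNN.map : HNN h₁ h₂ →* HNN k₁ k₂ :=
  HNN.lift h₁ h₂ (HNNExtension.of.comp p) HNNExtension.t (HNN.t_mul_of k₁ k₂)

@[simp]
theorem HNN.map_of (g : G) :
    HNN.map h₁ h₂ k₁ k₂ (HNNExtension.of g) = HNNExtension.of (p g) := by
  simp [HNN.map]

@[simp]
theorem HNN.map_t : HNN.map h₁ h₂ k₁ k₂ HNNExtension.t = HNNExtension.t := by
  simp [HNN.map]

theorem HNN.map_surjective (hp : Surjective p) : Surjective (HNN.map h₁ h₂ k₁ k₂) := by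
  rw [← MonoidHom.range_eq_top, eq_top_iff]
  rintro x -
  induction x using HNNExtension.induction_on with
  | of g =>
    obtain ⟨g, rfl⟩ := hp g
    exact ⟨HNNExtension.of g, map_of h₁ h₂ k₁ k₂ g⟩
  | t => exact ⟨_, map_t h₁ h₂ k₁ k₂⟩
  | mul a b ha hb => exact mul_mem ha hb
  | inv a ha => exact inv_mem ha

namespace HNNKernel

variable (hp : Surjective p)

/-- The free product of conjugates of `p.ker`, one for each element of the target of `HNN.map`, and
of a free group. The kernel of `HNN.map` will be embedded in it. -/
abbrev Model : Type _ :=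
  Coprod (CoprodI fun _ : HNN k₁ k₂ => p.ker) (FreeGroup (HNN k₁ k₂))

/-- The representative in the base group of the coset of the base group containing `ω`. -/
noncomputable abbrev vertexRep (ω : HNN k₁ k₂) : HNN k₁ k₂ :=
  cosetRep (HNNExtension.of : Q →* HNN k₁ k₂) ω

/-- The element of the base group carrying `vertexRep ω` to `ω`. -/
noncomputable abbrev vertexHead (ω : HNN k₁ k₂) : Q :=
  cosetHead (f := (HNNExtension.of : Q →* HNN k₁ k₂)) (HNNExtension.of_injective _) ω

/-- A set-theoretic section of `HNN.map`, compatible with a section of `p` on the base group. -/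
noncomputable def lifting (ω : HNN k₁ k₂) : HNN h₁ h₂ :=
  HNNExtension.of (surjInv hp (vertexHead k₁ k₂ ω)) *
    surjInv (HNN.map_surjective h₁ h₂ k₁ k₂ hp) (vertexRep k₁ k₂ ω)

/-- The contribution to the model of a base element `g` acting at `ω`. -/
noncomputable def vertexLoop (g : G) (ω : HNN k₁ k₂) : Model k₁ k₂ :=
  Coprod.inl (CoprodI.of (i := vertexRep k₁ k₂ ω)
    ⟨(surjInv hp (vertexHead k₁ k₂ ω))⁻¹ * g * surjInv hp ((p g)⁻¹ * vertexHead k₁ k₂ ω), by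
      rw [MonoidHom.mem_ker, map_mul, map_mul, map_inv, surjInv_eq hp, surjInv_eq hp]
      group⟩)

theorem vertexLoop_mul (g g' : G) (ω : HNN k₁ k₂) : vertexLoop k₁ k₂ hp (g * g') ω =
    vertexLoop k₁ k₂ hp g ω * vertexLoop k₁ k₂ hp g' ((HNNExtension.of (p g))⁻¹ * ω) := by
  simp only [vertexLoop, vertexRep, vertexHead, ← map_inv HNNExtension.of, cosetRep_map_mul,
    cosetHead_map_mul]
  rw [← map_mul, ← map_mul]
  congr 2
  ext
  simp [mul_assoc]

theorem vertexLoop_one (ω : HNN k₁ k₂) : vertexLoop k₁ k₂ hp 1 ω = 1 := by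
  simpa using vertexLoop_mul k₁ k₂ hp 1 1 ω

/-- The cocycle of the base group given by the vertex loops. -/
noncomputable def vertexCocycle :
    G →* Wreath (HNN k₁ k₂) (HNN k₁ k₂) (Model k₁ k₂) where
  toFun g := ⟨vertexLoop k₁ k₂ hp g, HNNExtension.of (p g)⟩
  map_one' := by ext ω <;> simp [vertexLoop_one]
  map_mul' g g' :=
    SemidirectProduct.ext (funext fun ω => vertexLoop_mul k₁ k₂ hp g g' ω) (by simp)

/-- The representative of the coset of the associated subgroup containing `ω`. -/
noncomputable abbrev edgeRep (ω : HNN k₁ k₂) : HNN k₁ k₂ :=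
  cosetRep ((HNNExtension.of : Q →* HNN k₁ k₂).comp (p.comp i₁)) ω

/-- The element of the associated subgroup carrying `edgeRep ω` to `ω`. -/
noncomputable abbrev edgeHead (ω : HNN k₁ k₂) : E :=
  cosetHead (f := (HNNExtension.of : Q →* HNN k₁ k₂).comp (p.comp i₁))
    ((HNNExtension.of_injective _).comp k₁) ω

/-- The contribution to the model of the stable letter acting at `ω`. It is a free generator when
`ω` is the image under the stable letter of a coset representative. -/
noncomputable def edgeLoop (ω : HNN k₁ k₂) : Model k₁ k₂ :=
  vertexLoop k₁ k₂ hp (i₂ (edgeHead k₁ k₂ (HNNExtension.t⁻¹ * ω))) ω *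
    Coprod.inr (FreeGroup.of (edgeRep k₁ k₂ (HNNExtension.t⁻¹ * ω))) *
    (vertexLoop k₁ k₂ hp (i₁ (edgeHead k₁ k₂ (HNNExtension.t⁻¹ * ω))) (HNNExtension.t⁻¹ * ω))⁻¹

theorem t_inv_mul_of_inv_mul (e : E) (ω : HNN k₁ k₂) :
    HNNExtension.t⁻¹ * ((HNNExtension.of (p (i₂ e)))⁻¹ * ω) =
      (HNNExtension.of (p (i₁ e)) : HNN k₁ k₂)⁻¹ * (HNNExtension.t⁻¹ * ω) := by
  have h := HNN.t_mul_of k₁ k₂ e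
  rw [MonoidHom.comp_apply, MonoidHom.comp_apply] at h
  rw [← mul_assoc, ← mul_assoc, ← mul_inv_rev, ← mul_inv_rev, h]

theorem edgeLoop_mul_vertexLoop (e : E) (ω : HNN k₁ k₂) :
    edgeLoop k₁ k₂ hp ω * vertexLoop k₁ k₂ hp (i₁ e) (HNNExtension.t⁻¹ * ω) =
      vertexLoop k₁ k₂ hp (i₂ e) ω *
        edgeLoop k₁ k₂ hp ((HNNExtension.of (p (i₂ e)))⁻¹ * ω) := by
  have hrep : edgeRep k₁ k₂ ((HNNExtension.of (p (i₁ e)))⁻¹ * (HNNExtension.t⁻¹ * ω)) =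
      edgeRep k₁ k₂ (HNNExtension.t⁻¹ * ω) := by
    simpa using cosetRep_map_mul (f := (HNNExtension.of : Q →* HNN k₁ k₂).comp (p.comp i₁)) e⁻¹ _
  have hhead : edgeHead k₁ k₂ ((HNNExtension.of (p (i₁ e)))⁻¹ * (HNNExtension.t⁻¹ * ω)) =
      e⁻¹ * edgeHead k₁ k₂ (HNNExtension.t⁻¹ * ω) := by
    simpa using cosetHead_map_mul (f := (HNNExtension.of : Q →* HNN k₁ k₂).comp (p.comp i₁))
      ((HNNExtension.of_injective _).comp k₁) e⁻¹ (HNNExtension.t⁻¹ * ω)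
  obtain ⟨d, hd⟩ : ∃ d, edgeHead k₁ k₂ (HNNExtension.t⁻¹ * ω) = e * d :=
    ⟨_, (mul_inv_cancel_left e _).symm⟩
  simp only [edgeLoop, t_inv_mul_of_inv_mul, hrep, hhead, hd, inv_mul_cancel_left, map_mul,
    vertexLoop_mul]
  group

/-- The cocycle of the HNN extension with values in the model. -/
noncomputable def cocycle :
    HNN h₁ h₂ →* Wreath (HNN k₁ k₂) (HNN k₁ k₂) (Model k₁ k₂) :=
  HNN.lift h₁ h₂ (vertexCocycle k₁ k₂ hp) ⟨edgeLoop k₁ k₂ hp, HNNExtension.t⟩ fun e =>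
    SemidirectProduct.ext (funext fun ω => edgeLoop_mul_vertexLoop k₁ k₂ hp e ω)
      (HNN.t_mul_of k₁ k₂ e)

theorem cocycle_right (w : HNN h₁ h₂) :
    (cocycle h₁ h₂ k₁ k₂ hp w).right = HNN.map h₁ h₂ k₁ k₂ w :=
  DFunLike.congr_fun (f := SemidirectProduct.rightHom.comp (cocycle h₁ h₂ k₁ k₂ hp))
    (HNNExtension.hom_ext (by ext g; simp [cocycle, vertexCocycle]) (by simp [cocycle])) w

/-- The homomorphism from the model to the HNN extension realising the loops. -/
noncomputable def ofModel : Model k₁ k₂ →* HNN h₁ h₂ :=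
  Coprod.lift
    (CoprodI.lift fun v =>
      (MulAut.conj (surjInv (HNN.map_surjective h₁ h₂ k₁ k₂ hp) v)⁻¹).toMonoidHom.comp
        (HNNExtension.of.comp p.ker.subtype))
    (FreeGroup.lift fun ω =>
      (lifting h₁ h₂ k₁ k₂ hp (HNNExtension.t * ω))⁻¹ * HNNExtension.t *
        lifting h₁ h₂ k₁ k₂ hp ω)

theorem ofModel_inl_of (v : HNN k₁ k₂) (x : p.ker) :
    ofModel h₁ h₂ k₁ k₂ hp (Coprod.inl (CoprodI.of (i := v) x)) =
      (surjInv (HNN.map_surjective h₁ h₂ k₁ k₂ hp) v)⁻¹ * HNNExtension.of (x : G) *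
        surjInv (HNN.map_surjective h₁ h₂ k₁ k₂ hp) v := by
  simp [ofModel]

theorem ofModel_vertexLoop (g : G) (ω : HNN k₁ k₂) :
    ofModel h₁ h₂ k₁ k₂ hp (vertexLoop k₁ k₂ hp g ω) = (lifting h₁ h₂ k₁ k₂ hp ω)⁻¹ *
      HNNExtension.of g * lifting h₁ h₂ k₁ k₂ hp ((HNNExtension.of (p g))⁻¹ * ω) := by
  simp only [vertexLoop, ofModel_inl_of, lifting, vertexRep, vertexHead,
    ← map_inv HNNExtension.of, cosetRep_map_mul, cosetHead_map_mul]
  simp only [map_mul, map_inv]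
  group

theorem ofModel_edgeLoop (ω : HNN k₁ k₂) :
    ofModel h₁ h₂ k₁ k₂ hp (edgeLoop k₁ k₂ hp ω) = (lifting h₁ h₂ k₁ k₂ hp ω)⁻¹ *
      HNNExtension.t * lifting h₁ h₂ k₁ k₂ hp (HNNExtension.t⁻¹ * ω) := by
  obtain ⟨e, ω', he, hω', rfl⟩ : ∃ e ω', edgeHead k₁ k₂ (HNNExtension.t⁻¹ * ω) = e ∧
      edgeRep k₁ k₂ (HNNExtension.t⁻¹ * ω) = ω' ∧
      ω = HNNExtension.t * (HNNExtension.of (p (i₁ e)) * ω') :=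
    ⟨_, _, rfl, rfl, inv_mul_eq_iff_eq_mul.1 (map_cosetHead_mul_cosetRep
      (f := (HNNExtension.of : Q →* HNN k₁ k₂).comp (p.comp i₁)) _ _).symm⟩
  have hω : (HNNExtension.of (p (i₂ e)) : HNN k₁ k₂)⁻¹ *
      (HNNExtension.t * (HNNExtension.of (p (i₁ e)) * ω')) = HNNExtension.t * ω' := by
    have h := HNN.t_mul_of k₁ k₂ e
    rw [MonoidHom.comp_apply, MonoidHom.comp_apply] at h
    rw [← mul_assoc HNNExtension.t, h, mul_assoc, inv_mul_cancel_left]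
  have hi₂ : (HNNExtension.of (i₂ e) : HNN h₁ h₂) =
      HNNExtension.t * HNNExtension.of (i₁ e) * HNNExtension.t⁻¹ :=
    eq_mul_inv_of_mul_eq (HNN.t_mul_of h₁ h₂ e).symm
  have hr : ofModel h₁ h₂ k₁ k₂ hp (Coprod.inr (FreeGroup.of ω')) =
      (lifting h₁ h₂ k₁ k₂ hp (HNNExtension.t * ω'))⁻¹ * HNNExtension.t *
        lifting h₁ h₂ k₁ k₂ hp ω' := by
    simp [ofModel]
  rw [edgeLoop, he, hω', map_mul, map_mul, map_inv, ofModel_vertexLoop, ofModel_vertexLoop, hω,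
    hr, hi₂]
  simp only [inv_mul_cancel_left]
  group

theorem ofModel_cocycle_left (w : HNN h₁ h₂) (ω : HNN k₁ k₂) :
    ofModel h₁ h₂ k₁ k₂ hp ((cocycle h₁ h₂ k₁ k₂ hp w).left ω) =
      (lifting h₁ h₂ k₁ k₂ hp ω)⁻¹ * w *
        lifting h₁ h₂ k₁ k₂ hp ((HNN.map h₁ h₂ k₁ k₂ w)⁻¹ * ω) := by
  induction w using HNNExtension.induction_on generalizing ω with
  | of g => simpa [cocycle, vertexCocycle] using ofModel_vertexLoop h₁ h₂ k₁ k₂ hp g ω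
  | t => simpa [cocycle] using ofModel_edgeLoop h₁ h₂ k₁ k₂ hp ω
  | mul a b iha ihb =>
    rw [cocycle_mul, map_mul, iha, cocycle_right, ihb, map_mul, mul_inv_rev, smul_eq_mul]
    group
  | inv a iha =>
    rw [cocycle_inv, map_inv, iha, cocycle_right, smul_eq_mul, inv_mul_cancel_left, map_inv,
      inv_inv]
    group

/-- The homomorphism from the kernel of `HNN.map` to the model. -/
noncomputable def toModel : (HNN.map h₁ h₂ k₁ k₂).ker →* Model k₁ k₂ :=
  cocycleHom (cocycle h₁ h₂ k₁ k₂ hp) (ω := 1) fun a ha => by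
    rw [cocycle_right, MonoidHom.mem_ker.1 ha, one_smul]

theorem isConj_ofModel_toModel (a : (HNN.map h₁ h₂ k₁ k₂).ker) :
    IsConj (ofModel h₁ h₂ k₁ k₂ hp (toModel h₁ h₂ k₁ k₂ hp a)) (a : HNN h₁ h₂) := by
  rw [isConj_iff]
  refine ⟨lifting h₁ h₂ k₁ k₂ hp 1, ?_⟩
  rw [show toModel h₁ h₂ k₁ k₂ hp a = (cocycle h₁ h₂ k₁ k₂ hp a).left 1 from rfl,
    ofModel_cocycle_left, MonoidHom.mem_ker.1 a.2]
  group

theorem toModel_injective : Injective (toModel h₁ h₂ k₁ k₂ hp) := by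
  refine (injective_iff_map_eq_one _).2 fun a ha => ?_
  have h := isConj_ofModel_toModel h₁ h₂ k₁ k₂ hp a
  rw [ha, map_one, isConj_one_right] at h
  exact Subtype.ext h

end HNNKernel

theorem EmbedsInUnmixed.ker_hnnMap (hp : Surjective p) (hN : EmbedsInUnmixed p.ker) :
    EmbedsInUnmixed (HNN.map h₁ h₂ k₁ k₂).ker :=
  ((EmbedsInUnmixed.coprodI fun _ => hN).coprod
    (.of_unmixed (.inr (torsionFree_freeGroup _)))).of_injective
    (HNNKernel.toModel_injective h₁ h₂ k₁ k₂ hp)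

theorem HNN.exists_isConj_of_mem_ker_map (hp : Surjective p) {a : HNN h₁ h₂}
    (ha : a ∈ (HNN.map h₁ h₂ k₁ k₂).ker) (hfin : IsOfFinOrder a) :
    ∃ x ∈ p.ker, IsOfFinOrder x ∧ IsConj (HNNExtension.of x) a := by
  have hmodel : IsOfFinOrder (HNNKernel.toModel h₁ h₂ k₁ k₂ hp ⟨a, ha⟩) :=
    MonoidHom.isOfFinOrder _ ((Subgroup.subtype_injective _).isOfFinOrder_iff.1 hfin)
  have hconj {m} (hm : IsConj m (HNNKernel.toModel h₁ h₂ k₁ k₂ hp ⟨a, ha⟩)) :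
      IsConj (HNNKernel.ofModel h₁ h₂ k₁ k₂ hp m) a :=
    (MonoidHom.map_isConj _ hm).trans (HNNKernel.isConj_ofModel_toModel h₁ h₂ k₁ k₂ hp ⟨a, ha⟩)
  obtain ⟨b, hb⟩ | ⟨b, hb⟩ := coprod_exists_isConj hmodel
  · have hb' : IsOfFinOrder b :=
      Coprod.inl_injective.isOfFinOrder_iff.1 (hb.symm.isOfFinOrder hmodel)
    obtain ⟨v, x, hx⟩ := coprodI_exists_isConj_of hb'
    have hx' : IsOfFinOrder x :=
      (CoprodI.of_injective v).isOfFinOrder_iff.1 (hx.symm.isOfFinOrder hb')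
    have h := hconj ((MonoidHom.map_isConj Coprod.inl hx).trans hb)
    rw [HNNKernel.ofModel_inl_of] at h
    refine ⟨x, x.2, MonoidHom.isOfFinOrder p.ker.subtype hx', .trans ?_ h⟩
    exact isConj_iff.2 ⟨(surjInv (HNN.map_surjective h₁ h₂ k₁ k₂ hp) v)⁻¹, by rw [inv_inv]⟩
  · obtain rfl := torsionFree_freeGroup _ b
      (Coprod.inr_injective.isOfFinOrder_iff.1 (hb.symm.isOfFinOrder hmodel))
    have h := hconj hb
    rw [map_one, map_one] at h
    exact ⟨1, one_mem _, IsOfFinOrder.one, by rwa [map_one]⟩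

end HNNMap

/-! ### The Fischer–Karrass–Solitar theorem -/

/-- The conclusion of the theorem of Fischer, Karrass and Solitar for the root `r` of the relator:
the normal closure of `r` embeds in a free product of torsion groups and torsion-free groups, and
its torsion elements are conjugate to powers of `r`. -/
structure IsFKS {G : Type u} [Group G] (r : G) : Prop where
  embedsInUnmixed : EmbedsInUnmixed (Subgroup.normalClosure {r})
  exists_isConj_zpow {τ : G} : τ ∈ Subgroup.normalClosure {r} → IsOfFinOrder τ →
    ∃ k : ℤ, IsConj (r ^ k) τ

theorem EmbedsInUnmixed.of_map_mem {G G' : Type u} [Group G] [Group G'] {f : G →* G'}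
    (hf : Injective f) {N : Subgroup G} {N' : Subgroup G'} (h : EmbedsInUnmixed N')
    (hN : ∀ x ∈ N, f x ∈ N') : EmbedsInUnmixed N :=
  h.of_injective (f := (f.comp N.subtype).codRestrict N' fun x => hN x x.2) fun _ _ hxy =>
    Subtype.ext (hf (congrArg Subtype.val hxy))

namespace IsFKS

variable {G G' : Type u} [Group G] [Group G'] {r r' : G}

theorem of_isConj (h : IsFKS r) (hr : IsConj r r') : IsFKS r' where
  embedsInUnmixed := normalClosure_singleton_eq_of_isConj hr ▸ h.embedsInUnmixed
  exists_isConj_zpow hτ hfin := by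
    obtain ⟨k, hk⟩ := h.exists_isConj_zpow (normalClosure_singleton_eq_of_isConj hr ▸ hτ) hfin
    obtain ⟨c, rfl⟩ := isConj_iff.1 hr
    exact ⟨k, .trans (isConj_iff.2 ⟨c⁻¹, by rw [conj_zpow]; group⟩) hk⟩

theorem map_equiv (h : IsFKS r) (e : G ≃* G') : IsFKS (e r) := by
  have hmem {τ} (hτ : τ ∈ Subgroup.normalClosure {e r}) :
      e.symm τ ∈ Subgroup.normalClosure {r} := by
    simpa using map_mem_normalClosure e.symm.toMonoidHom hτ
  refine ⟨h.embedsInUnmixed.of_map_mem (f := e.symm.toMonoidHom) e.symm.injective fun _ => hmem,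
    fun hτ hfin => ?_⟩
  obtain ⟨k, hk⟩ := h.exists_isConj_zpow (hmem hτ) (e.symm.toMonoidHom.isOfFinOrder hfin)
  exact ⟨k, by simpa using e.toMonoidHom.map_isConj hk⟩

end IsFKS

/-- The projection of `⟨X; rⁿ⟩` onto `⟨X; r⟩`. -/
def rootProj {X : Type*} (r : FreeGroup X) (n : ℕ) : PresentedGroup {r ^ n} →* PresentedGroup {r} :=
  oneRelatorLift (PresentedGroup.mk {r}) (by rw [map_pow, mk_relator, one_pow])

theorem rootProj_surjective {X : Type*} (r : FreeGroup X) (n : ℕ) : Surjective (rootProj r n) := by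
  intro g
  obtain ⟨w, rfl⟩ := PresentedGroup.mk_surjective _ g
  exact ⟨PresentedGroup.mk _ w, rfl⟩

theorem ker_rootProj {X : Type*} (r : FreeGroup X) (n : ℕ) :
    (rootProj r n).ker = Subgroup.normalClosure {PresentedGroup.mk {r ^ n} r} := by
  refine le_antisymm (fun g hg => ?_) (normalClosure_singleton_le.2 ?_)
  · obtain ⟨w, rfl⟩ := PresentedGroup.mk_surjective _ g
    exact map_mem_normalClosure _ (PresentedGroup.mk_eq_one_iff.1 hg)
  · exact mk_relator

theorem isFKS_unrewrite {X : Type u} {R : FreeGroup (X × ℤ)} {s z : X} {a b : ℤ} {n : ℕ}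
    (ha : IsFreeOmitting R (z, a)) (hb : IsFreeOmitting R (z, b))
    (hR : R ∈ letterSubgroup (windowLetters s z a b)) (h : IsFKS (PresentedGroup.mk {R ^ n} R)) :
    IsFKS (PresentedGroup.mk {unrewrite s (R ^ n)} (unrewrite s R)) := by
  have h₁ : Injective (edgeIncl z a b (R ^ n)) := edgeIncl_injective (hb.pow n)
  have h₂ : Injective (edgeShift z a b (R ^ n)) := edgeShift_injective (ha.pow n)
  have k₁ : Injective ((rootProj R n).comp (edgeIncl z a b (R ^ n))) := edgeIncl_injective hb
  have k₂ : Injective ((rootProj R n).comp (edgeShift z a b (R ^ n))) := edgeShift_injective ha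
  have hp := rootProj_surjective R n
  have hRn := pow_mem hR n
  have hroot : toMagnus h₁ h₂ hRn (PresentedGroup.mk _ (unrewrite s R)) =
      HNNExtension.of (PresentedGroup.mk _ R) := freeToMagnus_unrewrite h₁ h₂ hR
  have hmem : Subgroup.normalClosure {PresentedGroup.mk {unrewrite s (R ^ n)} (unrewrite s R)} ≤
      (HNN.map h₁ h₂ k₁ k₂).ker.comap (toMagnus h₁ h₂ hRn) := by
    rw [normalClosure_singleton_le, Subgroup.mem_comap, MonoidHom.mem_ker, hroot, HNN.map_of,
      show rootProj R n (PresentedGroup.mk _ R) = 1 from mk_relator, map_one]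
  refine ⟨.of_map_mem (toMagnus_injective h₁ h₂ hRn) (.ker_hnnMap h₁ h₂ k₁ k₂ hp ?_) hmem,
    fun {τ} hτ hfin => ?_⟩
  · exact ker_rootProj R n ▸ h.embedsInUnmixed
  · obtain ⟨x, hx, hxfin, hconj⟩ := HNN.exists_isConj_of_mem_ker_map h₁ h₂ k₁ k₂ hp (hmem hτ)
      (MonoidHom.isOfFinOrder _ hfin)
    obtain ⟨k, hk⟩ := h.exists_isConj_zpow (ker_rootProj R n ▸ hx) hxfin
    have hτ' := MonoidHom.map_isConj (ofMagnus h₁ h₂ s) (.trans (MonoidHom.map_isConj _ hk) hconj)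
    rw [ofMagnus_toMagnus, map_zpow, map_zpow, ofMagnus_of_mk] at hτ'
    exact ⟨k, hτ'⟩

theorem not_isOfFinOrder_mk_of {X : Type u} {R : FreeGroup X} {x y : X} {n : ℕ} (hxy : x ≠ y)
    (hx : exponentSum x R ≠ 1) : ¬IsOfFinOrder (PresentedGroup.mk {R ^ n} (FreeGroup.of y)) := by
  rw [isOfFinOrder_iff_pow_eq_one]
  rintro ⟨k, hk, hyk⟩
  rw [← map_pow] at hyk
  have hyk' : FreeGroup.of y ^ k = 1 :=
    (freiheitssatz (isEssential_of_exponentSum_ne_one hx)).pow n _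
      (pow_mem (of_mem_letterSubgroup hxy.symm) k) (PresentedGroup.mk_eq_one_iff.1 hyk)
  exact FreeGroup.of_ne_one y
    (torsionFree_freeGroup X _ (isOfFinOrder_iff_pow_eq_one.2 ⟨k, hk, hyk'⟩))

theorem isFKS_of_balanceHom {X : Type u} {R : FreeGroup X} {x y : X} {n : ℕ} (hxy : x ≠ y)
    (hx : exponentSum x R ≠ 1)
    (h : IsFKS (PresentedGroup.mk {balanceHom x y R R ^ n} (balanceHom x y R R))) :
    IsFKS (PresentedGroup.mk {R ^ n} R) := by
  set a := (exponentSum x R).toAdd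
  have ha : a ≠ 0 := toAdd_eq_zero.not.2 hx
  set π := PresentedGroup.mk {R ^ n}
  have hy : ¬IsOfFinOrder (π (FreeGroup.of y)) := not_isOfFinOrder_mk_of hxy hx
  let incl : PresentedGroup {R ^ n} →* PresentedGroup {balanceHom x y R R ^ n} :=
    oneRelatorLift ((PresentedGroup.mk _).comp (balanceHom x y R)) (by
      rw [MonoidHom.comp_apply, map_pow]
      exact mk_relator)
  let ext : PresentedGroup {balanceHom x y R R ^ n} →* RootExt (π (FreeGroup.of y)) a :=
    oneRelatorLift (RootExt.extendSubst π y a _) (by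
      rw [← map_pow]
      exact (RootExt.extendSubst_substHom π y a _ (R ^ n)).trans
        ((congrArg _ mk_relator).trans (map_one _)))
  have hext (g) : ext (incl g) = RootExt.of _ a g := by
    obtain ⟨w, rfl⟩ := PresentedGroup.mk_surjective _ g
    exact RootExt.extendSubst_substHom π y a _ w
  have hof := RootExt.of_injective hy ha
  have hincl : Injective incl := .of_comp (f := ext) (by simpa only [comp_def, hext] using hof)
  have hmem (τ) (hτ : τ ∈ Subgroup.normalClosure {π R}) := map_mem_normalClosure incl hτ
  refine ⟨h.embedsInUnmixed.of_map_mem hincl hmem, fun {τ} hτ hfin => ?_⟩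
  obtain ⟨k, hk⟩ := h.exists_isConj_zpow (hmem τ hτ) (incl.isOfFinOrder hfin)
  have hk' : IsConj (RootExt.of (π (FreeGroup.of y)) a (π R ^ k)) (RootExt.of _ a τ) := by
    rw [← hext, ← hext, map_zpow]
    exact ext.map_isConj hk
  have hRk : IsOfFinOrder (π R ^ k) :=
    hof.isOfFinOrder_iff.1 (hk'.symm.isOfFinOrder (hof.isOfFinOrder_iff.2 hfin))
  obtain ⟨p, hp⟩ := isConj_iff.1 hk'
  refine ⟨k, ?_⟩
  obtain h1 | h1 := eq_or_ne (π R ^ k) 1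
  · rw [h1, map_one, isConj_one_right, map_eq_one_iff _ hof] at hk'
    rw [h1, hk']
  · obtain ⟨g, rfl⟩ := RootExt.mem_range_of_conj hy ha hRk h1 hp
    exact isConj_iff.2 ⟨g, hof (by simpa using hp)⟩

theorem torsionFree_zpowers_of {G : Type*} [Group G] {g : G} (φ : G →* Multiplicative ℤ)
    (h : φ g ≠ 1) : TorsionFree (Subgroup.zpowers g) := by
  rintro ⟨_, l, rfl⟩ hl
  have hφ := (isOfFinOrder_iff_eq_one _).1
    ((φ.comp (Subgroup.zpowers g).subtype).isOfFinOrder hl)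
  have hl0 : l = 0 := (IsMulTorsionFree.zpow_eq_one_iff_right h).1 (by simpa using hφ)
  simp [hl0]

section Zpow

variable {X : Type u} (x : X) (k : ℤ) (n : ℕ)

/-- The splitting of `⟨X; (xᵏ)ⁿ⟩` into the cyclic groups generated by the letters. -/
def toCyclicFactors : PresentedGroup {(FreeGroup.of x ^ k) ^ n} →*
    CoprodI fun z => Subgroup.zpowers (PresentedGroup.mk {(FreeGroup.of x ^ k) ^ n}
      (FreeGroup.of z)) :=
  oneRelatorLift (FreeGroup.lift fun z => CoprodI.of (i := z) ⟨_, Subgroup.mem_zpowers _⟩) (by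
    rw [map_pow, map_zpow, FreeGroup.lift_apply_of, ← map_zpow, ← map_pow]
    refine (congrArg _ (Subtype.ext ?_)).trans (map_one _)
    simpa using mk_relator (r := (FreeGroup.of x ^ k) ^ n))

theorem lift_subtype_toCyclicFactors (g : PresentedGroup {(FreeGroup.of x ^ k) ^ n}) :
    CoprodI.lift (fun _ => Subgroup.subtype _) (toCyclicFactors x k n g) = g := by
  suffices h : (CoprodI.lift fun _ => Subgroup.subtype _).comp (toCyclicFactors x k n) =
      MonoidHom.id _ from DFunLike.congr_fun h g
  refine PresentedGroup.ext fun z => ?_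
  have h : toCyclicFactors x k n (PresentedGroup.of z) =
      CoprodI.of (i := z) ⟨_, Subgroup.mem_zpowers _⟩ := FreeGroup.lift_apply_of
  rw [MonoidHom.comp_apply, h, CoprodI.lift_of]
  rfl

variable {x k n}

theorem torsionFree_zpowers_of_ne {z : X} (hz : z ≠ x) :
    TorsionFree (Subgroup.zpowers (PresentedGroup.mk {(FreeGroup.of x ^ k) ^ n}
      (FreeGroup.of z))) := by
  have hz' : exponentSum z ((FreeGroup.of x ^ k) ^ n) = 1 := by
    simp [exponentSum_of_ne hz.symm]
  exact torsionFree_zpowers_of (oneRelatorLift (exponentSum z) hz') (by simp)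

theorem isMulTorsion_or_torsionFree_zpowers (hk : k ≠ 0) (hn : n ≠ 0) (z : X) :
    IsMulTorsion (Subgroup.zpowers (PresentedGroup.mk {(FreeGroup.of x ^ k) ^ n}
      (FreeGroup.of z))) ∨
    TorsionFree (Subgroup.zpowers (PresentedGroup.mk {(FreeGroup.of x ^ k) ^ n}
      (FreeGroup.of z))) := by
  obtain rfl | hz := eq_or_ne z x
  · have hz : IsOfFinOrder (PresentedGroup.mk {(FreeGroup.of z ^ k) ^ n} (FreeGroup.of z)) := by
      refine isOfFinOrder_iff_zpow_eq_one.2 ⟨k * n, by positivity, ?_⟩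
      rw [zpow_mul, zpow_natCast, ← map_zpow, ← map_pow, mk_relator]
    refine .inl ?_
    rintro ⟨_, l, rfl⟩
    exact Submonoid.isOfFinOrder_coe.1 (hz.zpow (i := l))
  · exact .inr (torsionFree_zpowers_of_ne hz)

theorem dvd_of_zpow_mem_normalClosure {l : ℤ}
    (h : PresentedGroup.mk {(FreeGroup.of x ^ k) ^ n} (FreeGroup.of x) ^ l ∈
      Subgroup.normalClosure {PresentedGroup.mk {(FreeGroup.of x ^ k) ^ n} (FreeGroup.of x ^ k)}) :
    k ∣ l := by
  let q := QuotientGroup.mk' (Subgroup.zpowers (Multiplicative.ofAdd k))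
  have hq (l : ℤ) : q.comp (exponentSum x) (FreeGroup.of x ^ l) = 1 ↔ k ∣ l := by
    rw [MonoidHom.comp_apply, map_zpow, exponentSum_of_self, ← ofAdd_zsmul,
      QuotientGroup.mk'_apply, QuotientGroup.eq_one_iff, Subgroup.mem_zpowers_iff]
    simp only [← ofAdd_zsmul, smul_eq_mul, mul_one, Multiplicative.ofAdd.apply_eq_iff_eq,
      dvd_iff_exists_eq_mul_left, eq_comm]
  let f : PresentedGroup {(FreeGroup.of x ^ k) ^ n} →* _ :=
    oneRelatorLift (q.comp (exponentSum x)) (by rw [map_pow, (hq k).2 dvd_rfl, one_pow])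
  have hl : f (PresentedGroup.mk _ (FreeGroup.of x) ^ l) = 1 :=
    map_eq_one_of_mem_normalClosure f ((hq k).2 dvd_rfl) h
  rw [← map_zpow] at hl
  exact (hq l).1 hl

theorem isFKS_mk_of_zpow (hk : k ≠ 0) (hn : n ≠ 0) :
    IsFKS (PresentedGroup.mk {(FreeGroup.of x ^ k) ^ n} (FreeGroup.of x ^ k)) := by
  have hsplit := lift_subtype_toCyclicFactors x k n
  have hunmixed := isMulTorsion_or_torsionFree_zpowers (x := x) hk hn
  refine ⟨⟨_, _, _, hunmixed, (toCyclicFactors x k n).comp (Subgroup.subtype _),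
    (LeftInverse.injective hsplit).comp Subtype.val_injective⟩, fun {τ} hτ hfin => ?_⟩
  have : Nonempty X := ⟨x⟩
  obtain ⟨z, y, hconj⟩ :=
    coprodI_exists_isConj_of ((toCyclicFactors x k n).isOfFinOrder hfin)
  replace hconj := MonoidHom.map_isConj (CoprodI.lift fun _ => Subgroup.subtype _) hconj
  rw [hsplit, CoprodI.lift_of] at hconj
  obtain rfl | hz := eq_or_ne z x
  · obtain ⟨_, l, rfl⟩ := y
    have hmem := normalClosure_singleton_le.2 hτ (normalClosure_singleton_eq_of_isConj hconj ▸
      self_mem_normalClosure _)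
    obtain ⟨m, rfl⟩ := dvd_of_zpow_mem_normalClosure hmem
    exact ⟨m, by simpa [-isConj_iff, zpow_mul] using hconj⟩
  · have hy : IsOfFinOrder y := Submonoid.isOfFinOrder_coe.1 (hconj.symm.isOfFinOrder hfin)
    have hy1 : y = 1 := torsionFree_zpowers_of_ne hz y hy
    refine ⟨0, ?_⟩
    simpa [-isConj_iff, hy1] using hconj

end Zpow

theorem isFKS_one {G : Type u} [Group G] : IsFKS (1 : G) := by
  have eq_one {τ : G} (hτ : τ ∈ Subgroup.normalClosure {1}) : τ = 1 :=
    map_eq_one_of_mem_normalClosure (MonoidHom.id G) rfl hτ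
  exact ⟨.of_unmixed (.inr fun τ _ => Subtype.ext (eq_one τ.2)),
    fun hτ _ => ⟨0, by rw [eq_one hτ, zpow_zero]⟩⟩

theorem isFKS {X : Type u} (R : FreeGroup X) {n : ℕ} (hn : n ≠ 0) :
    IsFKS (PresentedGroup.mk {R ^ n} R) := by
  obtain rfl | hR := eq_or_ne R 1
  · exact map_one (PresentedGroup.mk {1 ^ n}) ▸ isFKS_one
  obtain ⟨x, hx⟩ := exists_isEssential hR
  refine magnus_induction (P := fun R _ => IsFKS (PresentedGroup.mk {R ^ n} R))
    (fun {X R R' _} hconj h => ?_) (fun _ _ hk => isFKS_mk_of_zpow hk hn)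
    (fun {X s L} hL ih _ hx => ?_) (fun {X R x y} => isFKS_of_balanceHom) hx
  · have hpow : Subgroup.normalClosure {R ^ n} = Subgroup.normalClosure {R' ^ n} := by
      obtain ⟨c, rfl⟩ := isConj_iff.1 hconj
      exact normalClosure_singleton_eq_of_isConj (isConj_iff.2 ⟨c, conj_pow.symm⟩)
    exact (h.of_isConj (MonoidHom.map_isConj _ hconj)).map_equiv
      (QuotientGroup.quotientMulEquivOfEq hpow)
  · obtain _ | ⟨p₀, L⟩ := L
    · exact absurd (map_one _) hx.ne_one
    obtain ⟨a, b, -, ⟨p, hp, hpa⟩, ⟨q, hq, hqb⟩, hwin⟩ :=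
      exists_mem_letterSubgroup_windowLetters (fun p hp => (hL p hp).1) ⟨p₀, by simp, rfl⟩
    have hp' := (hL p hp).2
    have hq' := (hL q hq).2
    rw [← map_pow]
    exact isFKS_unrewrite (freiheitssatz (hpa ▸ hp')) (freiheitssatz (hqb ▸ hq')) hwin (ih _ hp')

/-! ### Grushko's theorem -/

/-- The arrows of the groupoid generated by the labelled edges `r v w g` on the vertices `V`, each
recorded by its endpoints and by the product of its labels in `K`. -/
inductive Walk {V K : Type*} [Group K] (r : V → V → K → Prop) : V → V → K → Prop
  | single {v w g} : r v w g → Walk r v w g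
  | one (v) : Walk r v v 1
  | mul {u v w g h} : Walk r u v g → Walk r v w h → Walk r u w (g * h)
  | inv {v w g} : Walk r v w g → Walk r w v g⁻¹

namespace Walk

variable {V V' K K' : Type*} [Group K] [Group K'] {r : V → V → K → Prop} {v w : V} {g : K}

theorem map {r' : V' → V' → K' → Prop} {κ : V → V'} {f : K →* K'}
    (h : ∀ v w g, r v w g → Walk r' (κ v) (κ w) (f g)) (hg : Walk r v w g) :
    Walk r' (κ v) (κ w) (f g) := by
  induction hg with
  | single hr => exact h _ _ _ hr
  | one v => exact map_one f ▸ one _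
  | mul _ _ h₁ h₂ => exact map_mul f _ _ ▸ h₁.mul h₂
  | inv _ h₁ => exact map_inv f _ ▸ h₁.inv

theorem apply_eq_conj {i k : K →* K'} {γ : V → K'}
    (h : ∀ v w g, r v w g → k g = γ v * i g * (γ w)⁻¹) (hg : Walk r v w g) :
    k g = γ v * i g * (γ w)⁻¹ := by
  induction hg with
  | single hr => exact h _ _ _ hr
  | one v => simp
  | mul _ _ h₁ h₂ => rw [map_mul, map_mul, h₁, h₂]; group
  | inv _ h₁ => rw [map_inv, map_inv, h₁]; group

theorem perm_apply {Ω : Type*} {x : V → Ω} {Φ : K →* Equiv.Perm Ω}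
    (h : ∀ v w g, r v w g → Φ g (x w) = x v) (hg : Walk r v w g) : Φ g (x w) = x v := by
  induction hg with
  | single hr => exact h _ _ _ hr
  | one v => simp
  | mul _ _ h₁ h₂ => rw [map_mul, Equiv.Perm.mul_apply, h₂, h₁]
  | inv _ h₁ => rw [map_inv, Equiv.Perm.inv_eq_iff_eq, h₁]

end Walk

/-- The edges of a family of coloured graphs, labelled in the free product. -/
def totalEdge {ι V : Type*} {U : ι → Type*} [∀ b, Group (U b)] (edge : ∀ b, V → V → U b → Prop)
    (v w : V) (g : CoprodI U) : Prop :=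
  ∃ b u, edge b v w u ∧ CoprodI.of u = g

theorem Walk.total {ι V : Type*} {U : ι → Type*} [∀ b, Group (U b)]
    {edge : ∀ b, V → V → U b → Prop} {b : ι} {v w : V} {u : U b} (h : Walk (edge b) v w u) :
    Walk (totalEdge edge) v w (CoprodI.of u) :=
  h.map (κ := id) fun _ _ _ he => .single ⟨b, _, he, rfl⟩

/-- A finite connected graph with coloured edges, with fundamental group `F`, whose edges of colour
`b` carry labels in `P b` in such a way that reading the labels along loops at `base` is `f`.

The edges of colour `b` are elements of a free group `U b`, and `F` is identified by `incl` with
the walks from `base` to `base` in the free product of the `U b`.  Instead of asking the edges to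
form a basis of `U b`, which folding does not preserve, `twist` asks that every homomorphism on
`U b` can be twisted by a function on the vertices. -/
structure Resolution {ι F : Type u} [Group F] {P : ι → Type u} [∀ b, Group (P b)]
    (f : F →* CoprodI P) where
  V : Type u
  [finite : Finite V]
  base : V
  U : ι → Type u
  [group : ∀ b, Group (U b)]
  [isFree : ∀ b, IsFreeGroup (U b)]
  edge : ∀ b, V → V → U b → Prop
  closure_edge : ∀ b, Subgroup.closure {g | ∃ v w, edge b v w g} = ⊤
  twist : ∀ {b} {S : Type u} [Group S], (U b →* S) → (V → S) → U b →* S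
  twist_edge : ∀ {b v w g} {S : Type u} [Group S] (i : U b →* S) (γ : V → S), edge b v w g →
    twist i γ g = γ v * i g * (γ w)⁻¹
  label : ∀ b, U b →* P b
  incl : F →* CoprodI U
  incl_injective : Injective incl
  mem_range_incl : ∀ g, g ∈ incl.range ↔ Walk (totalEdge edge) base base g
  map_label_incl : ∀ w, coprodIMap label (incl w) = f w
  connected : ∀ v, ∃ g, Walk (totalEdge edge) base v g

namespace Resolution

attribute [instance] finite group isFree

variable {ι F : Type u} [Group F] {P : ι → Type u} [∀ b, Group (P b)] {f : F →* CoprodI P}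

theorem hom_ext (ℛ : Resolution f) {b : ι} {S : Type*} [Group S] {k k' : ℛ.U b →* S}
    (h : ∀ v w g, ℛ.edge b v w g → k g = k' g) : k = k' :=
  MonoidHom.eq_of_eqOn_dense (ℛ.closure_edge b) fun g ⟨v, w, hg⟩ => h v w g hg

theorem incl_surjective (ℛ : Resolution f) [Subsingleton ℛ.V] : Surjective ℛ.incl := by
  intro g
  refine (ℛ.mem_range_incl g).2 ?_
  induction g using CoprodI.induction_on with
  | one => exact .one _
  | mul g h hg hh => exact hg.mul hh
  | of b u =>
    refine Walk.total ?_
    have hu : u ∈ Subgroup.closure {g | ∃ v w, ℛ.edge b v w g} := by simp [ℛ.closure_edge b]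
    induction hu using Subgroup.closure_induction with
    | mem u hu =>
      obtain ⟨v, w, h⟩ := hu
      obtain rfl := Subsingleton.elim v ℛ.base
      obtain rfl := Subsingleton.elim w ℛ.base
      exact .single h
    | one => exact .one _
    | mul _ _ _ _ h₁ h₂ => exact h₁.mul h₂
    | inv _ _ h => exact h.inv

end Resolution

theorem exists_coprodI_action {ι V : Type u} {P Ω : ι → Type u} [∀ b, Group (P b)]
    [∀ b, MulAction (P b) (Ω b)] {x : ∀ b, V → Ω b} (hx : ∀ b, Injective (x b)) :
    ∃ (Ω' : Type u) (x' : V → Ω') (Φ : CoprodI P →* Equiv.Perm Ω'), Injective x' ∧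
      ∀ b (p : P b) v w, p • x b w = x b v → Φ (CoprodI.of p) (x' w) = x' v := by
  classical
  let ε (b) (y : Ω b) : V ⊕ Σ b, Ω b := if h : ∃ v, x b v = y then .inl h.choose else .inr ⟨b, y⟩
  have hε (b v) : ε b (x b v) = .inl v := by
    have h : ∃ w, x b w = x b v := ⟨v, rfl⟩
    simpa only [ε, dif_pos h] using congrArg Sum.inl (hx b h.choose_spec)
  have hinj (b) : Injective (ε b) := by
    intro y z hyz
    by_cases hy : ∃ v, x b v = y <;> by_cases hz : ∃ v, x b v = z
    · obtain ⟨v, rfl⟩ := hy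
      obtain ⟨w, rfl⟩ := hz
      rw [hε, hε] at hyz
      rw [Sum.inl_injective hyz]
    all_goals simp_all [ε]
  refine ⟨_, Sum.inl, CoprodI.lift fun b =>
    (Equiv.Perm.viaEmbeddingHom ⟨ε b, hinj b⟩).comp (MulAction.toPermHom (P b) (Ω b)),
    Sum.inl_injective, fun b p v w h => ?_⟩
  rw [CoprodI.lift_of, ← hε b v, ← hε b w, ← h]
  exact Equiv.Perm.viaEmbedding_apply (MulAction.toPerm p) ⟨ε b, hinj b⟩ (x b w)

namespace Resolution

variable {ι F : Type u} [Group F] {P : ι → Type u} [∀ b, Group (P b)] {f : F →* CoprodI P}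

open Pointwise in
theorem subsingleton_of_forall_eq (ℛ : Resolution f) (hf : Surjective f)
    (h : ∀ b v w m, Walk (ℛ.edge b) v w m → ℛ.label b m = 1 → v = w) : Subsingleton ℛ.V := by
  let x (b) (v u : ℛ.V) : Set (P b) := {p | ∃ g, Walk (ℛ.edge b) v u g ∧ ℛ.label b g = p}
  have hx (b) : Injective (x b) := fun v w hvw => by
    have h1 : 1 ∈ x b w v := hvw ▸ ⟨1, .one v, map_one _⟩
    obtain ⟨g, hg, hg1⟩ := h1
    exact (h b w v g hg hg1).symm
  have hle {b v w g} (hg : Walk (ℛ.edge b) v w g) : ℛ.label b g • x b w ≤ x b v := by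
    rintro u _ ⟨_, ⟨g', hg', rfl⟩, rfl⟩
    exact ⟨g * g', hg.mul hg', map_mul _ _ _⟩
  have hsmul {b v w g} (hg : Walk (ℛ.edge b) v w g) : ℛ.label b g • x b w = x b v := by
    refine le_antisymm (hle hg) fun u => ?_
    have := hle hg.inv u
    rw [map_inv] at this
    exact Set.subset_smul_set_iff.2 this
  obtain ⟨Ω, x', Φ, hx', hΦ⟩ := exists_coprodI_action (P := P) (Ω := fun b => ℛ.V → Set (P b)) hx
  have hwalk {v w g} (hg : Walk (totalEdge ℛ.edge) v w g) :
      Φ (coprodIMap ℛ.label g) (x' w) = x' v :=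
    hg.perm_apply (Φ := Φ.comp (coprodIMap ℛ.label)) fun v w _ ⟨b, u, hu, hug⟩ => by
      rw [← hug, MonoidHom.comp_apply, coprodIMap_of]
      exact hΦ b _ _ _ (hsmul (.single hu))
  refine ⟨fun v w => ?_⟩
  suffices h : ∀ v, ℛ.base = v from (h v).symm.trans (h w)
  intro v
  obtain ⟨g, hg⟩ := ℛ.connected v
  obtain ⟨w, hw⟩ := hf (coprodIMap ℛ.label g)
  have hgw := hwalk ((((ℛ.mem_range_incl _).1 ⟨w, rfl⟩).inv).mul hg)
  rw [map_mul, map_inv, ℛ.map_label_incl, hw, inv_mul_cancel, map_one] at hgw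
  exact (hx' hgw).symm

end Resolution

namespace Resolution

variable {ι F : Type u} [Group F] {P : ι → Type u} [∀ b, Group (P b)] {f : F →* CoprodI P}

/-- A projection `proj` of the vertices of `ℛ` onto a smaller set, with a section `rep`, such that
each vertex `v` is joined to its representative by a walk of one colour and of trivial label.
Folding `ℛ` along a tie identifies the vertices with the same projection. -/
structure Tie (ℛ : Resolution f) (V' : Type u) where
  proj : ℛ.V → V'
  rep : V' → ℛ.V
  proj_rep : ∀ v, proj (rep v) = v
  rep_proj_base : rep (proj ℛ.base) = ℛ.base
  color : ι
  path : ℛ.V → ℛ.U color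
  path_rep : ∀ v, path (rep v) = 1
  walk : ∀ v, Walk (ℛ.edge color) (rep (proj v)) v (path v)
  label_path : ∀ v, ℛ.label color (path v) = 1

namespace Tie

variable {ℛ : Resolution f} {V' : Type u} (𝒯 : ℛ.Tie V') {c : ι}

open Classical in
/-- The path from `rep (proj v)` to `v` in the colour of the tie, and `1` in the other colours. -/
noncomputable def pathIn (c : ι) (v : ℛ.V) : ℛ.U c :=
  Pi.mulSingle 𝒯.color (𝒯.path v) c

theorem pathIn_color (v : ℛ.V) : 𝒯.pathIn 𝒯.color v = 𝒯.path v := by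
  simp [pathIn]

theorem pathIn_of_ne (h : c ≠ 𝒯.color) (v : ℛ.V) : 𝒯.pathIn c v = 1 := by
  simp [pathIn, h]

theorem pathIn_rep (v : V') : 𝒯.pathIn c (𝒯.rep v) = 1 := by
  simp [pathIn, 𝒯.path_rep]

theorem label_pathIn (v : ℛ.V) : ℛ.label c (𝒯.pathIn c v) = 1 := by
  obtain rfl | h := eq_or_ne c 𝒯.color
  · rw [pathIn_color, 𝒯.label_path]
  · rw [𝒯.pathIn_of_ne h, map_one]

theorem map_pathIn_eq_one {S : Type*} [Group S] {i k : ℛ.U c →* S} {γ : ℛ.V → S}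
    (hk : ∀ v w g, ℛ.edge c v w g → k g = γ v * i g * (γ w)⁻¹)
    (hγ : ∀ v, c = 𝒯.color → γ (𝒯.rep (𝒯.proj v)) * i (𝒯.pathIn c v) = γ v) (v : ℛ.V) :
    k (𝒯.pathIn c v) = 1 := by
  obtain rfl | h := eq_or_ne c 𝒯.color
  · have hwalk := 𝒯.pathIn_color v ▸ 𝒯.walk v
    rw [hwalk.apply_eq_conj hk, hγ v rfl, mul_inv_cancel]
  · rw [𝒯.pathIn_of_ne h, map_one]

/-- The endomorphism of `ℛ.U c` that reroutes each edge through the representatives of its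
endpoints. -/
noncomputable def reroute (c : ι) : ℛ.U c →* ℛ.U c :=
  ℛ.twist (MonoidHom.id _) (𝒯.pathIn c)

theorem comp_reroute {S : Type*} [Group S] {k : ℛ.U c →* S} (hk : ∀ v, k (𝒯.pathIn c v) = 1) :
    k.comp (𝒯.reroute c) = k :=
  ℛ.hom_ext fun v w g hg => by
    rw [reroute, MonoidHom.comp_apply, ℛ.twist_edge _ _ hg, map_mul, map_mul, map_inv, hk, hk,
      one_mul, inv_one, mul_one, MonoidHom.id_apply]

theorem reroute_pathIn (v : ℛ.V) : 𝒯.reroute c (𝒯.pathIn c v) = 1 :=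
  𝒯.map_pathIn_eq_one (fun _ _ _ => ℛ.twist_edge (MonoidHom.id _) (𝒯.pathIn c))
    (fun v _ => by rw [pathIn_rep, one_mul, MonoidHom.id_apply]) v

/-- The labels of the edges of the folded graph. -/
abbrev U (c : ι) : Type u := (𝒯.reroute c).range

/-- The edges of the folded graph. -/
def edge (c : ι) (v w : V') (g : 𝒯.U c) : Prop :=
  ∃ v' w' g', ℛ.edge c v' w' g' ∧ 𝒯.proj v' = v ∧ 𝒯.proj w' = w ∧ (𝒯.reroute c).rangeRestrict g' = g

/-- The image of an element of `CoprodI ℛ.U` in the folded graph. -/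
noncomputable def fold : CoprodI ℛ.U →* CoprodI 𝒯.U :=
  coprodIMap fun c => (𝒯.reroute c).rangeRestrict

/-- The homomorphism that reads a label of the folded graph in the original graph. -/
noncomputable def unfold : CoprodI 𝒯.U →* CoprodI ℛ.U :=
  CoprodI.lift fun c =>
    (ℛ.twist (CoprodI.of (i := c)) fun v => CoprodI.of (𝒯.path v)).comp (Subgroup.subtype _)

theorem walk_fold {v w : ℛ.V} {g : CoprodI ℛ.U} (hg : Walk (totalEdge ℛ.edge) v w g) :
    Walk (totalEdge 𝒯.edge) (𝒯.proj v) (𝒯.proj w) (𝒯.fold g) :=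
  hg.map fun v w _ ⟨c, u, hu, hug⟩ => .single ⟨c, _, ⟨v, w, u, hu, rfl, rfl, rfl⟩, by
    rw [← hug, fold, coprodIMap_of]⟩

theorem unfold_fold_of {v w : ℛ.V} {g : ℛ.U c} (hg : ℛ.edge c v w g) :
    𝒯.unfold (𝒯.fold (CoprodI.of g)) =
      CoprodI.of (𝒯.path v) * CoprodI.of g * (CoprodI.of (𝒯.path w))⁻¹ := by
  rw [fold, unfold, coprodIMap_of, CoprodI.lift_of]
  refine Eq.trans ?_ (ℛ.twist_edge CoprodI.of (fun v => CoprodI.of (𝒯.path v)) hg)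
  refine DFunLike.congr_fun (𝒯.comp_reroute (𝒯.map_pathIn_eq_one
    (fun _ _ _ => ℛ.twist_edge _ _) fun v hc => ?_)) g
  subst hc
  rw [𝒯.path_rep, map_one, one_mul, pathIn_color]

theorem unfold_fold {v w : ℛ.V} {g : CoprodI ℛ.U} (hg : Walk (totalEdge ℛ.edge) v w g) :
    𝒯.unfold (𝒯.fold g) = CoprodI.of (𝒯.path v) * g * (CoprodI.of (𝒯.path w))⁻¹ :=
  hg.apply_eq_conj (k := 𝒯.unfold.comp 𝒯.fold) (i := MonoidHom.id _)
    (γ := fun v => CoprodI.of (𝒯.path v)) fun _ _ _ ⟨_, _, hu, hug⟩ =>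
      hug ▸ 𝒯.unfold_fold_of hu

theorem fold_of_path (v : ℛ.V) : 𝒯.fold (CoprodI.of (𝒯.path v)) = 1 := by
  have h : (𝒯.reroute 𝒯.color).rangeRestrict (𝒯.path v) = 1 :=
    Subtype.ext (𝒯.pathIn_color v ▸ 𝒯.reroute_pathIn v)
  rw [fold, coprodIMap_of, h, map_one]

theorem walk_unfold {v w : V'} {g : CoprodI 𝒯.U} (hg : Walk (totalEdge 𝒯.edge) v w g) :
    Walk (totalEdge ℛ.edge) (𝒯.rep v) (𝒯.rep w) (𝒯.unfold g) := by
  refine hg.map fun v w g ⟨c, _, ⟨v', w', u, hu, hv, hw, hug⟩, hg⟩ => ?_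
  have hfold : 𝒯.fold (CoprodI.of u) = g := by rw [fold, coprodIMap_of, hug, hg]
  rw [← hfold, 𝒯.unfold_fold_of hu, ← hv, ← hw]
  exact ((𝒯.walk v').total.mul (.single ⟨c, u, hu, rfl⟩)).mul (𝒯.walk w').total.inv

theorem fold_unfold {v w : V'} {g : CoprodI 𝒯.U} (hg : Walk (totalEdge 𝒯.edge) v w g) :
    𝒯.fold (𝒯.unfold g) = g := by
  have h := hg.apply_eq_conj (k := 𝒯.fold.comp 𝒯.unfold) (i := MonoidHom.id _) (γ := 1)
    fun v w g ⟨c, _, ⟨v', w', u, hu, _, _, hug⟩, hg⟩ => by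
      have hfold : 𝒯.fold (CoprodI.of u) = g := by rw [fold, coprodIMap_of, hug, hg]
      rw [MonoidHom.comp_apply, ← hfold, 𝒯.unfold_fold_of hu, map_mul, map_mul, map_inv,
        fold_of_path, fold_of_path]
      rfl
  simpa using h

theorem unfold_fold_incl (w : F) : 𝒯.unfold (𝒯.fold (ℛ.incl w)) = ℛ.incl w := by
  have hbase : 𝒯.path ℛ.base = 1 := 𝒯.rep_proj_base ▸ 𝒯.path_rep _
  simpa [hbase] using 𝒯.unfold_fold ((ℛ.mem_range_incl _).1 ⟨w, rfl⟩)

/-- The twist of a homomorphism on the labels of the folded graph. -/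
noncomputable def twist {S : Type u} [Group S] (i : 𝒯.U c →* S) (γ : V' → S) : 𝒯.U c →* S :=
  (ℛ.twist (i.comp (𝒯.reroute c).rangeRestrict) (γ ∘ 𝒯.proj)).comp (Subgroup.subtype _)

theorem twist_edge {S : Type u} [Group S] (i : 𝒯.U c →* S) (γ : V' → S) {v w : V'} {g : 𝒯.U c}
    (hg : 𝒯.edge c v w g) : 𝒯.twist i γ g = γ v * i g * (γ w)⁻¹ := by
  obtain ⟨v, w, g, hg, rfl, rfl, rfl⟩ := hg
  refine Eq.trans ?_ (ℛ.twist_edge (i.comp (𝒯.reroute c).rangeRestrict) (γ ∘ 𝒯.proj) hg)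
  refine DFunLike.congr_fun (𝒯.comp_reroute (𝒯.map_pathIn_eq_one
    (fun _ _ _ => ℛ.twist_edge _ _) fun v _ => ?_)) g
  have h : (𝒯.reroute c).rangeRestrict (𝒯.pathIn c v) = 1 := Subtype.ext (𝒯.reroute_pathIn v)
  rw [MonoidHom.comp_apply, h, map_one, mul_one, comp_apply, comp_apply, 𝒯.proj_rep]

theorem closure_edge : Subgroup.closure {g | ∃ v w, 𝒯.edge c v w g} = ⊤ := by
  rw [eq_top_iff, ← Subgroup.map_top_of_surjective _ (𝒯.reroute c).rangeRestrict_surjective,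
    ← ℛ.closure_edge c, MonoidHom.map_closure]
  refine Subgroup.closure_mono ?_
  rintro _ ⟨g, ⟨v, w, hg⟩, rfl⟩
  exact ⟨_, _, v, w, g, hg, rfl, rfl, rfl⟩

/-- The resolution obtained by folding `ℛ` along a tie. -/
noncomputable def toResolution [Finite V'] : Resolution f where
  V := V'
  base := 𝒯.proj ℛ.base
  U := 𝒯.U
  edge := 𝒯.edge
  closure_edge _ := 𝒯.closure_edge
  twist := 𝒯.twist
  twist_edge i γ := 𝒯.twist_edge i γ
  label c := (ℛ.label c).comp (Subgroup.subtype _)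
  incl := 𝒯.fold.comp ℛ.incl
  incl_injective v w h := ℛ.incl_injective (by
    rw [← 𝒯.unfold_fold_incl v, ← 𝒯.unfold_fold_incl w]
    exact congrArg 𝒯.unfold h)
  mem_range_incl g := by
    refine ⟨?_, fun hg => ?_⟩
    · rintro ⟨w, rfl⟩
      exact 𝒯.walk_fold ((ℛ.mem_range_incl _).1 ⟨w, rfl⟩)
    · obtain ⟨w, hw⟩ := (ℛ.mem_range_incl _).2 (𝒯.rep_proj_base ▸ 𝒯.walk_unfold hg)
      exact ⟨w, (congrArg 𝒯.fold hw).trans (𝒯.fold_unfold hg)⟩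
  map_label_incl w := by
    rw [← ℛ.map_label_incl w]
    refine DFunLike.congr_fun (f := (coprodIMap fun c =>
      (ℛ.label c).comp (𝒯.reroute c).range.subtype).comp 𝒯.fold)
      (CoprodI.ext_hom _ _ fun c => MonoidHom.ext fun u => ?_) (ℛ.incl w)
    simp only [MonoidHom.comp_apply, fold, coprodIMap_of]
    exact congrArg _ (DFunLike.congr_fun (𝒯.comp_reroute 𝒯.label_pathIn) u)
  connected v := by
    obtain ⟨g, hg⟩ := ℛ.connected (𝒯.rep v)
    exact ⟨_, 𝒯.proj_rep v ▸ 𝒯.walk_fold hg⟩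

end Tie

/-- The tie that identifies the vertex `w` with `v` along a walk of trivial label. -/
noncomputable def tieOfWalk (ℛ : Resolution f) {b : ι} {v w : ℛ.V} {m : ℛ.U b}
    (hm : Walk (ℛ.edge b) v w m) (hlabel : ℛ.label b m = 1) (hvw : v ≠ w) (hw : ℛ.base ≠ w) :
    ℛ.Tie {u // u ≠ w} := by
  classical exact
  { proj u := if h : u = w then ⟨v, hvw⟩ else ⟨u, h⟩
    rep := Subtype.val
    proj_rep u := by simp [u.2]
    rep_proj_base := by simp [hw]
    color := b
    path u := if u = w then m else 1
    path_rep u := by simp [u.2]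
    walk u := by
      by_cases h : u = w
      · simpa [h] using hm
      · simpa [h] using .one u
    label_path u := by split_ifs <;> simp [hlabel] }

theorem exists_subsingleton (hf : Surjective f) (ℛ : Resolution f) :
    ∃ ℛ' : Resolution f, Subsingleton ℛ'.V := by
  induction hm : Nat.card ℛ.V using Nat.strong_induction_on generalizing ℛ with
  | _ m ih =>
    by_contra! hcon
    refine not_subsingleton ℛ.V (ℛ.subsingleton_of_forall_eq hf fun b v w m hwalk hlabel => ?_)
    by_contra hvw
    wlog hw : ℛ.base ≠ w generalizing v w m
    · exact this w v m⁻¹ hwalk.inv (by simp [hlabel]) (Ne.symm hvw) fun h => hvw (by grind)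
    obtain ⟨ℛ', hℛ'⟩ := ih _ (hm ▸ Finite.card_subtype_lt (p := (· ≠ w)) (x := w) (by simp))
      (ℛ.tieOfWalk hwalk hlabel hvw hw).toResolution rfl
    exact not_subsingleton _ hℛ'

end Resolution

theorem partialProd_last {M : Type*} [Monoid M] {n : ℕ} (f : Fin n → M) :
    Fin.partialProd f (Fin.last n) = (List.ofFn f).prod := by
  rw [Fin.partialProd, Fin.val_last, List.take_of_length_le List.length_ofFn.le]

namespace Resolution

namespace Subdivision

variable {X ι : Type u} {P : ι → Type u} {k : X → ℕ} (s : ∀ x, Fin (k x + 1) → Σ b, P b)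

/-- The vertices of the rose with petals `X`, the petal `x` being subdivided into `k x + 1` edges,
in the order in which they occur on the petal `x`; the vertex of the rose is `none`. -/
def vertexAt (x : X) : Fin (k x + 2) → Option (Σ x, Fin (k x)) :=
  Fin.cases none (Fin.lastCases none fun i => some ⟨x, i⟩)

theorem vertexAt_last (x : X) : vertexAt (k := k) x (Fin.last _) = none := by
  simp [vertexAt, ← Fin.succ_last]

/-- The edges of colour `b`, each paired with its label. -/
abbrev EdgeOf (b : ι) : Type u :=
  {a : (Σ x, Fin (k x + 1)) × P b // s a.1.1 a.1.2 = ⟨b, a.2⟩}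

/-- The edge relation of the subdivided rose. -/
def edge (b : ι) (v w : Option (Σ x, Fin (k x))) (g : FreeGroup (EdgeOf s b)) : Prop :=
  ∃ a : EdgeOf s b, vertexAt a.1.1.1 a.1.1.2.castSucc = v ∧ vertexAt a.1.1.1 a.1.1.2.succ = w ∧
    FreeGroup.of a = g

/-- The generator that belongs to the `i`-th edge of the petal `x`. -/
def gen (x : X) (i : Fin (k x + 1)) : CoprodI fun b => FreeGroup (EdgeOf s b) :=
  CoprodI.of (i := (s x i).1) (FreeGroup.of ⟨(⟨x, i⟩, (s x i).2), rfl⟩)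

theorem of_of_eq_gen {b : ι} (a : EdgeOf s b) :
    CoprodI.of (M := fun b => FreeGroup (EdgeOf s b)) (FreeGroup.of a) = gen s a.1.1.1 a.1.1.2 := by
  suffices h : ∀ q x i (hq : s x i = q),
      CoprodI.of (M := fun b => FreeGroup (EdgeOf s b)) (FreeGroup.of ⟨(⟨x, i⟩, q.2), hq⟩) =
        gen s x i from h ⟨b, a.1.2⟩ _ _ a.2
  rintro _ x i rfl
  rfl

theorem totalEdge_gen (x : X) (i : Fin (k x + 1)) :
    totalEdge (edge s) (vertexAt x i.castSucc) (vertexAt x i.succ) (gen s x i) :=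
  ⟨_, _, ⟨_, rfl, rfl, rfl⟩, rfl⟩

theorem walk_partialProd (x : X) (i : Fin (k x + 2)) :
    Walk (totalEdge (edge s)) none (vertexAt x i) (Fin.partialProd (gen s x) i) := by
  induction i using Fin.induction with
  | zero => exact Fin.partialProd_zero (gen s x) ▸ .one _
  | succ i ih => exact Fin.partialProd_succ (gen s x) i ▸ ih.mul (.single (totalEdge_gen s x i))

/-- The subdivision of the petals. -/
def incl : FreeGroup X →* CoprodI fun b => FreeGroup (EdgeOf s b) :=
  FreeGroup.lift fun x => Fin.partialProd (gen s x) (Fin.last _)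

/-- The collapse of all the edges of each petal except the last. -/
def collapse : (CoprodI fun b => FreeGroup (EdgeOf s b)) →* FreeGroup X :=
  CoprodI.lift fun _ => FreeGroup.lift fun a =>
    if a.1.1.2 = Fin.last _ then FreeGroup.of a.1.1.1 else 1

theorem collapse_gen_castSucc (x : X) (i : Fin (k x)) : collapse s (gen s x i.castSucc) = 1 := by
  simp [collapse, gen]

theorem collapse_gen_last (x : X) : collapse s (gen s x (Fin.last _)) = FreeGroup.of x := by
  simp [collapse, gen]

theorem collapse_partialProd_castSucc (x : X) (i : Fin (k x + 1)) :
    collapse s (Fin.partialProd (gen s x) i.castSucc) = 1 := by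
  induction i using Fin.induction with
  | zero => rw [Fin.castSucc_zero, Fin.partialProd_zero, map_one]
  | succ i ih => rw [← Fin.succ_castSucc, Fin.partialProd_succ, map_mul, ih, one_mul,
      collapse_gen_castSucc]

theorem collapse_incl (w : FreeGroup X) : collapse s (incl s w) = w := by
  suffices h : (collapse s).comp (incl s) = MonoidHom.id _ from DFunLike.congr_fun h w
  ext x
  rw [MonoidHom.comp_apply, incl, FreeGroup.lift_apply_of, ← Fin.succ_last, Fin.partialProd_succ,
    map_mul, collapse_partialProd_castSucc, one_mul, collapse_gen_last, MonoidHom.id_apply]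

/-- The product of the generators on the part of a petal before a given vertex. -/
def prefixProd : Option (Σ x, Fin (k x)) → CoprodI fun b => FreeGroup (EdgeOf s b)
  | none => 1
  | some ⟨x, i⟩ => Fin.partialProd (gen s x) i.succ.castSucc

theorem prefixProd_castSucc (x : X) (i : Fin (k x + 1)) :
    prefixProd s (vertexAt x i.castSucc) = Fin.partialProd (gen s x) i.castSucc := by
  induction i using Fin.cases with
  | zero => simp [vertexAt, prefixProd]
  | succ i => simp [vertexAt, prefixProd]

theorem incl_collapse_gen (x : X) (i : Fin (k x + 1)) :
    incl s (collapse s (gen s x i)) =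
      prefixProd s (vertexAt x i.castSucc) * gen s x i * (prefixProd s (vertexAt x i.succ))⁻¹ := by
  rw [prefixProd_castSucc, ← Fin.partialProd_succ]
  induction i using Fin.lastCases with
  | last =>
    rw [collapse_gen_last, incl, FreeGroup.lift_apply_of, Fin.succ_last, vertexAt_last, prefixProd,
      inv_one, mul_one]
  | cast i =>
    rw [collapse_gen_castSucc, map_one, Fin.succ_castSucc, prefixProd_castSucc, mul_inv_cancel]

theorem mem_range_incl (g : CoprodI fun b => FreeGroup (EdgeOf s b)) :
    g ∈ (incl s).range ↔ Walk (totalEdge (edge s)) none none g := by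
  refine ⟨?_, fun hg => ⟨collapse s g, ?_⟩⟩
  · rintro ⟨w, rfl⟩
    induction w using FreeGroup.induction_on with
    | C1 => exact map_one (incl s) ▸ .one _
    | of x =>
      rw [incl, FreeGroup.lift_apply_of]
      exact vertexAt_last x ▸ walk_partialProd s x (Fin.last _)
    | inv_of x h => exact map_inv (incl s) _ ▸ h.inv
    | mul x y hx hy => exact map_mul (incl s) x y ▸ hx.mul hy
  · have h := hg.apply_eq_conj (k := (incl s).comp (collapse s)) (i := MonoidHom.id _)
      (γ := prefixProd s) fun v w g ⟨b, _, ⟨a, hv, hw, ha⟩, hg⟩ => by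
        rw [← hg, ← ha, of_of_eq_gen, ← hv, ← hw]
        exact incl_collapse_gen s _ _
    simpa [prefixProd] using h

variable [∀ b, Group (P b)] {f : FreeGroup X →* CoprodI P}

/-- The subdivided rose as a resolution of `f`, where `f x` is spelt as the product of the syllables
`s x i`. -/
def toResolution [Finite X]
    (hs : ∀ x, (List.ofFn fun i => CoprodI.of (s x i).2).prod = f (FreeGroup.of x)) :
    Resolution f where
  V := Option (Σ x, Fin (k x))
  base := none
  U b := FreeGroup (EdgeOf s b)
  edge := edge s
  closure_edge b := by
    refine eq_top_iff.2 ((FreeGroup.closure_range_of _).ge.trans (Subgroup.closure_mono ?_))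
    rintro _ ⟨a, rfl⟩
    exact ⟨_, _, a, rfl, rfl, rfl⟩
  twist i γ := FreeGroup.lift fun a => γ (vertexAt a.1.1.1 a.1.1.2.castSucc) * i (FreeGroup.of a) *
    (γ (vertexAt a.1.1.1 a.1.1.2.succ))⁻¹
  twist_edge i γ h := by
    obtain ⟨a, rfl, rfl, rfl⟩ := h
    exact FreeGroup.lift_apply_of
  label b := FreeGroup.lift fun a => a.1.2
  incl := incl s
  incl_injective := LeftInverse.injective (collapse_incl s)
  mem_range_incl := mem_range_incl s
  map_label_incl w := by
    suffices h : (coprodIMap fun b => FreeGroup.lift fun a => a.1.2).comp (incl s) = f from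
      DFunLike.congr_fun h w
    ext x
    rw [MonoidHom.comp_apply, incl, FreeGroup.lift_apply_of, partialProd_last, map_list_prod,
      List.map_ofFn, ← hs x]
    simp only [comp_def, gen, coprodIMap_of, FreeGroup.lift_apply_of]
  connected v := by
    match v with
    | none => exact ⟨1, .one _⟩
    | some ⟨x, i⟩ => exact ⟨_, by simpa [vertexAt] using walk_partialProd s x i.castSucc.succ⟩

end Subdivision

theorem nonempty_resolution {ι X : Type u} [Nonempty ι] [Finite X] {P : ι → Type u}
    [∀ b, Group (P b)] (f : FreeGroup X →* CoprodI P) : Nonempty (Resolution f) := by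
  classical
  let L (x : X) : List (Σ b, P b) := (CoprodI.Word.equiv (f (FreeGroup.of x))).toList
  have hL (x : X) : ((L x).map fun p => CoprodI.of p.2).prod = f (FreeGroup.of x) :=
    CoprodI.Word.equiv.symm_apply_apply _
  -- the dummy first syllable ensures that every petal has an edge
  let s (x : X) : Fin ((L x).length + 1) → Σ b, P b := (⟨Classical.arbitrary ι, 1⟩ :: L x).get
  refine ⟨Subdivision.toResolution s fun x => ?_⟩
  have hs : (List.ofFn fun i => CoprodI.of (s x i).2) =
      (List.ofFn (s x)).map fun p => CoprodI.of p.2 := by rw [List.map_ofFn]; rfl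
  rw [hs, List.ofFn_get, List.map_cons, List.prod_cons, hL, map_one, one_mul]

end Resolution

theorem grushko {ι X : Type u} [Nonempty ι] [Finite X] {P : ι → Type u} [∀ b, Group (P b)]
    {f : FreeGroup X →* CoprodI P} (hf : Surjective f) :
    ∃ (Y : ι → Type u) (e : FreeGroup (Σ b, Y b) ≃* FreeGroup X),
      ∀ p, ∃ a : P p.1, f (e (FreeGroup.of p)) = CoprodI.of a := by
  obtain ⟨ℛ, _⟩ := Resolution.exists_subsingleton hf (Resolution.nonempty_resolution f).some
  let B := CoprodI.FreeGroupBasis.coprodI fun b => IsFreeGroup.basis (ℛ.U b)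
  let incl := MulEquiv.ofBijective ℛ.incl ⟨ℛ.incl_injective, ℛ.incl_surjective⟩
  refine ⟨fun b => IsFreeGroup.Generators (ℛ.U b), B.repr.symm.trans incl.symm, fun p =>
    ⟨ℛ.label p.1 (IsFreeGroup.of p.2), ?_⟩⟩
  have hB : B p = CoprodI.of (IsFreeGroup.of p.2) := by
    simp [B, CoprodI.FreeGroupBasis.coprodI]
    rfl
  have hincl : ℛ.incl ((B.repr.symm.trans incl.symm) (FreeGroup.of p)) =
      CoprodI.of (IsFreeGroup.of p.2) :=
    (incl.apply_symm_apply _).trans hB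
  exact (ℛ.map_label_incl _).symm.trans ((congrArg _ hincl).trans (coprodIMap_of ..))

/-! ### Free decompositions of one-relator groups -/

section Indecomposable

theorem letterSubgroup_le_range_map {X : Type*} (S : Set X) :
    letterSubgroup S ≤ (FreeGroup.map ((↑) : S → X)).range :=
  letterSubgroup_le.2 fun x hx => ⟨FreeGroup.of ⟨x, hx⟩, FreeGroup.map.of⟩

theorem freelyDecomposable_of_isConj {X Y : Type} {r : FreeGroup X} (e : FreeGroup Y ≃* FreeGroup X)
    {S : Set Y} {w : FreeGroup Y} (hw : w ∈ letterSubgroup S) (hc : IsConj (e w) r) {y z : Y}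
    (hy : y ∉ S) (hz : z ∈ S) (hzw : FreeGroup.of z ∉ Subgroup.normalClosure {w}) :
    FreelyDecomposable (PresentedGroup {r}) := by
  classical
  obtain ⟨r₁, rfl⟩ := letterSubgroup_le_range_map S hw
  let σ : FreeGroup (S ⊕ ↑Sᶜ) ≃* FreeGroup X :=
    (FreeGroup.freeGroupCongr (Equiv.Set.sumCompl S)).trans e
  have hσ : σ (FreeGroup.map Sum.inl r₁) = e (FreeGroup.map (↑) r₁) :=
    congrArg e (FreeGroup.map.comp ..)
  let E : PresentedGroup {r} ≃*
      PresentedGroup (FreeGroup.map (Sum.inl : S → S ⊕ ↑Sᶜ) '' {r₁} ∪ FreeGroup.map Sum.inr '' ∅) :=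
    (QuotientGroup.congr _ _ σ (by
      rw [Set.image_empty, Set.union_empty, Set.image_singleton,
        ← normalClosure_singleton_eq_of_isConj hc, ← hσ]
      simpa using Subgroup.map_normalClosure {FreeGroup.map Sum.inl r₁} σ.toMonoidHom
        σ.surjective)).symm
  refine ⟨PresentedGroup {r₁}, PresentedGroup (∅ : Set (FreeGroup ↑Sᶜ)), _, _, ?_, ?_,
    ⟨E.trans (PresentedGroup.coprodPresentations {r₁} ∅)⟩⟩
  · refine ⟨PresentedGroup.of ⟨z, hz⟩, 1, fun h => hzw ?_⟩
    have := map_mem_normalClosure (FreeGroup.map ((↑) : S → Y)) (PresentedGroup.mk_eq_one_iff.1 h)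
    rwa [FreeGroup.map.of] at this
  · refine ⟨PresentedGroup.of ⟨y, hy⟩, 1, fun h => FreeGroup.of_ne_one (⟨y, hy⟩ : ↑Sᶜ) ?_⟩
    simpa using PresentedGroup.mk_eq_one_iff.1 h

theorem freelyDecomposable_of_infinite {X : Type} [Infinite X] (r : FreeGroup X) :
    FreelyDecomposable (PresentedGroup {r}) := by
  classical
  obtain ⟨L, rfl⟩ := exists_mk_eq r
  obtain ⟨y, hy⟩ := Infinite.exists_notMem_finset (L.map Prod.fst).toFinset
  obtain ⟨z, hz⟩ := Infinite.exists_notMem_finset (insert y (L.map Prod.fst).toFinset)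
  have hmem {t : X} (ht : t ∉ (L.map Prod.fst).toFinset) :
      FreeGroup.mk L ∈ letterSubgroup ({t}ᶜ : Set X) := by
    refine mk_mem_letterSubgroup fun p hp hpt => ht ?_
    exact List.mem_toFinset.2 (hpt ▸ List.mem_map_of_mem hp)
  rw [Finset.mem_insert, not_or] at hz
  refine freelyDecomposable_of_isConj (MulEquiv.refl _) (hmem hy) (IsConj.refl _)
    (not_not.2 rfl) hz.1 fun h => ?_
  have hsum : exponentSum z (FreeGroup.mk L) = 1 :=
    eqOn_letterSubgroup (g := 1) (fun x hx => exponentSum_of_ne hx) (hmem hz.2)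
  simpa using map_eq_one_of_mem_normalClosure (exponentSum z) hsum h

section Coloured

variable {ι : Type u} {X : Type*} {Y P : ι → Type*} [∀ b, Group (P b)]
  {g : FreeGroup (Σ b, Y b) →* CoprodI P} {p : ∀ b, Y b → P b}

theorem exists_letter_apply_ne_one (hg : Surjective g)
    (hp : ∀ b y, g (FreeGroup.of ⟨b, y⟩) = CoprodI.of (p b y)) (b : ι) [Nontrivial (P b)] :
    ∃ y : Y b, g (FreeGroup.of ⟨b, y⟩) ≠ 1 := by
  classical
  by_contra! hb
  let π : CoprodI P →* P b := CoprodI.lift (Pi.mulSingle b (MonoidHom.id (P b)))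
  have hπ : π.comp g = 1 := by
    ext ⟨c, y⟩
    obtain rfl | hcb := eq_or_ne c b
    · simp [hb]
    · simp [hp, π, hcb]
  obtain ⟨a, ha⟩ := exists_ne (1 : P b)
  obtain ⟨w, hw⟩ := hg (CoprodI.of a)
  refine ha ?_
  simpa [hw, π] using DFunLike.congr_fun hπ w

theorem injective_of_injective_colour (hp : ∀ b y, g (FreeGroup.of ⟨b, y⟩) = CoprodI.of (p b y))
    (h : ∀ b, Injective (FreeGroup.lift (p b))) : Injective g := by
  let B := CoprodI.FreeGroupBasis.coprodI fun b => FreeGroupBasis.ofFreeGroup (Y b)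
  have hB : g = (coprodIMap fun b => FreeGroup.lift (p b)).comp B.repr.symm.toMonoidHom := by
    ext ⟨b, y⟩
    simp [hp, B, CoprodI.FreeGroupBasis.coprodI]
  rw [hB]
  exact (coprodIMap_injective h).comp B.repr.symm.injective

end Coloured

theorem exists_monochrome {ι : Type u} {Y P : ι → Type u} [∀ b, Group (P b)]
    {g : FreeGroup (Σ b, Y b) →* CoprodI P} {p : ∀ b, Y b → P b}
    (hp : ∀ b y, g (FreeGroup.of ⟨b, y⟩) = CoprodI.of (p b y)) [Nonempty ι]
    {L : List ((Σ b, Y b) × Bool)} (hL : ∀ q ∈ L, IsEssential (FreeGroup.mk L) q.1)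
    (hker : g.ker = Subgroup.normalClosure {FreeGroup.mk L}) : ∃ b, ∀ q ∈ L, q.1.1 = b := by
  by_contra! hmix
  have hinj (b : ι) : Injective (FreeGroup.lift (p b)) := by
    have hcomp : (CoprodI.of (M := P)).comp (FreeGroup.lift (p b)) =
        g.comp (FreeGroup.map (Sigma.mk b)) := by
      ext y
      simp [hp]
    refine (injective_iff_map_eq_one _).2 fun w hw => ?_
    obtain ⟨q, hq, hqb⟩ := hmix b
    refine FreeGroup.map_injective sigma_mk_injective
      ((freiheitssatz (hL q hq) _ ?_ ?_).trans (map_one _).symm)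
    · obtain ⟨M, rfl⟩ := exists_mk_eq w
      rw [FreeGroup.map.mk]
      refine mk_mem_letterSubgroup fun s hs hsq => hqb ?_
      obtain ⟨t, -, rfl⟩ := List.mem_map.1 hs
      exact congrArg Sigma.fst hsq.symm
    · rw [← hker, MonoidHom.mem_ker]
      exact (DFunLike.congr_fun hcomp w).symm.trans (by simp [hw])
  obtain ⟨q, hq, -⟩ := hmix (Classical.arbitrary ι)
  refine (hL q hq).ne_one (injective_of_injective_colour hp hinj ?_)
  rw [map_one, ← MonoidHom.mem_ker, hker]
  exact self_mem_normalClosure _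

theorem freelyDecomposable_of_surjective_coprodI {ι X : Type} [Nontrivial ι] {R : FreeGroup X}
    (n : ℕ) {P : ι → Type} [∀ b, Group (P b)] [∀ b, Nontrivial (P b)] {f : FreeGroup X →* CoprodI P}
    (hf : Surjective f) (hker : f.ker = Subgroup.normalClosure {R}) :
    FreelyDecomposable (PresentedGroup {R ^ n}) := by
  rcases finite_or_infinite X with _ | _
  swap
  · exact freelyDecomposable_of_infinite _
  obtain ⟨Y, e, hY⟩ := grushko hf
  choose p hp using hY
  replace hp (b) (y : Y b) : f.comp e.toMonoidHom (FreeGroup.of ⟨b, y⟩) =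
    CoprodI.of (p ⟨b, y⟩) := hp ⟨b, y⟩
  have hsurj : Surjective (f.comp e.toMonoidHom) := hf.comp e.surjective
  obtain ⟨L, hL, -, hess⟩ := exists_length_eq_cyclicLength (e.symm R)
  have hR : IsConj (e (FreeGroup.mk L)) R := by simpa using e.toMonoidHom.map_isConj hL
  have hkerL : (f.comp e.toMonoidHom).ker = Subgroup.normalClosure {FreeGroup.mk L} := by
    rw [normalClosure_singleton_eq_of_isConj hL]
    exact ker_comp_mulEquiv e (by rw [hker, e.apply_symm_apply])
  obtain ⟨b, hb⟩ := exists_monochrome hp hess hkerL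
  obtain ⟨c, hcb⟩ := exists_ne b
  obtain ⟨z, hz⟩ := exists_letter_apply_ne_one hsurj hp b
  obtain ⟨y, -⟩ := exists_letter_apply_ne_one hsurj hp c
  refine freelyDecomposable_of_isConj e (S := {s | s.1 = b}) (w := FreeGroup.mk L ^ n)
    (pow_mem (mk_mem_letterSubgroup hb) n) (by simpa only [map_pow] using hR.pow n)
    (y := ⟨c, y⟩) (z := ⟨b, z⟩) hcb rfl fun h => hz ?_
  rw [← MonoidHom.mem_ker, hkerL]
  exact normalClosure_pow_le _ n h

end Indecomposable

section TwoCyclicFactors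

instance isMulTorsionFree_abelianization_freeGroup (X : Type*) :
    IsMulTorsionFree (Abelianization (FreeGroup X)) := by
  have : IsAddTorsionFree (FreeAbelianGroup X) :=
    (FreeAbelianGroup.equivFinsupp X).injective.isAddTorsionFree
      (FreeAbelianGroup.equivFinsupp X).toAddMonoidHom
  exact ⟨this.nsmul_right_injective⟩

theorem apply_mem_zpowers_of_mem_normalClosure {G A : Type*} [Group G] [CommGroup A] (f : G →* A)
    {g w : G} (hw : w ∈ Subgroup.normalClosure {g}) : f w ∈ Subgroup.zpowers (f g) :=
  normalClosure_singleton_le (N := (Subgroup.zpowers (f g)).comap f).2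
    (Subgroup.mem_zpowers (f g)) hw

theorem apply_mem_zpowers_of_pow_mem_normalClosure {X A : Type*} [CommGroup A]
    (f : FreeGroup X →* A) {R w : FreeGroup X} {n : ℕ} (hn : n ≠ 0)
    (hw : w ^ n ∈ Subgroup.normalClosure {R ^ n}) : f w ∈ Subgroup.zpowers (f R) := by
  obtain ⟨k, hk⟩ := apply_mem_zpowers_of_mem_normalClosure Abelianization.of hw
  have hab : Abelianization.of R ^ k = Abelianization.of w := by
    refine pow_left_injective hn ?_
    change (Abelianization.of R ^ k) ^ n = Abelianization.of w ^ n
    rw [← map_pow, ← hk, map_pow, ← zpow_natCast, zpow_comm, zpow_natCast]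
  refine ⟨k, ?_⟩
  simpa using congrArg (Abelianization.lift f) hab

variable {X A B : Type u} [Group A] [CommGroup B] {R : FreeGroup X} {n : ℕ}

theorem exists_isConj_inr_relator (hn : n ≠ 0) (hA : TorsionFree A)
    (E : PresentedGroup {R ^ n} ≃* Coprod A B) :
    ∃ b : B, IsConj (Coprod.inr b) (E (PresentedGroup.mk {R ^ n} R)) := by
  have hfin : IsOfFinOrder (E (PresentedGroup.mk {R ^ n} R)) :=
    isOfFinOrder_iff_pow_eq_one.2 ⟨n, Nat.pos_of_ne_zero hn, by
      rw [← map_pow, ← map_pow, mk_relator, map_one]⟩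
  obtain ⟨a, ha⟩ | h := coprod_exists_isConj hfin
  · have ha1 : a = 1 := hA a <| by
      simpa using Coprod.fst.isOfFinOrder (ha.symm.isOfFinOrder hfin)
    exact ⟨1, by simpa [ha1, -isConj_iff] using ha⟩
  · exact h

theorem apply_inr_eq_one {H : Type*} [Group H] (hn : n ≠ 0) (hA : TorsionFree A)
    (hB : ∀ b : B, b ^ n = 1) (E : PresentedGroup {R ^ n} ≃* Coprod A B)
    {h : PresentedGroup {R ^ n} →* H} (hR : h (PresentedGroup.mk {R ^ n} R) = 1) (b : B) :
    h (E.symm (Coprod.inr b)) = 1 := by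
  obtain ⟨b₀, hb₀⟩ := exists_isConj_inr_relator hn hA E
  have hhb₀ : h (E.symm (Coprod.inr b₀)) = 1 := by
    have := (h.comp E.symm.toMonoidHom).map_isConj hb₀
    simpa [hR, -isConj_iff] using this
  let f : FreeGroup X →* B :=
    Coprod.snd.comp (E.toMonoidHom.comp (PresentedGroup.mk {R ^ n}))
  have hfR : f R = b₀ := by
    simpa [f] using (isConj_iff_eq.1 (Coprod.snd.map_isConj hb₀)).symm
  obtain ⟨w, hw⟩ := PresentedGroup.mk_surjective {R ^ n} (E.symm (Coprod.inr b))
  have hEw : E (PresentedGroup.mk {R ^ n} w) = Coprod.inr b := by rw [hw, E.apply_symm_apply]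
  have hwn : w ^ n ∈ Subgroup.normalClosure {R ^ n} := by
    rw [← PresentedGroup.mk_eq_one_iff, map_pow, hw, ← map_pow, ← map_pow, hB, map_one, map_one]
  obtain ⟨k, hk⟩ := apply_mem_zpowers_of_pow_mem_normalClosure f hn hwn
  have hfw : f w = b := by simp [f, hEw]
  have hb : b₀ ^ k = b := by rw [← hfR, ← hfw]; exact hk
  rw [← hb, map_zpow, map_zpow, map_zpow, hhb₀, one_zpow]

theorem coprodI_exists_mul_ne_mul {ι : Type*} [Nontrivial ι] (P : ι → Type*) [∀ i, Group (P i)]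
    [∀ i, Nontrivial (P i)] : ∃ a b : CoprodI P, a * b ≠ b * a := by
  obtain ⟨i, j, hij⟩ := exists_pair_ne ι
  obtain ⟨p, hp⟩ := exists_ne (1 : P i)
  obtain ⟨q, hq⟩ := exists_ne (1 : P j)
  refine ⟨CoprodI.of q, CoprodI.of p, fun h => ?_⟩
  obtain ⟨-, p', hp'⟩ :=
    coprodI_conj_of_eq_of (g := CoprodI.of q) hp (mul_inv_eq_of_eq_mul h)
  exact hij.symm (coprodI_conj_of_eq_of (g := 1) hq (by simpa using hp'.symm)).1

theorem isEmpty_mulEquiv_coprod_of_surjective {A : Type u} [CommGroup A] {ι : Type*} [Nontrivial ι]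
    {P : ι → Type*} [∀ i, Group (P i)] [∀ i, Nontrivial (P i)] (hn : n ≠ 0) (hA : TorsionFree A)
    (hB : ∀ b : B, b ^ n = 1) {h : PresentedGroup {R ^ n} →* CoprodI P} (hsurj : Surjective h)
    (hR : h (PresentedGroup.mk {R ^ n} R) = 1) :
    IsEmpty (PresentedGroup {R ^ n} ≃* Coprod A B) := by
  refine ⟨fun E => ?_⟩
  have hfst : h.comp E.symm.toMonoidHom =
      (h.comp (E.symm.toMonoidHom.comp Coprod.inl)).comp Coprod.fst := by
    refine Coprod.hom_ext ?_ ?_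
    · ext a
      simp
    · ext b
      simpa using apply_inr_eq_one hn hA hB E hR b
  have hinl : Surjective (h.comp (E.symm.toMonoidHom.comp Coprod.inl)) := by
    refine Surjective.of_comp (g := Coprod.fst (M := A) (N := B)) ?_
    rw [← MonoidHom.coe_comp, ← hfst]
    exact hsurj.comp E.symm.surjective
  obtain ⟨x, y, hxy⟩ := coprodI_exists_mul_ne_mul P
  obtain ⟨a, rfl⟩ := hinl x
  obtain ⟨b, rfl⟩ := hinl y
  exact hxy (by rw [← map_mul, ← map_mul, mul_comm])

end TwoCyclicFactors

/-! ### Amalgams over an infinite cyclic group -/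

theorem isCyclic_freeGroup_of_subsingleton (Z : Type*) [Subsingleton Z] :
    IsCyclic (FreeGroup Z) := by
  cases isEmpty_or_nonempty Z
  · infer_instance
  · have := uniqueOfSubsingleton (Classical.arbitrary Z)
    exact isCyclic_of_surjective FreeGroup.mulEquivIntOfUnique.symm (MulEquiv.surjective _)

theorem subsingleton_of_normalClosure_singleton_eq_top {Z : Type*} {x : FreeGroup Z}
    (h : Subgroup.normalClosure {x} = ⊤) : Subsingleton Z := by
  refine ⟨fun y z => by_contra fun hyz => ?_⟩
  have eq_one (f : FreeGroup Z →* Multiplicative ℤ) (hf : f x = 1) (w : FreeGroup Z) : f w = 1 :=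
    map_eq_one_of_mem_normalClosure f hf (h ▸ Subgroup.mem_top w)
  set a := (exponentSum y x).toAdd with ha
  set b := (exponentSum z x).toAdd with hb
  let f : FreeGroup Z →* Multiplicative ℤ := exponentSum y ^ b * exponentSum z ^ (-a)
  have hf : f x = 1 := Multiplicative.toAdd.injective (by simp [f, ← ha, ← hb, mul_comm])
  have hb0 : b = 0 := by
    simpa [f, exponentSum_of_ne hyz, ← ofAdd_zsmul] using eq_one f hf (FreeGroup.of y)
  have := eq_one (exponentSum z) (Multiplicative.toAdd.injective hb0) (FreeGroup.of z)
  simp at this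

theorem zpowers_eq_top_of_normalClosure_singleton_eq_top {Z : Type*} {x : FreeGroup Z}
    (h : Subgroup.normalClosure {x} = ⊤) : Subgroup.zpowers x = ⊤ := by
  have := subsingleton_of_normalClosure_singleton_eq_top h
  have := isCyclic_freeGroup_of_subsingleton Z
  let _ : CommGroup (FreeGroup Z) := IsCyclic.commGroup
  exact top_le_iff.1 (h ▸ normalClosure_singleton_le.2 (Subgroup.mem_zpowers x))

theorem closure_isOfFinOrder_normalClosure {G : Type*} [Group G] {r : G} (hr : IsOfFinOrder r) :
    Subgroup.closure {x : Subgroup.normalClosure {r} | IsOfFinOrder x} = ⊤ := by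
  refine top_le_iff.1 (Subgroup.closure_closure_coe_preimage.ge.trans
    (Subgroup.closure_mono fun x hx => ?_))
  obtain ⟨_, rfl, hconj⟩ := Group.mem_conjugatesOfSet_iff.1 hx
  exact Submonoid.isOfFinOrder_coe.1 (hconj.isOfFinOrder hr)

section Amalgam

variable {ι H : Type*} {G : ι → Type*} [Group H] [∀ i, Group (G i)] {φ : ∀ i, H →* G i}

theorem isConj_of_isConj_of (hφ : ∀ i, Injective (φ i)) (htf : TorsionFree H) {i : ι} {x y : G i}
    (hx : IsOfFinOrder x) (h : IsConj (PushoutI.of (φ := φ) i x) (PushoutI.of i y)) :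
    IsConj x y := by
  have hinj := PushoutI.of_injective hφ i
  obtain ⟨g, hg⟩ := isConj_iff.1 h
  by_cases hx1 : x = 1
  · obtain rfl : y = 1 := (map_eq_one_iff _ hinj).1 (by rw [← hg, hx1]; simp)
    rw [hx1]
  · obtain ⟨-, a, rfl⟩ := conj_of_eq_of_isOfFinOrder hφ htf hx hx1 hg
    exact isConj_iff.2 ⟨a, hinj (by simpa using hg)⟩

theorem eq_of_isConj_of (hφ : ∀ i, Injective (φ i)) (htf : TorsionFree H) {i j : ι} {x : G i}
    {y : G j} (hx : IsOfFinOrder x) (hy : y ≠ 1)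
    (h : IsConj (PushoutI.of (φ := φ) i x) (PushoutI.of j y)) : i = j := by
  obtain ⟨g, hg⟩ := isConj_iff.1 h
  refine (conj_of_eq_of_isOfFinOrder hφ htf hx (fun hx1 => hy ?_) hg).1
  exact (map_eq_one_iff _ (PushoutI.of_injective hφ j)).1 (by rw [← hg, hx1]; simp)

theorem exists_surjective_coprodI_ker_eq {T : Subgroup (PushoutI φ)} {j : ι} {ρ : G j}
    (hT : T = Subgroup.normalClosure {PushoutI.of j ρ}) [T.Normal]
    (hbase : ∀ c, PushoutI.base φ c ∈ T) :
    ∃ κ : PushoutI φ →* CoprodI fun i => G i ⧸ T.comap (PushoutI.of (φ := φ) i),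
      Surjective κ ∧ κ.ker = T := by
  let N i := T.comap (PushoutI.of (φ := φ) i)
  have mk_eq_one {i : ι} {a : G i} (ha : PushoutI.of i a ∈ T) : QuotientGroup.mk' (N i) a = 1 :=
    (QuotientGroup.eq_one_iff a).2 ha
  let κ : PushoutI φ →* CoprodI fun i => G i ⧸ N i :=
    PushoutI.lift (fun i => CoprodI.of.comp (QuotientGroup.mk' (N i))) 1 fun i => by
      ext c
      rw [MonoidHom.comp_apply, MonoidHom.comp_apply,
        mk_eq_one (PushoutI.of_apply_eq_base φ i c ▸ hbase c), map_one, MonoidHom.one_apply]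
  let back : CoprodI (fun i => G i ⧸ N i) →* PushoutI φ ⧸ T :=
    CoprodI.lift fun i => QuotientGroup.map (N i) T (PushoutI.of i) le_rfl
  have hκ (i : ι) (a : G i) : κ (PushoutI.of i a) =
      CoprodI.of (M := fun i => G i ⧸ N i) (QuotientGroup.mk' (N i) a) :=
    PushoutI.lift_of _ _ _ _
  have hκbase (c : H) : κ (PushoutI.base φ c) = 1 := PushoutI.lift_base _ _ _ _
  have hback : back.comp κ = QuotientGroup.mk' T := by
    refine PushoutI.hom_ext (fun i => ?_) ?_
    · ext a
      simp [hκ, back]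
    · ext c
      simp [hκbase, (QuotientGroup.eq_one_iff _).2 (hbase c)]
  refine ⟨κ, fun z => ?_, le_antisymm (fun g hg => ?_) ?_⟩
  · induction z using CoprodI.induction_on with
    | one => exact ⟨1, map_one κ⟩
    | of i z =>
      obtain ⟨a, rfl⟩ := QuotientGroup.mk'_surjective (N i) z
      exact ⟨_, hκ i a⟩
    | mul x y hx hy =>
      obtain ⟨⟨x, rfl⟩, y, rfl⟩ := And.intro hx hy
      exact ⟨x * y, map_mul κ x y⟩
  · rw [← QuotientGroup.ker_mk' T, ← hback, MonoidHom.mem_ker, MonoidHom.comp_apply, hg, map_one]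
  · refine hT.le.trans (normalClosure_singleton_le.2 ?_)
    rw [MonoidHom.mem_ker, hκ, mk_eq_one (hT ▸ self_mem_normalClosure _), map_one]

end Amalgam

theorem isMulTorsion_coprodI_of_isConj_zpow {J : Type*} {K : J → Type*} [∀ j, Group (K j)]
    (hK : ∀ j, IsMulTorsion (K j)) {ρ : CoprodI K} (hρ : IsOfFinOrder ρ)
    (h : ∀ t : CoprodI K, IsOfFinOrder t → ∃ k : ℤ, IsConj (ρ ^ k) t) :
    IsMulTorsion (CoprodI K) := by
  have hiSup : ⨆ j, (CoprodI.of : K j →* CoprodI K).range = ⊤ := by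
    rw [← CoprodI.range_eq_iSup, CoprodI.lift_of', MonoidHom.range_eq_top]
    exact surjective_id
  cases isEmpty_or_nonempty J
  · rw [iSup_of_empty] at hiSup
    intro t
    obtain rfl := Subgroup.mem_bot.1 (hiSup ▸ Subgroup.mem_top t)
    exact IsOfFinOrder.one
  obtain ⟨j, x, hx⟩ := coprodI_exists_isConj_of hρ
  obtain ⟨c, rfl⟩ := isConj_iff.1 hx
  have hle (l : J) : (CoprodI.of : K l →* CoprodI K).range ≤ (CoprodI.of (i := j)).range := by
    rintro _ ⟨y, rfl⟩
    by_cases hy : y = 1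
    · simp [hy]
    obtain ⟨k, hk⟩ := h _ (CoprodI.of.isOfFinOrder (hK l y))
    rw [conj_zpow] at hk
    obtain ⟨g, hg⟩ := isConj_iff.1 ((isConj_iff.2 ⟨c, rfl⟩ : IsConj _ _).trans hk).symm
    rw [← map_zpow] at hg
    obtain ⟨rfl, -⟩ := coprodI_conj_of_eq_of hy hg
    exact ⟨y, rfl⟩
  intro t
  obtain ⟨y, rfl⟩ := iSup_le hle (hiSup ▸ Subgroup.mem_top t)
  exact CoprodI.of.isOfFinOrder (hK j y)

theorem IsFKS.exists_equiv_coprod {G D : Type u} [Group G] [Group D] {r : G} (h : IsFKS r)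
    (hr : IsOfFinOrder r) {f : D →* G} (hf : Injective f)
    (hT : ∀ a, f a ∈ Subgroup.normalClosure {r}) :
    ∃ (J Z : Type u) (K : J → Type u) (_ : ∀ j, Group (K j)),
      (∀ j, IsMulTorsion (K j)) ∧ Nonempty (D ≃* Coprod (CoprodI K) (FreeGroup Z)) :=
  h.embedsInUnmixed.exists_equiv_coprod_of_injective (closure_isOfFinOrder_normalClosure hr)
    (i := f.codRestrict _ hT) fun _ _ hab => hf (congrArg Subtype.val hab)

theorem TorsionFree.coprod_snd_injective {J : Type*} {K : J → Type*} [∀ j, Group (K j)]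
    {B : Type*} [Group B] (h : TorsionFree (Coprod (CoprodI K) B)) (hK : ∀ j, IsMulTorsion (K j)) :
    Injective (Coprod.snd : Coprod (CoprodI K) B →* B) := by
  have hinl : (Coprod.inl : CoprodI K →* Coprod (CoprodI K) B) = 1 := by
    ext j x
    exact h _ ((Coprod.inl.comp CoprodI.of : K j →* Coprod (CoprodI K) B).isOfFinOrder (hK j x))
  have hid : Coprod.inr.comp Coprod.snd = MonoidHom.id (Coprod (CoprodI K) B) := by
    ext x
    · simp [hinl]
    · simp
  exact LeftInverse.injective (g := Coprod.inr) (DFunLike.congr_fun hid)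

theorem exists_hom_apply_eq_ofAdd_one {K : Type*} [Group K] (hK : IsMulTorsion K) {Z : Type*}
    {ρ c : Coprod K (FreeGroup Z)} (hρ : IsOfFinOrder ρ) (hc : ¬IsOfFinOrder c)
    (h : Subgroup.normalClosure {c, ρ} = ⊤) :
    ∃ χ : Coprod K (FreeGroup Z) →* Multiplicative ℤ, χ c = .ofAdd 1 := by
  let θ : Coprod K (FreeGroup Z) →* FreeGroup Z := Coprod.snd
  have hθρ : θ ρ = 1 := torsionFree_freeGroup Z _ (θ.isOfFinOrder hρ)
  have hgen : Subgroup.zpowers (θ c) = ⊤ := by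
    refine zpowers_eq_top_of_normalClosure_singleton_eq_top (top_le_iff.1 ?_)
    have hθ : Surjective θ := Coprod.snd_surjective
    rw [← Subgroup.map_top_of_surjective θ hθ, ← h, Subgroup.map_normalClosure _ _ hθ]
    refine Subgroup.normalClosure_le_normal ?_
    rintro _ ⟨x, rfl | rfl, rfl⟩
    exacts [self_mem_normalClosure _, hθρ ▸ one_mem _]
  have hθc : θ c ≠ 1 := fun hθc => by
    have hinr : (Coprod.inr : FreeGroup Z →* Coprod K (FreeGroup Z)) = 1 := by
      refine MonoidHom.ext fun w => ?_
      have hw : w ∈ Subgroup.zpowers (θ c) := hgen ▸ Subgroup.mem_top w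
      rw [hθc, Subgroup.zpowers_one_eq_bot, Subgroup.mem_bot] at hw
      rw [hw, map_one, map_one]
    have hid : Coprod.inl.comp Coprod.fst = MonoidHom.id (Coprod K (FreeGroup Z)) :=
      Coprod.hom_ext (by ext; simp) (by simp [hinr])
    have hfin : IsOfFinOrder (Coprod.inl (Coprod.fst c) : Coprod K (FreeGroup Z)) :=
      MonoidHom.isOfFinOrder _ (hK _)
    rw [← MonoidHom.comp_apply, hid] at hfin
    exact hc hfin
  have hinj : Injective (zpowersHom _ (θ c)) :=
    injective_zpow_iff_not_isOfFinOrder.2 fun hfin => hθc (torsionFree_freeGroup Z _ hfin)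
  let e : Multiplicative ℤ ≃* FreeGroup Z := MulEquiv.ofBijective (zpowersHom _ (θ c))
    ⟨hinj, fun w => Subgroup.mem_zpowers_iff.1 (hgen ▸ Subgroup.mem_top w)⟩
  exact ⟨e.symm.toMonoidHom.comp θ, e.symm_apply_eq.2 (zpow_one _).symm⟩

section TwoFactors

variable {C : Type u} [Group C] {D : Bool → Type u} [∀ b, Group (D b)] {φ : ∀ b, C →* D b}

theorem exists_pushoutI_bool_hom {H : Type*} [Group H] {i : Bool} (f : D i →* H) (g : D (!i) →* H)
    (hfg : f.comp (φ i) = g.comp (φ !i)) :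
    ∃ F : PushoutI φ →* H,
      (∀ a, F (PushoutI.of i a) = f a) ∧ ∀ a, F (PushoutI.of (!i) a) = g a := by
  obtain ⟨F, rfl, rfl⟩ : ∃ F : ∀ b, D b →* H, F i = f ∧ F (!i) = g := by
    cases i
    exacts [⟨Bool.rec f g, rfl, rfl⟩, ⟨Bool.rec g f, rfl, rfl⟩]
  refine ⟨PushoutI.lift F ((F i).comp (φ i)) fun b => ?_, PushoutI.lift_of _ _ _,
    PushoutI.lift_of _ _ _⟩
  obtain rfl | rfl := Bool.eq_or_eq_not b i
  exacts [rfl, hfg.symm]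

variable {c : C} {i : Bool} {ρ : D i}

theorem mk_comp_eq_one (hc : Subgroup.zpowers c = ⊤) {b : Bool} {N : Subgroup (D b)} [N.Normal]
    (h : φ b c ∈ N) :
    (QuotientGroup.mk' N).comp (φ b) = 1 := by
  rw [← MonoidHom.ker_eq_top_iff, ← top_le_iff, ← hc, Subgroup.zpowers_le]
  simpa using h

theorem normalClosure_opposite_eq_top (hc : Subgroup.zpowers c = ⊤)
    (hT : ∀ a, PushoutI.of (!i) a ∈ Subgroup.normalClosure {PushoutI.of (φ := φ) i ρ}) :
    Subgroup.normalClosure {φ (!i) c} = ⊤ := by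
  obtain ⟨F, hFi, hF⟩ := exists_pushoutI_bool_hom (φ := φ) (i := i) 1
    (QuotientGroup.mk' (Subgroup.normalClosure {φ (!i) c}))
    (by rw [mk_comp_eq_one hc (self_mem_normalClosure _)]; rfl)
  refine Subgroup.eq_top_iff' _ |>.2 fun a => (QuotientGroup.eq_one_iff a).1 ?_
  exact (hF a).symm.trans (map_eq_one_of_mem_normalClosure F (hFi ρ) (hT a))

theorem normalClosure_pair_eq_top (hc : Subgroup.zpowers c = ⊤)
    (hT : ∀ a, PushoutI.of i a ∈ Subgroup.normalClosure {PushoutI.of (φ := φ) i ρ}) :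
    Subgroup.normalClosure {φ i c, ρ} = ⊤ := by
  have hmem := Subgroup.subset_normalClosure (s := {φ i c, ρ})
  obtain ⟨F, hF, -⟩ := exists_pushoutI_bool_hom (φ := φ) (i := i)
    (QuotientGroup.mk' (Subgroup.normalClosure {φ i c, ρ})) 1
    (by rw [mk_comp_eq_one hc (hmem (.inl rfl))]; rfl)
  refine Subgroup.eq_top_iff' _ |>.2 fun a => (QuotientGroup.eq_one_iff a).1 ?_
  refine (hF a).symm.trans (map_eq_one_of_mem_normalClosure F ?_ (hT a))
  exact (hF ρ).trans ((QuotientGroup.eq_one_iff ρ).2 (hmem (.inr rfl)))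

theorem exists_of_opposite_notMem (hc : Subgroup.zpowers c = ⊤) (hφ : ∀ b, Injective (φ b))
    (htf : TorsionFree C) (hproper : (φ !i).range ≠ ⊤) (hρ : IsOfFinOrder ρ)
    (h : IsFKS (PushoutI.of (φ := φ) i ρ)) :
    ∃ a, PushoutI.of (!i) a ∉ Subgroup.normalClosure {PushoutI.of (φ := φ) i ρ} := by
  by_contra! hT
  obtain ⟨J, Z, K, _, hK, ⟨E⟩⟩ := h.exists_equiv_coprod ((PushoutI.of i).isOfFinOrder hρ)
    (PushoutI.of_injective hφ !i) hT
  have hD : TorsionFree (D !i) := fun t ht => by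
    by_contra ht1
    obtain ⟨k, hk⟩ := h.exists_isConj_zpow (hT t) ((PushoutI.of !i).isOfFinOrder ht)
    rw [← map_zpow] at hk
    exact Bool.self_ne_not i (eq_of_isConj_of hφ htf hρ.zpow ht1 hk)
  let θ : D (!i) →* FreeGroup Z := Coprod.snd.comp E.toMonoidHom
  have hθinj : Injective θ :=
    ((hD.of_injective (f := E.symm.toMonoidHom) E.symm.injective).coprod_snd_injective hK).comp
      E.injective
  have hθ : Surjective θ := Coprod.snd_surjective.comp E.surjective
  have hnc : Subgroup.normalClosure {θ (φ (!i) c)} = ⊤ := by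
    rw [← Set.image_singleton, ← Subgroup.map_normalClosure _ θ hθ,
      normalClosure_opposite_eq_top hc hT, Subgroup.map_top_of_surjective θ hθ]
  have hgen := zpowers_eq_top_of_normalClosure_singleton_eq_top hnc
  refine hproper ((Subgroup.eq_top_iff' _).2 fun a => ?_)
  obtain ⟨k, hk⟩ := Subgroup.mem_zpowers_iff.1 (hgen ▸ Subgroup.mem_top (θ a))
  exact ⟨c ^ k, hθinj (by rw [← hk, map_zpow, map_zpow])⟩

theorem exists_of_notMem (hc : Subgroup.zpowers c = ⊤) (hφ : ∀ b, Injective (φ b))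
    (htf : TorsionFree C) (hc1 : c ≠ 1) (hρ : IsOfFinOrder ρ)
    (h : IsFKS (PushoutI.of (φ := φ) i ρ)) :
    ∃ a, PushoutI.of i a ∉ Subgroup.normalClosure {PushoutI.of (φ := φ) i ρ} := by
  by_contra! hT
  obtain ⟨J, Z, K, _, hK, ⟨E⟩⟩ := h.exists_equiv_coprod ((PushoutI.of i).isOfFinOrder hρ)
    (PushoutI.of_injective hφ i) hT
  have hconj (t : D i) (ht : IsOfFinOrder t) : ∃ k : ℤ, IsConj (ρ ^ k) t := by
    obtain ⟨k, hk⟩ := h.exists_isConj_zpow (hT t) ((PushoutI.of i).isOfFinOrder ht)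
    rw [← map_zpow] at hk
    exact ⟨k, isConj_of_isConj_of hφ htf hρ.zpow hk⟩
  have hCK : IsMulTorsion (CoprodI K) := by
    let p : D i →* CoprodI K := Coprod.fst.comp E.toMonoidHom
    refine isMulTorsion_coprodI_of_isConj_zpow hK (p.isOfFinOrder hρ) fun t ht => ?_
    obtain ⟨k, hk⟩ := hconj _ ((E.symm.toMonoidHom.comp Coprod.inl).isOfFinOrder ht)
    exact ⟨k, by simpa [p, -isConj_iff] using p.map_isConj hk⟩
  have hnc : Subgroup.normalClosure {E (φ i c), E ρ} = ⊤ := by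
    have := Subgroup.map_normalClosure {φ i c, ρ} E.toMonoidHom E.surjective
    rw [normalClosure_pair_eq_top hc hT, Subgroup.map_top_of_surjective _ E.surjective] at this
    simpa [Set.image_pair] using this.symm
  have hcE : ¬IsOfFinOrder (E (φ i c)) := fun hfin =>
    hc1 (htf c ((hφ i).isOfFinOrder_iff.1
      (E.injective.isOfFinOrder_iff (f := E.toMonoidHom).1 hfin)))
  obtain ⟨χ, hχ⟩ :=
    exists_hom_apply_eq_ofAdd_one hCK (E.toMonoidHom.isOfFinOrder hρ) hcE hnc
  obtain ⟨F, hFi, -⟩ := exists_pushoutI_bool_hom (φ := φ)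
    ((zpowersHom _ (φ (!i) c)).comp (χ.comp E.toMonoidHom)) (MonoidHom.id _) <| by
      ext x
      obtain ⟨k, rfl⟩ := Subgroup.mem_zpowers_iff.1 (hc ▸ Subgroup.mem_top x)
      simp [hχ]
  have hχρ : χ (E ρ) = 1 :=
    (isOfFinOrder_iff_eq_one _).1 (χ.isOfFinOrder (E.toMonoidHom.isOfFinOrder hρ))
  have hφc : F (PushoutI.of i (φ i c)) = φ (!i) c := by simp [hFi, hχ]
  have hφc1 := map_eq_one_of_mem_normalClosure F (by simp [hFi, hχρ]) (hT (φ i c))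
  exact hc1 ((map_eq_one_iff _ (hφ !i)).1 (hφc.symm.trans hφc1))

theorem exists_of_notMem_normalClosure (hC : Nonempty (C ≃* Multiplicative ℤ))
    (hφ : ∀ b, Injective (φ b)) (hproper : ∀ b, (φ b).range ≠ ⊤) {ρ : D i} (hρ : IsOfFinOrder ρ)
    (h : IsFKS (PushoutI.of (φ := φ) i ρ)) (b : Bool) :
    ∃ a, PushoutI.of b a ∉ Subgroup.normalClosure {PushoutI.of (φ := φ) i ρ} := by
  obtain ⟨ζ⟩ := hC
  have htf : TorsionFree C := TorsionFree.of_injective (f := ζ.toMonoidHom)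
    (fun _ => (isOfFinOrder_iff_eq_one _).1) ζ.injective
  obtain ⟨c, hc⟩ := (isCyclic_of_surjective ζ.symm ζ.symm.surjective).exists_zpow_surjective
  replace hc : Subgroup.zpowers c = ⊤ := (Subgroup.eq_top_iff' _).2 hc
  have hc1 : c ≠ 1 := by
    rintro rfl
    have : Nontrivial C := ζ.toEquiv.nontrivial
    exact bot_ne_top (Subgroup.zpowers_one_eq_bot.symm.trans hc)
  obtain rfl | rfl := Bool.eq_or_eq_not b i
  · exact exists_of_notMem hc hφ htf hc1 hρ h
  · exact exists_of_opposite_notMem hc hφ htf (hproper _) hρ h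

theorem exists_surjective_coprodI_bool {r : PushoutI φ} {n : ℕ} (hn : n ≠ 0) (hr : r ^ n = 1)
    (h : IsFKS r) (hC : Nonempty (C ≃* Multiplicative ℤ)) (hφ : ∀ b, Injective (φ b))
    (hproper : ∀ b, (φ b).range ≠ ⊤) (hbase : ∀ c, PushoutI.base φ c ∈ Subgroup.normalClosure {r}) :
    ∃ (P : Bool → Type u) (_ : ∀ b, Group (P b)) (_ : ∀ b, Nontrivial (P b))
      (κ : PushoutI φ →* CoprodI P), Surjective κ ∧ κ.ker = Subgroup.normalClosure {r} := by
  have hfin : IsOfFinOrder r := isOfFinOrder_iff_pow_eq_one.2 ⟨n, Nat.pos_of_ne_zero hn, hr⟩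
  obtain ⟨i, ρ, hconj⟩ := exists_isConj_of hφ hfin
  have hρ : IsOfFinOrder ρ :=
    (PushoutI.of_injective hφ i).isOfFinOrder_iff.1 (hconj.symm.isOfFinOrder hfin)
  have hnc := normalClosure_singleton_eq_of_isConj hconj
  obtain ⟨κ, hκ, hker⟩ := exists_surjective_coprodI_ker_eq hnc.symm hbase
  refine ⟨_, inferInstance, fun b => ?_, κ, hκ, hker⟩
  obtain ⟨a, ha⟩ := exists_of_notMem_normalClosure hC hφ hproper hρ (h.of_isConj hconj.symm) b
  rw [hnc] at ha
  exact ⟨QuotientGroup.mk a, 1, fun h => ha ((QuotientGroup.eq_one_iff a).1 h)⟩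

end TwoFactors

theorem ker_comp_mk {X H : Type*} [Group H] {R : FreeGroup X} {n : ℕ}
    {h : PresentedGroup {R ^ n} →* H}
    (hker : h.ker = Subgroup.normalClosure {PresentedGroup.mk {R ^ n} R}) :
    (h.comp (PresentedGroup.mk {R ^ n})).ker = Subgroup.normalClosure {R} := by
  rw [← MonoidHom.comap_ker, hker, ← ker_rootProj, MonoidHom.comap_ker]
  ext w
  exact PresentedGroup.mk_eq_one_iff

end OneRelator

open OneRelator in
theorem statement_9_general {X : Type} (R : FreeGroup X) (n : ℕ) (hn : n ≠ 0)
    (hG : FreelyIndecomposable (PresentedGroup {R ^ n}) ∨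
      Nonempty (PresentedGroup {R ^ n} ≃*
        Monoid.Coprod (Multiplicative ℤ) (Multiplicative (ZMod n))))
    (C : Type) [Group C] (hC : Nonempty (C ≃* Multiplicative ℤ))
    (D : Bool → Type) [∀ b, Group (D b)]
    (φ : ∀ b, C →* D b) (hinj : ∀ b, Function.Injective (φ b))
    (hproper : ∀ b, (φ b).range ≠ ⊤)
    (e : PresentedGroup {R ^ n} ≃* Monoid.PushoutI φ) :
    ¬ ((e.symm.toMonoidHom.comp
        ((Monoid.PushoutI.of (φ := φ) true).comp (φ true))).range ≤
      Subgroup.normalClosure {PresentedGroup.mk {R ^ n} R}) := by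
  intro hle
  have hbase (c : C) : Monoid.PushoutI.base φ c ∈
      Subgroup.normalClosure {e (PresentedGroup.mk {R ^ n} R)} := by
    rw [← Monoid.PushoutI.of_apply_eq_base φ true]
    simpa using map_mem_normalClosure e.toMonoidHom (hle ⟨c, rfl⟩)
  have hr : e (PresentedGroup.mk {R ^ n} R) ^ n = 1 := by
    rw [← map_pow, ← map_pow, mk_relator, map_one]
  obtain ⟨P, _, _, κ, hκ, hker⟩ := exists_surjective_coprodI_bool hn hr
    ((isFKS R hn).map_equiv e) hC hinj hproper hbase
  have hκe : Function.Surjective (κ.comp e.toMonoidHom) := hκ.comp e.surjective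
  have hkere := ker_comp_mulEquiv e hker
  obtain hG | ⟨⟨E⟩⟩ := hG
  · exact hG (freelyDecomposable_of_surjective_coprodI n
      (hκe.comp (PresentedGroup.mk_surjective _)) (ker_comp_mk hkere))
  · refine (isEmpty_mulEquiv_coprod_of_surjective hn (fun _ => (isOfFinOrder_iff_eq_one _).1)
      (fun b => ?_) hκe ?_).false E
    · exact Multiplicative.toAdd.injective (by simp)
    · exact hkere.ge (self_mem_normalClosure _)

/-- Let `G = ⟨X; Rⁿ⟩` be a one-relator group with torsion which is
freely indecomposable or isomorphic to `ℤ ∗ Cₙ`, and `T = ⟪R⟫`.  If `G` splits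
nontrivially as an amalgam `A ∗_C B` with `C` infinite cyclic, then the image of `C`
in `G` is not contained in `T`. -/
theorem statement_9 {X : Type} [Nontrivial X] (R : FreeGroup X) (n : ℕ)
    (hn : 1 < n) (hR : ∀ (S : FreeGroup X) (k : ℕ), 1 ≤ k → R = S ^ k → k = 1)
    (hG : FreelyIndecomposable (PresentedGroup {R ^ n}) ∨
      Nonempty (PresentedGroup {R ^ n} ≃*
        Monoid.Coprod (Multiplicative ℤ) (Multiplicative (ZMod n))))
    (C : Type) [Group C] (hC : Nonempty (C ≃* Multiplicative ℤ))
    (D : Bool → Type) [∀ b, Group (D b)]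
    (φ : ∀ b, C →* D b) (hinj : ∀ b, Function.Injective (φ b))
    (hproper : ∀ b, (φ b).range ≠ ⊤)
    (e : PresentedGroup {R ^ n} ≃* Monoid.PushoutI φ) :
    ¬ ((e.symm.toMonoidHom.comp
        ((Monoid.PushoutI.of (φ := φ) true).comp (φ true))).range ≤
      Subgroup.normalClosure {PresentedGroup.mk {R ^ n} R}) :=
  statement_9_general R n (by omega) hG C hC D φ hinj hproper e
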